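/- The number α₆ = √13 · ln((√13 − 1)/(√13 + 1)) has irrationality measure at most 3.51434; that is, for every real κ > 3.51434, there exist only finitely many pairs (p, q) with p ∈ ℤ and q a positive integer such that |α₆ − p/q| < q^(−κ). -/

import Mathlib

/-!
Put `x = (√13 - 1) / (√13 + 1)`, so that `√13 = (1 + x) / (1 - x)` and `x = 3 * (1 - x) ^ 2`. For a
polynomial `S` the jet sum `∑ (S'(v) + log x * S(v)) * x ^ v` is a linear form in `1` and `log x`
over `ℚ(x)`; if `S` is symmetric about `-1/2`, a basis adapted to this symmetry turns it, up to a
power of `3`, into an integer linear form in `1` and `√13 * log x`. The kernel `S` is a product of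
three centred binomial polynomials of degrees proportional to `3 : 5 : 7`. Its values are integers,
and those of its derivative have a common denominator from which all primes in suitable windows can
be removed; the prime number theorem determines the growth of what remains. The jet sum equals an
integral over a vertical line, which is exponentially small, while the coefficient of `log x` is a
power series bounded by elementary means. Finally, one of three multiples of the kernel gives a
form that does not vanish at a given rational number, and the ratio of the rates is the bound.
-/

open Filter MeasureTheory Polynomial Set Topology

/-! ### The Fejér kernel -/

section FejerKernel

/-- The Fejér kernel of the real line, `4 sin² (w / 2) / w²`, normalised as the Fourier transform
of the triangle function `t ↦ 1 - |t|` on `[-1, 1]`.  Its value at `w = 0` is the junk value `0`. -/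
noncomputable def fejerKernel (w : ℝ) : ℝ := 2 * (1 - Real.cos w) / w ^ 2

lemma fejerKernel_nonneg (w : ℝ) : 0 ≤ fejerKernel w :=
  div_nonneg (by linarith [Real.cos_le_one w]) (sq_nonneg w)

lemma fejerKernel_le (w : ℝ) : fejerKernel w ≤ 5 * (1 + w ^ 2)⁻¹ := by
  unfold fejerKernel
  rcases eq_or_ne w 0 with rfl | hw
  · norm_num
  · rw [← div_eq_mul_inv, div_le_div_iff₀ (by positivity) (by positivity)]
    nlinarith [Real.one_sub_sq_div_two_le_cos (x := w), Real.neg_one_le_cos w, sq_nonneg w]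

@[fun_prop]
lemma measurable_fejerKernel : Measurable fejerKernel := by
  unfold fejerKernel
  fun_prop

lemma integrable_fejerKernel : Integrable fejerKernel := by
  refine (integrable_inv_one_add_sq.const_mul 5).mono'
    measurable_fejerKernel.aestronglyMeasurable (ae_of_all _ fun w ↦ ?_)
  rw [Real.norm_of_nonneg (fejerKernel_nonneg w)]
  exact fejerKernel_le w

lemma integral_fejerKernel_pos : 0 < ∫ w, fejerKernel w := by
  rw [integral_pos_iff_support_of_nonneg fejerKernel_nonneg integrable_fejerKernel]
  have hsupp : Ioo (0 : ℝ) 1 ⊆ Function.support fejerKernel := by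
    intro w hw
    have hcos : Real.cos w < 1 := by
      simpa using Real.cos_lt_cos_of_nonneg_of_le_pi_div_two le_rfl
        (by linarith [Real.pi_gt_three, hw.2]) hw.1
    exact (div_pos (by linarith) (pow_pos hw.1 2)).ne'
  exact (by simp : (0 : ENNReal) < volume (Ioo (0 : ℝ) 1)).trans_le (measure_mono hsupp)

lemma tendsto_setIntegral_Icc_fejerKernel :
    Tendsto (fun A : ℝ ↦ ∫ w in Icc (-A) A, fejerKernel w) atTop (𝓝 (∫ w, fejerKernel w)) :=
  (aecover_Icc tendsto_neg_atTop_atBot tendsto_id).integral_tendsto_of_countably_generated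
    integrable_fejerKernel

lemma integral_one_sub_mul_cexp {z : ℂ} (hz : z ≠ 0) :
    ∫ t in (0 : ℝ)..1, (1 - (t : ℂ)) * Complex.exp (z * t) =
      (Complex.exp z - 1 - z) / z ^ 2 := by
  have hexp (t : ℝ) : HasDerivAt (fun t : ℝ ↦ Complex.exp (z * t)) (z * Complex.exp (z * t)) t := by
    simpa [mul_comm] using ((hasDerivAt_id (t : ℂ)).const_mul z).cexp.comp_ofReal
  have hprim (t : ℝ) : HasDerivAt
      (fun t : ℝ ↦ (1 - (t : ℂ)) * Complex.exp (z * t) / z + Complex.exp (z * t) / z ^ 2)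
      ((1 - (t : ℂ)) * Complex.exp (z * t)) t := by
    refine ((((Complex.ofRealCLM.hasDerivAt.const_sub 1).mul (hexp t)).div_const z).add
      ((hexp t).div_const (z ^ 2))).congr_deriv ?_
    simp only [Complex.ofRealCLM_apply, Complex.ofReal_one]
    field_simp
    ring
  rw [intervalIntegral.integral_eq_sub_of_hasDerivAt (fun t _ ↦ hprim t)
    (Continuous.intervalIntegrable (by fun_prop) _ _)]
  simp only [Complex.ofReal_one, Complex.ofReal_zero, mul_one, mul_zero, Complex.exp_zero]
  field_simp
  ring

lemma integral_triangle_mul_cexp {w : ℝ} (hw : w ≠ 0) :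
    ∫ t in (-1 : ℝ)..1, ((1 - |t| : ℝ) : ℂ) * Complex.exp (Complex.I * w * t) = fejerKernel w := by
  set z := Complex.I * (w : ℂ) with hz
  have hz0 : z ≠ 0 := by simp [hz, hw]
  have hcont : Continuous fun t : ℝ ↦ ((1 - |t| : ℝ) : ℂ) * Complex.exp (z * t) := by fun_prop
  have hright : ∫ t in (0 : ℝ)..1, ((1 - |t| : ℝ) : ℂ) * Complex.exp (z * t) =
      (Complex.exp z - 1 - z) / z ^ 2 := by
    rw [← integral_one_sub_mul_cexp hz0]
    refine intervalIntegral.integral_congr fun t ht ↦ ?_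
    rw [uIcc_of_le zero_le_one] at ht
    simp [abs_of_nonneg ht.1]
  have hleft : ∫ t in (-1 : ℝ)..0, ((1 - |t| : ℝ) : ℂ) * Complex.exp (z * t) =
      (Complex.exp (-z) - 1 + z) / z ^ 2 := by
    have hreflect := intervalIntegral.integral_comp_neg (a := -1) (b := 0)
      fun t : ℝ ↦ (1 - (t : ℂ)) * Complex.exp (-z * t)
    rw [neg_zero, neg_neg, integral_one_sub_mul_cexp (neg_ne_zero.2 hz0), sub_neg_eq_add,
      neg_sq] at hreflect
    rw [← hreflect]
    refine intervalIntegral.integral_congr fun t ht ↦ ?_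
    rw [uIcc_of_le (by norm_num)] at ht
    simp [abs_of_nonpos ht.2]
  rw [← intervalIntegral.integral_add_adjacent_intervals (hcont.intervalIntegrable _ 0)
    (hcont.intervalIntegrable _ _), hleft, hright]
  have hz2 : z ^ 2 = -(w : ℂ) ^ 2 := by rw [hz, mul_pow, Complex.I_sq, neg_one_mul]
  have hwz : (w : ℂ) * Complex.I = z := mul_comm _ _
  rw [fejerKernel, hz2]
  push_cast
  rw [Complex.cos, neg_mul, hwz]
  have hw' : (w : ℂ) ≠ 0 := by exact_mod_cast hw
  field_simp
  ring

end FejerKernel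

/-! ### A Tauberian theorem of Wiener and Ikehara -/

section Tauberian

lemma integrable_mul_fejerKernel {g : ℝ → ℝ} (hg : Measurable g) (hb : ∃ C, ∀ u, |g u| ≤ C) :
    Integrable fun w ↦ g w * fejerKernel w :=
  let ⟨_, hC⟩ := hb
  integrable_fejerKernel.bdd_mul hg.aestronglyMeasurable (ae_of_all _ hC)

/-- `F` extends continuously to the closed right half-plane the Laplace transform
`c ↦ ∫ u in (0, ∞), g u * exp (-c u)` of the bounded measurable function `g`.  This is the analytic
input of the Wiener–Ikehara theorem. -/
structure IsLaplaceExtension (g : ℝ → ℝ) (F : ℂ → ℂ) : Prop where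
  measurable : Measurable g
  bounded : ∃ C, ∀ u, |g u| ≤ C
  continuousOn : ContinuousOn F {c | 0 ≤ c.re}
  integral_eq : ∀ c : ℂ, 0 < c.re → ∫ u in Ioi (0 : ℝ), (g u : ℂ) * Complex.exp (-c * u) = F c

namespace IsLaplaceExtension

variable {g : ℝ → ℝ} {F : ℂ → ℂ}

lemma comp_div (h : IsLaplaceExtension g F) {l : ℝ} (hl : 0 < l) :
    IsLaplaceExtension (fun u ↦ g (u / l)) (fun c ↦ l * F (l * c)) where
  measurable := h.measurable.comp (measurable_id.div_const l)
  bounded := let ⟨C, hC⟩ := h.bounded; ⟨C, fun u ↦ hC (u / l)⟩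
  continuousOn := by
    refine continuousOn_const.mul (h.continuousOn.comp (by fun_prop) fun c hc ↦ ?_)
    simpa using mul_nonneg hl.le hc
  integral_eq c hc := by
    have hlc : 0 < ((l : ℂ) * c).re := by simpa using mul_pos hl hc
    have hscale := integral_comp_mul_left_Ioi
      (fun u ↦ (g u : ℂ) * Complex.exp (-(l * c) * u)) 0 (inv_pos.2 hl)
    rw [inv_inv, mul_zero, h.integral_eq _ hlc, Complex.real_smul] at hscale
    rw [← hscale]
    refine setIntegral_congr_fun measurableSet_Ioi fun u _ ↦ ?_
    have hl' : (l : ℂ) ≠ 0 := by exact_mod_cast hl.ne'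
    simp only [div_eq_inv_mul]
    congr 2
    push_cast
    field_simp

lemma integrable_prod (h : IsLaplaceExtension g F) {δ : ℝ} (hδ : 0 < δ) (v : ℝ) :
    Integrable (fun z : ℝ × ℝ ↦ ((1 - |z.1| : ℝ) : ℂ) * Complex.exp (Complex.I * v * z.1) *
        ((g z.2 : ℂ) * Complex.exp (-(δ + z.1 * Complex.I) * z.2)))
      ((volume.restrict (Ioc (-1) 1)).prod (volume.restrict (Ioi 0))) := by
  obtain ⟨C, hC⟩ := h.bounded
  have hexp : IntegrableOn (fun u ↦ C * Real.exp (-δ * u)) (Ioi 0) :=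
    (exp_neg_integrableOn_Ioi 0 hδ).const_mul C
  have hone : IntegrableOn (fun _ ↦ (1 : ℝ)) (Ioc (-1 : ℝ) 1) := integrableOn_const (by simp)
  refine (hone.mul_prod hexp).mono' ?_ ?_
  · have := h.measurable
    exact Measurable.aestronglyMeasurable (by fun_prop)
  · rw [Measure.prod_restrict]
    filter_upwards [ae_restrict_mem (measurableSet_Ioc.prod measurableSet_Ioi)] with ⟨t, u⟩ ⟨ht, _⟩
    have habs : |t| ≤ 1 := abs_le.2 ⟨ht.1.le, ht.2⟩
    have htriangle : ‖1 - |t|‖ ≤ 1 := by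
      rw [Real.norm_of_nonneg (by linarith)]
      linarith [abs_nonneg t]
    have hre : (Complex.I * v * t).re = 0 := by simp
    have hre' : (-((δ : ℂ) + t * Complex.I) * u).re = -δ * u := by simp
    simp only [norm_mul, Complex.norm_exp, Complex.norm_real, hre, hre', Real.exp_zero, mul_one]
    gcongr
    exact hC u

lemma integral_triangle_mul (h : IsLaplaceExtension g F) {δ : ℝ} (hδ : 0 < δ) (v : ℝ) :
    ∫ t in Ioc (-1 : ℝ) 1, ((1 - |t| : ℝ) : ℂ) * Complex.exp (Complex.I * v * t) *
        F (δ + t * Complex.I) =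
      ∫ u in Ioi (0 : ℝ), (g u * Real.exp (-δ * u) * fejerKernel (v - u) : ℝ) := by
  have hF (t : ℝ) : ((1 - |t| : ℝ) : ℂ) * Complex.exp (Complex.I * v * t) *
      F (δ + t * Complex.I) =
      ∫ u in Ioi (0 : ℝ), ((1 - |t| : ℝ) : ℂ) * Complex.exp (Complex.I * v * t) *
        ((g u : ℂ) * Complex.exp (-(δ + t * Complex.I) * u)) := by
    rw [← h.integral_eq _ (by simpa using hδ), integral_const_mul]
  simp_rw [hF]
  rw [integral_integral_swap (h.integrable_prod hδ v), ← integral_complex_ofReal]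
  refine integral_congr_ae (ae_restrict_of_ae ?_)
  filter_upwards [Measure.ae_ne volume v] with u hu
  rw [Complex.ofReal_mul, ← integral_triangle_mul_cexp (sub_ne_zero.2 hu.symm),
    intervalIntegral.integral_of_le (by norm_num), ← integral_const_mul]
  refine integral_congr_ae (ae_of_all _ fun t ↦ ?_)
  have hphase : Complex.exp (Complex.I * v * t) * Complex.exp (-(δ + t * Complex.I) * u) =
      Complex.exp (-δ * u) * Complex.exp (Complex.I * (v - u : ℝ) * t) := by
    rw [← Complex.exp_add, ← Complex.exp_add]
    push_cast
    ring_nf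
  simp only [Complex.ofReal_mul, Complex.ofReal_exp, Complex.ofReal_neg]
  linear_combination (((1 - |t| : ℝ) : ℂ) * g u) * hphase

lemma tendsto_integral_mul_fejerKernel_of_damping (h : IsLaplaceExtension g F) (v : ℝ) :
    Tendsto (fun δ : ℝ ↦ ∫ u in Ioi (0 : ℝ), g u * Real.exp (-δ * u) * fejerKernel (v - u))
      (𝓝[>] 0) (𝓝 (∫ u in Ioi (0 : ℝ), g u * fejerKernel (v - u))) := by
  obtain ⟨C, hC⟩ := h.bounded
  have hmeas := h.measurable
  have hint : IntegrableOn (fun u ↦ C * fejerKernel (v - u)) (Ioi 0) :=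
    ((integrable_fejerKernel.comp_sub_left v).const_mul C).integrableOn
  refine tendsto_integral_filter_of_dominated_convergence _
    (Eventually.of_forall fun δ ↦ Measurable.aestronglyMeasurable (by fun_prop)) ?_ hint
    (ae_of_all _ fun u ↦ ?_)
  · filter_upwards [self_mem_nhdsWithin] with δ hδ
    filter_upwards [ae_restrict_mem measurableSet_Ioi] with u hu
    have hexp : Real.exp (-δ * u) ≤ 1 := by
      rw [Real.exp_le_one_iff, neg_mul]
      exact neg_nonpos.2 (mul_pos hδ hu).le
    rw [norm_mul, norm_mul, Real.norm_of_nonneg (fejerKernel_nonneg _),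
      Real.norm_of_nonneg (Real.exp_pos _).le]
    refine mul_le_mul_of_nonneg_right ?_ (fejerKernel_nonneg _)
    simpa using mul_le_mul (hC u) hexp (Real.exp_pos _).le ((abs_nonneg _).trans (hC u))
  · have hcont : Continuous fun δ : ℝ ↦ g u * Real.exp (-δ * u) * fejerKernel (v - u) := by
      fun_prop
    simpa using (hcont.tendsto 0).mono_left nhdsWithin_le_nhds

lemma tendsto_integral_triangle_mul (h : IsLaplaceExtension g F) (v : ℝ) :
    Tendsto (fun δ : ℝ ↦ ∫ t in Ioc (-1 : ℝ) 1, ((1 - |t| : ℝ) : ℂ) *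
        Complex.exp (Complex.I * v * t) * F (δ + t * Complex.I)) (𝓝[>] 0)
      (𝓝 (∫ t in Ioc (-1 : ℝ) 1, ((1 - |t| : ℝ) : ℂ) * Complex.exp (Complex.I * v * t) *
        F (t * Complex.I))) := by
  have hcont : ContinuousOn (fun z : ℝ × ℝ ↦ ((1 - |z.2| : ℝ) : ℂ) *
      Complex.exp (Complex.I * v * z.2) * F (z.1 + z.2 * Complex.I)) (Icc 0 1 ×ˢ Icc (-1) 1) := by
    refine ContinuousOn.mul (by fun_prop) (h.continuousOn.comp (by fun_prop) fun z hz ↦ ?_)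
    simpa using hz.1.1
  obtain ⟨M, hM⟩ := (isCompact_Icc.prod isCompact_Icc).exists_bound_of_continuousOn hcont
  have hnear : Ioc (0 : ℝ) 1 ∈ 𝓝[>] (0 : ℝ) := Ioc_mem_nhdsGT one_pos
  refine tendsto_integral_filter_of_dominated_convergence (fun _ ↦ M) ?_ ?_
    (integrableOn_const (by simp)) ?_
  · filter_upwards [hnear] with δ hδ
    exact (hcont.comp (f := fun t ↦ (δ, t)) (by fun_prop) fun t ht ↦
      ⟨Ioc_subset_Icc_self hδ, Ioc_subset_Icc_self ht⟩).aestronglyMeasurable measurableSet_Ioc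
  · filter_upwards [hnear] with δ hδ
    filter_upwards [ae_restrict_mem measurableSet_Ioc] with t ht
    exact hM (δ, t) ⟨Ioc_subset_Icc_self hδ, Ioc_subset_Icc_self ht⟩
  · filter_upwards [ae_restrict_mem measurableSet_Ioc] with t ht
    have hcont' := hcont.comp (f := fun δ : ℝ ↦ (δ, t)) (s := Icc 0 1) (by fun_prop) fun δ hδ ↦
      ⟨hδ, Ioc_subset_Icc_self ht⟩
    have hlim := (hcont' 0 ⟨le_rfl, zero_le_one⟩).tendsto.mono_left
      (nhdsWithin_le_of_mem (mem_of_superset hnear Ioc_subset_Icc_self))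
    simpa [Function.comp_def] using hlim

lemma integral_triangle_mul_boundary (h : IsLaplaceExtension g F) (v : ℝ) :
    ∫ t in Ioc (-1 : ℝ) 1, ((1 - |t| : ℝ) : ℂ) * Complex.exp (Complex.I * v * t) *
        F (t * Complex.I) =
      (∫ u in Ioi (0 : ℝ), g u * fejerKernel (v - u) : ℝ) := by
  refine tendsto_nhds_unique (h.tendsto_integral_triangle_mul v) ?_
  refine ((Complex.continuous_ofReal.tendsto _).comp
    (h.tendsto_integral_mul_fejerKernel_of_damping v)).congr' ?_
  filter_upwards [self_mem_nhdsWithin] with δ hδ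
  exact (h.integral_triangle_mul hδ v).symm

lemma tendsto_integral_Ioi_mul_fejerKernel (h : IsLaplaceExtension g F) :
    Tendsto (fun v : ℝ ↦ ∫ u in Ioi (0 : ℝ), g u * fejerKernel (v - u)) atTop (𝓝 0) := by
  set f : ℝ → ℂ := indicator (Ioc (-1 : ℝ) 1) fun t ↦ ((1 - |t| : ℝ) : ℂ) * F (t * Complex.I)
    with hf
  have hfreq : Tendsto (fun v : ℝ ↦ -(v / (2 * Real.pi))) atTop (cocompact ℝ) :=
    (tendsto_neg_atTop_atBot.comp
      (tendsto_id.atTop_div_const (by positivity))).mono_right atBot_le_cocompact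
  have hfourier (v : ℝ) : ((∫ u in Ioi (0 : ℝ), g u * fejerKernel (v - u) : ℝ) : ℂ) =
      ∫ t : ℝ, Real.fourierChar (-(t * -(v / (2 * Real.pi)))) • f t := by
    rw [← h.integral_triangle_mul_boundary, ← integral_indicator measurableSet_Ioc]
    refine integral_congr_ae (ae_of_all _ fun t ↦ ?_)
    by_cases ht : t ∈ Ioc (-1 : ℝ) 1
    · have hphase : 2 * Real.pi * -(t * -(v / (2 * Real.pi))) = v * t := by field_simp
      simp only [hf, indicator_of_mem ht, Circle.smul_def, Real.fourierChar_apply, hphase,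
        smul_eq_mul]
      push_cast
      ring_nf
    · simp [hf, indicator_of_notMem ht]
  have hlim : Tendsto (fun v : ℝ ↦ ((∫ u in Ioi (0 : ℝ), g u * fejerKernel (v - u) : ℝ) : ℂ))
      atTop (𝓝 0) :=
    ((Real.tendsto_integral_exp_smul_cocompact f).comp hfreq).congr fun v ↦ (hfourier v).symm
  simpa [Function.comp_def] using (Complex.continuous_re.tendsto _).comp hlim

lemma tendsto_integral_mul_fejerKernel (h : IsLaplaceExtension g F) :
    Tendsto (fun v : ℝ ↦ ∫ w, g (v - w) * fejerKernel w) atTop (𝓝 0) := by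
  obtain ⟨C, hC⟩ := h.bounded
  have hmeas := h.measurable
  have hint (v : ℝ) : Integrable fun w ↦ g (v - w) * fejerKernel w :=
    integrable_mul_fejerKernel (by fun_prop) ⟨C, fun w ↦ hC _⟩
  have htail : Tendsto (fun v : ℝ ↦ ∫ w in Ici v, g (v - w) * fejerKernel w) atTop (𝓝 0) := by
    have hempty : ⋂ v : ℝ, Ici v = ∅ := by
      ext w
      simpa using exists_gt w
    have hker := tendsto_setIntegral_of_antitone (fun v : ℝ ↦ measurableSet_Ici) antitone_Ici
      ⟨0, (integrable_fejerKernel.const_mul C).integrableOn⟩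
    rw [hempty, setIntegral_empty] at hker
    refine squeeze_zero_norm (fun v ↦ ?_) hker
    refine norm_integral_le_of_norm_le (integrable_fejerKernel.const_mul C).integrableOn
      (ae_of_all _ fun w ↦ ?_)
    rw [norm_mul, Real.norm_of_nonneg (fejerKernel_nonneg w)]
    exact mul_le_mul_of_nonneg_right (hC _) (fejerKernel_nonneg w)
  have hsplit (v : ℝ) : ∫ w, g (v - w) * fejerKernel w =
      (∫ u in Ioi (0 : ℝ), g u * fejerKernel (v - u)) +
        ∫ w in Ici v, g (v - w) * fejerKernel w := by
    have hreflect := (volume.measurePreserving_sub_left v).setIntegral_preimage_emb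
      (Homeomorph.subLeft v).measurableEmbedding (fun u ↦ g u * fejerKernel (v - u)) (Ioi 0)
    have hpre : (fun w ↦ v - w) ⁻¹' Ioi 0 = Iio v := by
      ext w
      simp
    rw [hpre] at hreflect
    rw [← hreflect, ← integral_add_compl (s := Iio v) measurableSet_Iio (hint v), compl_Iio]
    simp only [sub_sub_cancel]
  simpa only [hsplit, add_zero] using h.tendsto_integral_Ioi_mul_fejerKernel.add htail

lemma tendsto_integral_scaled_fejerKernel {B : ℝ → ℝ}
    (h : IsLaplaceExtension (fun u ↦ B u - 1) F) {l : ℝ} (hl : 0 < l) :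
    Tendsto (fun v : ℝ ↦ ∫ w, B (v - w / l) * fejerKernel w) atTop (𝓝 (∫ w, fejerKernel w)) := by
  have hlim := ((h.comp_div hl).tendsto_integral_mul_fejerKernel.comp
    (tendsto_id.const_mul_atTop hl)).add_const (∫ w, fejerKernel w)
  rw [zero_add] at hlim
  refine hlim.congr fun v ↦ ?_
  have hmeas := h.measurable
  obtain ⟨C, hC⟩ := h.bounded
  rw [Function.comp_apply, id, ← integral_add _ integrable_fejerKernel]
  · refine integral_congr_ae (ae_of_all _ fun w ↦ ?_)
    simp only [sub_div, mul_div_cancel_left₀ v hl.ne']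
    ring
  · exact integrable_mul_fejerKernel (hmeas.comp (by fun_prop)) ⟨C, fun w ↦ hC _⟩

end IsLaplaceExtension

variable {B : ℝ → ℝ} {C A : ℝ}

lemma abs_div_sq_le {w : ℝ} (hA : 0 < A) (hw : w ∈ Icc (-A) A) : |w / A ^ 2| ≤ 1 / A := by
  rw [abs_div, abs_of_pos (pow_pos hA 2), div_le_div_iff₀ (pow_pos hA 2) hA]
  nlinarith [abs_le.2 hw]

lemma mul_exp_neg_le_of_le_exp_mul (hB : ∀ u, 0 ≤ B u)
    (hslow : ∀ u v, u ≤ v → B u ≤ Real.exp (v - u) * B v) {u v d : ℝ} (huv : u ≤ v)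
    (hvd : v ≤ u + d) : B u * Real.exp (-d) ≤ B v := by
  rw [Real.exp_neg, mul_inv_le_iff₀ (Real.exp_pos d), mul_comm]
  refine (hslow u v huv).trans (mul_le_mul_of_nonneg_right ?_ (hB v))
  exact Real.exp_le_exp.2 (by linarith)

lemma mul_setIntegral_fejerKernel_le (hmeas : Measurable B) (hB : ∀ u, 0 ≤ B u)
    (hC : ∀ u, B u ≤ C) (hslow : ∀ u v, u ≤ v → B u ≤ Real.exp (v - u) * B v) (hA : 0 < A)
    (v : ℝ) :
    B v * Real.exp (-(2 / A)) * ∫ w in Icc (-A) A, fejerKernel w ≤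
      ∫ w, B (v + 1 / A - w / A ^ 2) * fejerKernel w := by
  have hint : Integrable fun w ↦ B (v + 1 / A - w / A ^ 2) * fejerKernel w :=
    integrable_mul_fejerKernel (by fun_prop) ⟨C, fun w ↦ by rw [abs_of_nonneg (hB _)]; exact hC _⟩
  rw [← integral_const_mul]
  refine le_trans ?_ (setIntegral_le_integral (s := Icc (-A) A) hint
    (ae_of_all _ fun w ↦ mul_nonneg (hB _) (fejerKernel_nonneg w)))
  refine setIntegral_mono_on (integrable_fejerKernel.const_mul _).integrableOn hint.integrableOn
    measurableSet_Icc fun w hw ↦ mul_le_mul_of_nonneg_right ?_ (fejerKernel_nonneg w)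
  have hdiv := abs_le.1 (abs_div_sq_le hA hw)
  have htwo : 2 / A = 1 / A + 1 / A := by ring
  exact mul_exp_neg_le_of_le_exp_mul hB hslow (by linarith) (by linarith)

lemma integral_mul_fejerKernel_le (hmeas : Measurable B) (hB : ∀ u, 0 ≤ B u)
    (hC : ∀ u, B u ≤ C) (hslow : ∀ u v, u ≤ v → B u ≤ Real.exp (v - u) * B v) (hA : 0 < A)
    (v : ℝ) :
    ∫ w, B (v - 1 / A - w / A ^ 2) * fejerKernel w ≤
      B v * Real.exp (2 / A) * (∫ w, fejerKernel w) +
        C * ((∫ w, fejerKernel w) - ∫ w in Icc (-A) A, fejerKernel w) := by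
  have hint : Integrable fun w ↦ B (v - 1 / A - w / A ^ 2) * fejerKernel w :=
    integrable_mul_fejerKernel (by fun_prop) ⟨C, fun w ↦ by rw [abs_of_nonneg (hB _)]; exact hC _⟩
  rw [← integral_add_compl (measurableSet_Icc (a := -A) (b := A)) hint,
    ← setIntegral_compl measurableSet_Icc integrable_fejerKernel]
  refine add_le_add ?_ ?_
  · refine le_trans ?_ (mul_le_mul_of_nonneg_left (setIntegral_le_integral (s := Icc (-A) A)
      integrable_fejerKernel (ae_of_all _ fejerKernel_nonneg))
      (mul_nonneg (hB v) (Real.exp_pos _).le))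
    rw [← integral_const_mul]
    refine setIntegral_mono_on hint.integrableOn (integrable_fejerKernel.const_mul _).integrableOn
      measurableSet_Icc fun w hw ↦ mul_le_mul_of_nonneg_right ?_ (fejerKernel_nonneg w)
    have hdiv := abs_le.1 (abs_div_sq_le hA hw)
    have htwo : 2 / A = 1 / A + 1 / A := by ring
    rw [← mul_inv_le_iff₀ (Real.exp_pos _), ← Real.exp_neg]
    exact mul_exp_neg_le_of_le_exp_mul hB hslow (by linarith) (by linarith)
  · rw [← integral_const_mul]
    exact setIntegral_mono_on hint.integrableOn (integrable_fejerKernel.const_mul _).integrableOn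
      measurableSet_Icc.compl fun w _ ↦ mul_le_mul_of_nonneg_right (hC _) (fejerKernel_nonneg w)

lemma tendsto_exp_div_atTop (c : ℝ) : Tendsto (fun A : ℝ ↦ Real.exp (c / A)) atTop (𝓝 1) := by
  simpa [Function.comp_def] using
    (Real.continuous_exp.tendsto 0).comp (tendsto_const_nhds.div_atTop tendsto_id)

lemma eventually_lt_of_isLaplaceExtension {F : ℂ → ℂ}
    (h : IsLaplaceExtension (fun u ↦ B u - 1) F) (hmeas : Measurable B) (hB : ∀ u, 0 ≤ B u)
    (hC : ∀ u, B u ≤ C) (hslow : ∀ u v, u ≤ v → B u ≤ Real.exp (v - u) * B v) {a : ℝ}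
    (ha : 1 < a) : ∀ᶠ v in atTop, B v < a := by
  have hlim := ((tendsto_exp_div_atTop (-2)).const_mul a).mul tendsto_setIntegral_Icc_fejerKernel
  have hlt : ∫ w, fejerKernel w < a * 1 * ∫ w, fejerKernel w := by
    rw [mul_one]
    exact lt_mul_of_one_lt_left integral_fejerKernel_pos ha
  obtain ⟨A, hA, hApos⟩ := ((hlim.eventually_const_lt hlt).and (eventually_gt_atTop 0)).exists
  have haverage := (h.tendsto_integral_scaled_fejerKernel (pow_pos hApos 2)).comp
    (tendsto_atTop_add_const_right atTop (1 / A) tendsto_id)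
  filter_upwards [haverage.eventually_lt_const hA] with v hv
  by_contra! hav
  refine hv.not_ge (le_trans ?_ (mul_setIntegral_fejerKernel_le hmeas hB hC hslow hApos v))
  rw [neg_div]
  gcongr
  exact setIntegral_nonneg measurableSet_Icc fun w _ ↦ fejerKernel_nonneg w

lemma eventually_gt_of_isLaplaceExtension {F : ℂ → ℂ}
    (h : IsLaplaceExtension (fun u ↦ B u - 1) F) (hmeas : Measurable B) (hB : ∀ u, 0 ≤ B u)
    (hC : ∀ u, B u ≤ C) (hslow : ∀ u v, u ≤ v → B u ≤ Real.exp (v - u) * B v) {a : ℝ}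
    (ha : a < 1) : ∀ᶠ v in atTop, a < B v := by
  have hlim := (((tendsto_exp_div_atTop 2).const_mul a).mul_const (∫ w, fejerKernel w)).add
    ((tendsto_setIntegral_Icc_fejerKernel.const_sub (∫ w, fejerKernel w)).const_mul C)
  have hlt : a * 1 * (∫ w, fejerKernel w) +
      C * ((∫ w, fejerKernel w) - ∫ w, fejerKernel w) < ∫ w, fejerKernel w := by
    rw [sub_self, mul_zero, add_zero, mul_one]
    exact mul_lt_of_lt_one_left integral_fejerKernel_pos ha
  obtain ⟨A, hA, hApos⟩ := ((hlim.eventually_lt_const hlt).and (eventually_gt_atTop 0)).exists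
  have haverage := (h.tendsto_integral_scaled_fejerKernel (pow_pos hApos 2)).comp
    (tendsto_atTop_add_const_right atTop (-(1 / A)) tendsto_id)
  filter_upwards [haverage.eventually_const_lt hA] with v hv
  by_contra! hav
  refine hv.not_ge ((integral_mul_fejerKernel_le hmeas hB hC hslow hApos v).trans ?_)
  have := integral_fejerKernel_pos
  gcongr

theorem tendsto_one_of_isLaplaceExtension {F : ℂ → ℂ}
    (h : IsLaplaceExtension (fun u ↦ B u - 1) F) (hB : ∀ u, 0 ≤ B u)
    (hslow : ∀ u v, u ≤ v → B u ≤ Real.exp (v - u) * B v) : Tendsto B atTop (𝓝 1) := by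
  have hmeas : Measurable B := by simpa using h.measurable.add_const 1
  obtain ⟨C, hC⟩ := h.bounded
  have hC' (u : ℝ) : B u ≤ C + 1 := by linarith [(abs_le.1 (hC u)).2]
  exact tendsto_order.2 ⟨fun a ↦ eventually_gt_of_isLaplaceExtension h hmeas hB hC' hslow,
    fun a ↦ eventually_lt_of_isLaplaceExtension h hmeas hB hC' hslow⟩

end Tauberian

/-! ### The prime number theorem -/

section PrimeNumberTheorem

open ArithmeticFunction (vonMangoldt)

/-- The Chebyshev quotient `ψ x / x` in the variable `u = log x`. -/
noncomputable def normalizedPsi (u : ℝ) : ℝ := Chebyshev.psi (Real.exp u) * Real.exp (-u)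

lemma normalizedPsi_nonneg (u : ℝ) : 0 ≤ normalizedPsi u :=
  mul_nonneg (Chebyshev.psi_nonneg _) (Real.exp_pos _).le

lemma normalizedPsi_le (u : ℝ) : normalizedPsi u ≤ Real.log 4 + 4 := by
  rw [normalizedPsi, Real.exp_neg, mul_inv_le_iff₀ (Real.exp_pos u)]
  exact Chebyshev.psi_le_const_mul_self (Real.exp_pos u).le

lemma normalizedPsi_le_exp_mul {u v : ℝ} (huv : u ≤ v) :
    normalizedPsi u ≤ Real.exp (v - u) * normalizedPsi v := by
  have hpsi := Chebyshev.psi_mono (Real.exp_le_exp.2 huv)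
  have hexp : Real.exp (v - u) * Real.exp (-v) = Real.exp (-u) := by
    rw [← Real.exp_add]
    ring_nf
  rw [normalizedPsi, normalizedPsi, mul_left_comm, hexp]
  gcongr

@[fun_prop]
lemma measurable_normalizedPsi : Measurable normalizedPsi :=
  (Chebyshev.psi_mono.measurable.comp Real.measurable_exp).mul
    (Real.measurable_exp.comp measurable_neg)

lemma sum_vonMangoldt_Icc_one_eq_psi (x : ℝ) :
    ∑ n ∈ Finset.Icc 1 ⌊x⌋₊, vonMangoldt n = Chebyshev.psi x := by
  rw [Chebyshev.psi_eq_sum_Icc, ← Finset.insert_Icc_add_one_left_eq_Icc (Nat.zero_le _),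
    Finset.sum_insert (by simp)]
  simp

lemma LSeries_vonMangoldt_eq_mul_integral {s : ℂ} (hs : 1 < s.re) :
    LSeries (fun n ↦ ((vonMangoldt n : ℝ) : ℂ)) s =
      s * ∫ t in Ioi (1 : ℝ), ((Chebyshev.psi t : ℝ) : ℂ) * (t : ℂ) ^ (-(s + 1)) := by
  rw [LSeries_eq_mul_integral_of_nonneg (fun n ↦ vonMangoldt n) zero_le_one hs _
    fun n ↦ ArithmeticFunction.vonMangoldt_nonneg]
  · simp_rw [← Complex.ofReal_sum, sum_vonMangoldt_Icc_one_eq_psi]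
  · refine Asymptotics.IsBigO.of_bound (Real.log 4 + 4) (Eventually.of_forall fun n ↦ ?_)
    have hsum := sum_vonMangoldt_Icc_one_eq_psi n
    rw [Nat.floor_natCast] at hsum
    rw [hsum, Real.rpow_one, Real.norm_of_nonneg (Chebyshev.psi_nonneg _), Real.norm_natCast]
    exact Chebyshev.psi_le_const_mul_self n.cast_nonneg

lemma integral_psi_mul_cpow (s : ℂ) :
    ∫ t in Ioi (1 : ℝ), ((Chebyshev.psi t : ℝ) : ℂ) * (t : ℂ) ^ (-(s + 1)) =
      ∫ u in Ioi (0 : ℝ), (normalizedPsi u : ℂ) * Complex.exp (-(s - 1) * u) := by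
  have himage : Real.exp '' Ioi 0 = Ioi 1 := by
    simp
  rw [← himage, integral_image_eq_integral_abs_deriv_smul measurableSet_Ioi
    (fun u _ ↦ (Real.hasDerivAt_exp u).hasDerivWithinAt) Real.exp_injective.injOn]
  refine integral_congr_ae (ae_of_all _ fun u ↦ ?_)
  have hpow : ((Real.exp u : ℝ) : ℂ) ^ (-(s + 1)) = Complex.exp (-(s + 1) * u) := by
    rw [Complex.cpow_def_of_ne_zero (by exact_mod_cast (Real.exp_pos u).ne'),
      ← Complex.ofReal_log (Real.exp_pos u).le, Real.log_exp, mul_comm]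
  have hexp : Complex.exp u * Complex.exp (-(s + 1) * u) =
      Complex.exp (-u) * Complex.exp (-(s - 1) * u) := by
    rw [← Complex.exp_add, ← Complex.exp_add]
    ring_nf
  simp only [abs_of_pos (Real.exp_pos u), normalizedPsi, Complex.real_smul, hpow]
  push_cast
  linear_combination (Chebyshev.psi (Real.exp u) : ℂ) * hexp

lemma integrableOn_normalizedPsi_mul_cexp {c : ℂ} (hc : 0 < c.re) :
    IntegrableOn (fun u : ℝ ↦ (normalizedPsi u : ℂ) * Complex.exp (-c * u)) (Ioi 0) := by
  refine (integrableOn_exp_mul_complex_Ioi (a := -c) (by simpa using hc) 0).bdd_mul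
    (c := Real.log 4 + 4) (Measurable.aestronglyMeasurable (by fun_prop)) (ae_of_all _ fun u ↦ ?_)
  rw [Complex.norm_real, Real.norm_of_nonneg (normalizedPsi_nonneg u)]
  exact normalizedPsi_le u

lemma LSeries_vonMangoldt_eq_LFunctionResidueClassAux {s : ℂ} (hs : 1 < s.re) :
    LSeries (fun n ↦ ((vonMangoldt n : ℝ) : ℂ)) s =
      ArithmeticFunction.vonMangoldt.LFunctionResidueClassAux (1 : ZMod 1) s + 1 / (s - 1) := by
  rw [ArithmeticFunction.vonMangoldt.eqOn_LFunctionResidueClassAux isUnit_one hs]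
  simp [ArithmeticFunction.vonMangoldt.residueClass, Subsingleton.elim _ (1 : ZMod 1)]

theorem isLaplaceExtension_normalizedPsi_sub_one :
    IsLaplaceExtension (fun u ↦ normalizedPsi u - 1) fun c ↦
      (ArithmeticFunction.vonMangoldt.LFunctionResidueClassAux (1 : ZMod 1) (1 + c) - 1) /
        (1 + c) where
  measurable := measurable_normalizedPsi.sub_const 1
  bounded := ⟨Real.log 4 + 4, fun u ↦ abs_le.2 ⟨by
    linarith [normalizedPsi_nonneg u, Real.log_nonneg (by norm_num : (1 : ℝ) ≤ 4)], by
    linarith [normalizedPsi_le u]⟩⟩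
  continuousOn := by
    refine ContinuousOn.div
      (((ArithmeticFunction.vonMangoldt.continuousOn_LFunctionResidueClassAux _).comp
        (by fun_prop) fun c hc ↦ ?_).sub continuousOn_const) (by fun_prop) fun c hc hzero ↦ ?_
    · simpa using hc
    · have hre : 1 + c.re = 0 := by simpa using congrArg Complex.re hzero
      linarith [show 0 ≤ c.re from hc]
  integral_eq c hc := by
    have hs : 1 < (1 + c).re := by simpa using hc
    have hc0 : c ≠ 0 := by
      rintro rfl
      exact lt_irrefl 0 hc
    have hs0 : 1 + c ≠ 0 := fun h ↦ by
      rw [h, Complex.zero_re] at hs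
      linarith
    have hseries := LSeries_vonMangoldt_eq_mul_integral hs
    rw [LSeries_vonMangoldt_eq_LFunctionResidueClassAux hs, integral_psi_mul_cpow,
      add_sub_cancel_left] at hseries
    simp_rw [Complex.ofReal_sub, Complex.ofReal_one, sub_mul, one_mul]
    rw [integral_sub (integrableOn_normalizedPsi_mul_cexp hc)
      (integrableOn_exp_mul_complex_Ioi (by simpa using hc) 0),
      integral_exp_mul_complex_Ioi (by simpa using hc), ← mul_right_inj' hs0, mul_sub, ← hseries]
    simp only [one_div, Complex.ofReal_zero, mul_zero, Complex.exp_zero, neg_div_neg_eq]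
    field_simp
    ring

theorem tendsto_psi_div_self : Tendsto (fun x : ℝ ↦ Chebyshev.psi x / x) atTop (𝓝 1) := by
  have hlim := tendsto_one_of_isLaplaceExtension isLaplaceExtension_normalizedPsi_sub_one
    normalizedPsi_nonneg fun _ _ ↦ normalizedPsi_le_exp_mul
  refine (hlim.comp Real.tendsto_log_atTop).congr' ?_
  filter_upwards [eventually_gt_atTop 0] with x hx
  rw [Function.comp_apply, normalizedPsi, Real.exp_neg, Real.exp_log hx, div_eq_mul_inv]

theorem tendsto_theta_div_self : Tendsto (fun x : ℝ ↦ Chebyshev.theta x / x) atTop (𝓝 1) := by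
  have herror : Tendsto (fun x : ℝ ↦ 2 * √x * Real.log x / x) atTop (𝓝 0) := by
    have hlog := (isLittleO_log_rpow_atTop (by norm_num : (0 : ℝ) < 1 / 2)).tendsto_div_nhds_zero
    have hlog' := hlog.const_mul 2
    rw [mul_zero] at hlog'
    refine hlog'.congr' ?_
    filter_upwards [eventually_gt_atTop 0] with x hx
    rw [← Real.sqrt_eq_rpow]
    have hsqrt : √x ≠ 0 := (Real.sqrt_pos.2 hx).ne'
    field_simp
    rw [Real.sq_sqrt hx.le]
  have hlower := tendsto_psi_div_self.sub herror
  rw [sub_zero] at hlower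
  refine tendsto_of_tendsto_of_tendsto_of_le_of_le' hlower tendsto_psi_div_self ?_ ?_
  · filter_upwards [eventually_ge_atTop 1] with x hx
    rw [← sub_div]
    gcongr
    linarith [Chebyshev.psi_sub_theta_le hx]
  · filter_upwards [eventually_ge_atTop 0] with x hx
    gcongr
    exact Chebyshev.theta_le_psi x

end PrimeNumberTheorem

/-! ### Series of polynomial values -/

section PolySeries

/-- The subring of integers in `ℝ`, which keeps track of denominators. -/
abbrev integerSubring : Subring ℝ := (Int.castRingHom ℝ).range

lemma mem_integerSubring {r : ℝ} : r ∈ integerSubring ↔ ∃ z : ℤ, (z : ℝ) = r := by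
  simp [RingHom.mem_range]

/-- The power series `∑ S(v) x ^ v` attached to a polynomial `S`. -/
noncomputable def polySeries (x : ℝ) (S : ℝ[X]) : ℝ := ∑' v : ℕ, S.eval (v : ℝ) * x ^ v

/-- The series `∑ (S'(v) + β S(v)) x ^ v`.  For `β = log x` its terms are the derivatives of
`S(t) x ^ t` at the natural numbers. -/
noncomputable def jetSum (x β : ℝ) (S : ℝ[X]) : ℝ :=
  polySeries x (derivative S) + β * polySeries x S

variable {x : ℝ}

lemma summable_eval_mul_pow (hx : |x| < 1) (S : ℝ[X]) :
    Summable fun v : ℕ ↦ S.eval (v : ℝ) * x ^ v := by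
  induction S using Polynomial.induction_on' with
  | add p q hp hq => simpa [add_mul] using hp.add hq
  | monomial n a =>
    simpa [mul_assoc] using (summable_pow_mul_geometric_of_norm_lt_one n hx).mul_left a

lemma polySeries_add (hx : |x| < 1) (p q : ℝ[X]) :
    polySeries x (p + q) = polySeries x p + polySeries x q := by
  simp_rw [polySeries, eval_add, add_mul]
  exact (summable_eval_mul_pow hx p).tsum_add (summable_eval_mul_pow hx q)

lemma polySeries_C_mul (c : ℝ) (p : ℝ[X]) : polySeries x (C c * p) = c * polySeries x p := by
  simp_rw [polySeries, eval_mul, eval_C, mul_assoc]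
  exact tsum_mul_left

lemma polySeries_sub_shift (hx : |x| < 1) (T : ℝ[X]) :
    polySeries x (T - C x * T.comp (X + 1)) = T.eval 0 := by
  have hsum := summable_eval_mul_pow hx T
  have hterm (v : ℕ) : (T - C x * T.comp (X + 1)).eval (v : ℝ) * x ^ v =
      T.eval (v : ℝ) * x ^ v - T.eval ((v + 1 : ℕ) : ℝ) * x ^ (v + 1) := by
    simp only [eval_sub, eval_mul, eval_C, eval_comp, eval_add, eval_X, eval_one]
    push_cast
    ring
  simp_rw [polySeries, hterm]
  rw [hsum.tsum_sub ((summable_nat_add_iff 1).2 hsum), hsum.tsum_eq_zero_add]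
  simp

lemma jetSum_add (hx : |x| < 1) (β : ℝ) (p q : ℝ[X]) :
    jetSum x β (p + q) = jetSum x β p + jetSum x β q := by
  simp only [jetSum, derivative_add, polySeries_add hx]
  ring

lemma jetSum_C_mul (β c : ℝ) (p : ℝ[X]) : jetSum x β (C c * p) = c * jetSum x β p := by
  simp only [jetSum, derivative_C_mul, polySeries_C_mul]
  ring

lemma jetSum_sub_shift (hx : |x| < 1) (β : ℝ) (T : ℝ[X]) :
    jetSum x β (T - C x * T.comp (X + 1)) = (derivative T).eval 0 + β * T.eval 0 := by
  have hderiv : derivative (T - C x * T.comp (X + 1)) =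
      derivative T - C x * (derivative T).comp (X + 1) := by
    simp [derivative_comp]
  rw [jetSum, hderiv, polySeries_sub_shift hx, polySeries_sub_shift hx]

end PolySeries

/-! ### Centred binomial polynomials -/

section CenteredChoose

/-- The binomial polynomial `binom (X + a) (2 a)`, which is invariant under `X ↦ -1 - X`. -/
noncomputable def centeredChoose (a : ℕ) : ℝ[X] :=
  C (((2 * a).factorial : ℝ)⁻¹) * ∏ j ∈ Finset.range (2 * a), (X + C ((a : ℝ) - j))

/-- The polynomial `(2 X + 1) / (2 a + 1) * binom (X + a) (2 a)`, which changes sign under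
`X ↦ -1 - X`. -/
noncomputable def oddCenteredChoose (a : ℕ) : ℝ[X] :=
  C ((2 * (a : ℝ) + 1)⁻¹) * (2 * X + 1) * centeredChoose a

lemma centeredChoose_eval (a : ℕ) (z : ℝ) : (centeredChoose a).eval z =
    ((2 * a).factorial : ℝ)⁻¹ * ∏ j ∈ Finset.range (2 * a), (z + (a - j)) := by
  simp [centeredChoose, eval_prod]

lemma centeredChoose_eval_natCast (a v : ℕ) :
    (centeredChoose a).eval (v : ℝ) = (v + a).choose (2 * a) := by
  rw [centeredChoose_eval, Nat.cast_choose_eq_descPochhammer_div,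
    descPochhammer_eval_eq_prod_range, div_eq_inv_mul]
  push_cast
  simp only [add_sub_assoc]

lemma centeredChoose_eval_natCast_of_lt {a v : ℕ} (h : v < a) :
    (centeredChoose a).eval (v : ℝ) = 0 := by
  rw [centeredChoose_eval_natCast, Nat.choose_eq_zero_of_lt (by lia), Nat.cast_zero]

lemma centeredChoose_comp_reflect (a : ℕ) :
    (centeredChoose a).comp (-1 - X) = centeredChoose a := by
  refine Polynomial.funext fun z ↦ ?_
  have hsign : ∏ j ∈ Finset.range (2 * a), (-1 : ℝ) = 1 := by simp
  rw [eval_comp, centeredChoose_eval, centeredChoose_eval, ← Finset.prod_range_reflect]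
  congr 1
  rw [← one_mul (∏ j ∈ Finset.range (2 * a), (z + _)), ← hsign, ← Finset.prod_mul_distrib]
  refine Finset.prod_congr rfl fun j hj ↦ ?_
  rw [Finset.mem_range] at hj
  rw [Nat.sub_sub, Nat.cast_sub (by lia)]
  simp only [eval_sub, eval_neg, eval_one, eval_X]
  push_cast
  ring

lemma natDegree_centeredChoose_le (a : ℕ) : (centeredChoose a).natDegree ≤ 2 * a := by
  refine (natDegree_C_mul_le _ _).trans ((natDegree_prod_le _ _).trans ?_)
  refine (Finset.sum_le_card_nsmul _ _ 1 fun j _ ↦ (natDegree_X_add_C _).le).trans (by simp)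

lemma oddCenteredChoose_comp_reflect (a : ℕ) :
    (oddCenteredChoose a).comp (-1 - X) = C (-1) * oddCenteredChoose a := by
  simp only [oddCenteredChoose, mul_comp, C_comp, add_comp, X_comp, ofNat_comp, one_comp,
    centeredChoose_comp_reflect, C_neg, C_1]
  ring

lemma natDegree_oddCenteredChoose_le (a : ℕ) : (oddCenteredChoose a).natDegree ≤ 2 * a + 1 := by
  have hlinear : (C ((2 * (a : ℝ) + 1)⁻¹) * (2 * X + 1)).natDegree ≤ 1 :=
    (natDegree_C_mul_le _ _).trans (by compute_degree)
  exact (natDegree_mul_le_of_le hlinear (natDegree_centeredChoose_le a)).trans_eq (add_comm _ _)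

lemma oddCenteredChoose_eval_natCast (a v : ℕ) : (oddCenteredChoose a).eval (v : ℝ) =
    ((v + a + 1).choose (2 * a + 1) : ℝ) + (v + a).choose (2 * a + 1) := by
  have ha : 2 * (a : ℝ) + 1 ≠ 0 := by positivity
  have hdown : ((v + a).choose (2 * a + 1) : ℝ) * (2 * a + 1) =
      (v + a).choose (2 * a) * ((v : ℝ) - a) := by
    rcases le_or_gt a v with h | h
    · have := congrArg (Nat.cast (R := ℝ)) (Nat.choose_succ_right_eq (v + a) (2 * a))
      push_cast [Nat.cast_sub (show 2 * a ≤ v + a by lia)] at this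
      linear_combination this
    · simp [Nat.choose_eq_zero_of_lt (show v + a < 2 * a by lia),
        Nat.choose_eq_zero_of_lt (show v + a < 2 * a + 1 by lia)]
  have hup := congrArg (Nat.cast (R := ℝ)) (Nat.add_one_mul_choose_eq (v + a) (2 * a))
  push_cast at hup
  simp only [oddCenteredChoose, eval_mul, eval_C, eval_add, eval_X, eval_ofNat, eval_one,
    centeredChoose_eval_natCast]
  rw [mul_assoc, inv_mul_eq_iff_eq_mul₀ ha]
  linear_combination hup - hdown

end CenteredChoose

/-! ### The linear forms -/

section LinearForm

variable {x : ℝ}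

lemma hasSum_of_hasSum_add {f : ℕ → ℝ} {a : ℝ} (k : ℕ) (hzero : ∀ v < k, f v = 0)
    (h : HasSum (fun v ↦ f (v + k)) a) : HasSum f a := by
  have hsum := (hasSum_nat_add_iff k).1 h
  rwa [Finset.sum_eq_zero fun v hv ↦ hzero v (Finset.mem_range.1 hv), add_zero] at hsum

lemma hasSum_add_choose_mul_pow (hx : |x| < 1) {k m : ℕ} (hkm : k ≤ m) :
    HasSum (fun v : ℕ ↦ ((v + k).choose m : ℝ) * x ^ v) (x ^ (m - k) / (1 - x) ^ (m + 1)) := by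
  refine hasSum_of_hasSum_add (m - k) (fun v hv ↦ ?_) ?_
  · rw [Nat.choose_eq_zero_of_lt (by lia), Nat.cast_zero, zero_mul]
  · have hsum := (hasSum_choose_mul_geometric_of_norm_lt_one m hx).mul_left (x ^ (m - k))
    rw [mul_one_div] at hsum
    refine hsum.congr_fun fun v ↦ ?_
    rw [show v + (m - k) + k = v + m by lia, pow_add]
    ring

lemma polySeries_centeredChoose (hx : |x| < 1) (k : ℕ) :
    polySeries x (centeredChoose k) = x ^ k / (1 - x) ^ (2 * k + 1) := by
  simp_rw [polySeries, centeredChoose_eval_natCast]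
  rw [(hasSum_add_choose_mul_pow hx (by lia)).tsum_eq]
  congr 2
  lia

lemma polySeries_oddCenteredChoose (hx : |x| < 1) (k : ℕ) :
    polySeries x (oddCenteredChoose k) = x ^ k * (1 + x) / (1 - x) ^ (2 * k + 2) := by
  have hupper := hasSum_add_choose_mul_pow hx (k := k + 1) (m := 2 * k + 1) (by lia)
  have hlower := hasSum_add_choose_mul_pow hx (k := k) (m := 2 * k + 1) (by lia)
  simp_rw [polySeries, oddCenteredChoose_eval_natCast, add_mul, add_assoc]
  rw [(hupper.add hlower).tsum_eq, show 2 * k + 1 - (k + 1) = k by lia,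
    show 2 * k + 1 - k = k + 1 by lia]
  ring

/-- A family of polynomials `B k` of degree at most `2 k + 1` that satisfy
`B k (-1 - X) = ε * B k X` and whose values at the natural numbers form a unitriangular integer
matrix.  Polynomials with the same symmetry expand in such a family, and the coefficients have the
denominator of their values. -/
structure IsReflectionBasis (ε : ℝ) (B : ℕ → ℝ[X]) : Prop where
  mem_degreeLT (k : ℕ) : B k ∈ degreeLT ℝ (2 * (k + 1))
  comp_reflect (k : ℕ) : (B k).comp (-1 - X) = C ε * B k
  eval_self (k : ℕ) : (B k).eval (k : ℝ) = 1
  eval_of_lt {v k : ℕ} (h : v < k) : (B k).eval (v : ℝ) = 0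
  eval_mem (k v : ℕ) : (B k).eval (v : ℝ) ∈ integerSubring

lemma isReflectionBasis_centeredChoose : IsReflectionBasis 1 centeredChoose where
  mem_degreeLT k := mem_degreeLT.2
    ((degree_le_of_natDegree_le (natDegree_centeredChoose_le k)).trans_lt (by norm_cast; lia))
  comp_reflect k := by rw [centeredChoose_comp_reflect, C_1, one_mul]
  eval_self k := by rw [centeredChoose_eval_natCast, ← two_mul, Nat.choose_self, Nat.cast_one]
  eval_of_lt h := centeredChoose_eval_natCast_of_lt h
  eval_mem k v := by
    rw [centeredChoose_eval_natCast]
    exact natCast_mem _ _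

lemma isReflectionBasis_oddCenteredChoose : IsReflectionBasis (-1) oddCenteredChoose where
  mem_degreeLT k := mem_degreeLT.2
    ((degree_le_of_natDegree_le (natDegree_oddCenteredChoose_le k)).trans_lt (by norm_cast; lia))
  comp_reflect := oddCenteredChoose_comp_reflect
  eval_self k := by
    rw [oddCenteredChoose_eval_natCast, ← two_mul, Nat.choose_self,
      Nat.choose_eq_zero_of_lt (by lia), Nat.cast_one, Nat.cast_zero, add_zero]
  eval_of_lt h := by
    rw [oddCenteredChoose_eval_natCast, Nat.choose_eq_zero_of_lt (by lia),
      Nat.choose_eq_zero_of_lt (by lia), Nat.cast_zero, add_zero]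
  eval_mem k v := by
    rw [oddCenteredChoose_eval_natCast]
    exact add_mem (natCast_mem _ _) (natCast_mem _ _)

lemma eq_zero_of_comp_reflect {ε : ℝ} {S : ℝ[X]} {K : ℕ} (hdeg : S ∈ degreeLT ℝ (2 * K))
    (hsymm : S.comp (-1 - X) = C ε * S) (hzero : ∀ k < K, S.eval (k : ℝ) = 0) : S = 0 := by
  refine eq_zero_of_degree_lt_of_eval_index_eq_zero (v := fun i : ℤ ↦ (i : ℝ))
    (Finset.Ico (-K : ℤ) K) Int.cast_injective.injOn ?_ fun i hi ↦ ?_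
  · rw [Int.card_Ico, show ((K : ℤ) - -K).toNat = 2 * K by lia]
    exact mem_degreeLT.1 hdeg
  · rw [Finset.mem_Ico] at hi
    obtain ⟨n, rfl | rfl⟩ : ∃ n : ℕ, i = n ∨ i = -1 - n :=
      ⟨if 0 ≤ i then i.toNat else (-1 - i).toNat, by split_ifs <;> lia⟩
    · exact_mod_cast hzero n (by lia)
    · have heval := congrArg (eval (n : ℝ)) hsymm
      rw [eval_mul, hzero n (by lia), mul_zero, eval_comp] at heval
      simpa using heval

lemma IsReflectionBasis.exists_mul_polySeries_eq {ε w D : ℝ} {d : ℤ} {B : ℕ → ℝ[X]}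
    (hB : IsReflectionBasis ε B) (hx : |x| < 1) (hseries : ∀ k, polySeries x (B k) = d ^ k * w)
    {L : ℕ} {S : ℝ[X]} (hsymm : S.comp (-1 - X) = C ε * S)
    (hint : ∀ k : ℕ, D * S.eval (k : ℝ) ∈ integerSubring)
    (hzero : ∀ k < L, S.eval (k : ℝ) = 0) :
    ∃ A : ℤ, D * polySeries x S = d ^ L * A * w := by
  obtain ⟨m, hdeg⟩ : ∃ m, S ∈ degreeLT ℝ (2 * (L + m)) :=
    ⟨S.natDegree + 1, Polynomial.mem_degreeLT.2 (degree_le_natDegree.trans_lt (by norm_cast; lia))⟩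
  induction m generalizing L S with
  | zero => exact ⟨0, by simp [eq_zero_of_comp_reflect hdeg hsymm hzero, polySeries]⟩
  | succ m ih =>
    set c := S.eval (L : ℝ)
    have hrest : S = (S - C c * B L) + C c * B L := by ring
    obtain ⟨z, hz⟩ := mem_integerSubring.1 (hint L)
    obtain ⟨A, hA⟩ := ih (L := L + 1) (S := S - C c * B L)
      (by rw [sub_comp, mul_comp, C_comp, hsymm, hB.comp_reflect]; ring)
      (fun k ↦ by
        rw [eval_sub, eval_mul, eval_C, mul_sub, ← mul_assoc]
        exact sub_mem (hint k) (mul_mem (hint L) (hB.eval_mem L k)))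
      (fun k hk ↦ by
        rcases Nat.lt_succ_iff_lt_or_eq.1 hk with h | rfl
        · rw [eval_sub, eval_mul, hzero k h, hB.eval_of_lt h, mul_zero, sub_zero]
        · rw [eval_sub, eval_mul, eval_C, hB.eval_self, mul_one, sub_self])
      (sub_mem (by rwa [add_right_comm, add_assoc])
        (C_mul' c (B L) ▸ Submodule.smul_mem _ c
          (degreeLT_mono (by lia) (hB.mem_degreeLT L))))
    refine ⟨d * A + z, ?_⟩
    rw [hrest, polySeries_add hx, polySeries_C_mul, mul_add, hA, hseries]
    push_cast
    linear_combination (-(d : ℝ) ^ L * w) * hz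

lemma derivative_comp_reflect {S : ℝ[X]} (hsymm : S.comp (-1 - X) = S) :
    (derivative S).comp (-1 - X) = C (-1) * derivative S := by
  have hderiv := congrArg derivative hsymm
  simp only [derivative_comp, derivative_sub, derivative_neg, derivative_one, derivative_X]
    at hderiv
  simp only [C_neg, C_1]
  linear_combination -hderiv

theorem exists_mul_jetSum_eq {d : ℤ} {D : ℝ} (hx : |x| < 1) (hxd : x = d * (1 - x) ^ 2) {L : ℕ}
    {S : ℝ[X]} (hsymm : S.comp (-1 - X) = S)
    (hint : ∀ k : ℕ, D * S.eval (k : ℝ) ∈ integerSubring)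
    (hint' : ∀ k : ℕ, D * (derivative S).eval (k : ℝ) ∈ integerSubring)
    (hzero : ∀ k < L, S.eval (k : ℝ) = 0) (hzero' : ∀ k < L, (derivative S).eval (k : ℝ) = 0) :
    ∃ A B : ℤ, D * polySeries x S = d ^ L / (1 - x) * A ∧
      ∀ β, D * jetSum x β S = d ^ L / (1 - x) * (β * A + (1 + x) / (1 - x) * B) := by
  have hx1 : 1 - x ≠ 0 := by linarith [(abs_lt.1 hx).2]
  have hpow (k : ℕ) : x ^ k = d ^ k * (1 - x) ^ (2 * k) := by rw [pow_mul, ← mul_pow, ← hxd]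
  obtain ⟨A, hA⟩ := isReflectionBasis_centeredChoose.exists_mul_polySeries_eq (w := 1 / (1 - x))
    (d := d) hx (fun k ↦ by rw [polySeries_centeredChoose hx, hpow]; field_simp; ring)
    (by rw [hsymm, C_1, one_mul]) hint hzero
  obtain ⟨B, hB⟩ := isReflectionBasis_oddCenteredChoose.exists_mul_polySeries_eq
    (w := (1 + x) / (1 - x) ^ 2) (d := d) hx
    (fun k ↦ by rw [polySeries_oddCenteredChoose hx, hpow]; field_simp; ring)
    (derivative_comp_reflect hsymm) hint' hzero'
  refine ⟨A, B, by rw [hA]; ring, fun β ↦ ?_⟩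
  rw [jetSum, mul_add, mul_left_comm D, hA, hB]
  field_simp
  ring

end LinearForm

/-! ### Nonvanishing of the forms -/

section Nonvanishing

/-- The kernel polynomial: a product of three centred binomial polynomials. -/
noncomputable def chooseKernel (a b c : ℕ) : ℝ[X] :=
  centeredChoose a * centeredChoose b * centeredChoose c

/-- The polynomial for which `chooseKernel a b c * kernelRelation x a b c U` is the difference of
`T = chooseKernel a b c * (X - a) (X - b) (X - c) U` and `x T(X + 1)`, so that its `jetSum`
telescopes. -/
noncomputable def kernelRelation (x : ℝ) (a b c : ℕ) (U : ℝ[X]) : ℝ[X] :=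
  (X - C (a : ℝ)) * (X - C (b : ℝ)) * (X - C (c : ℝ)) * U -
    C x * ((X + 1 + C (a : ℝ)) * (X + 1 + C (b : ℝ)) * (X + 1 + C (c : ℝ)) * U.comp (X + 1))

variable {x β : ℝ} {a b c : ℕ}

lemma centeredChoose_comp_X_add_one (a : ℕ) :
    (centeredChoose a).comp (X + 1) * (X + 1 - C (a : ℝ)) =
      centeredChoose a * (X + 1 + C (a : ℝ)) := by
  refine Polynomial.funext fun z ↦ ?_
  simp only [eval_mul, eval_comp, eval_add, eval_sub, eval_X, eval_one, eval_C,
    centeredChoose_eval]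
  have hsucc := Finset.prod_range_succ (fun j : ℕ ↦ z + 1 + ((a : ℝ) - j)) (2 * a)
  have hshift (j : ℕ) : z + 1 + ((a : ℝ) - (j + 1 : ℕ)) = z + (a - j) := by push_cast; ring
  rw [Finset.prod_range_succ', Finset.prod_congr rfl fun j _ ↦ hshift j] at hsucc
  push_cast at hsucc
  linear_combination (-((2 * a).factorial : ℝ)⁻¹) * hsucc

lemma jetSum_chooseKernel_mul_kernelRelation (hx : |x| < 1) (β : ℝ) (ha : 0 < a) (hb : 0 < b)
    (U : ℝ[X]) : jetSum x β (chooseKernel a b c * kernelRelation x a b c U) = 0 := by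
  have htelescope := jetSum_sub_shift hx β
    (chooseKernel a b c * ((X - C (a : ℝ)) * (X - C (b : ℝ)) * (X - C (c : ℝ)) * U))
  have hzero {m : ℕ} (hm : 0 < m) : (centeredChoose m).eval 0 = 0 :=
    mod_cast centeredChoose_eval_natCast_of_lt hm
  convert htelescope using 1
  · congr 1
    simp only [chooseKernel, kernelRelation, mul_comp, sub_comp, X_comp, C_comp]
    have hA := centeredChoose_comp_X_add_one a
    have hB := centeredChoose_comp_X_add_one b
    have hC := centeredChoose_comp_X_add_one c
    calc _ = centeredChoose a * centeredChoose b * centeredChoose c *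
            ((X - C (a : ℝ)) * (X - C (b : ℝ)) * (X - C (c : ℝ)) * U) -
          C x * (centeredChoose a * (X + 1 + C (a : ℝ)) * (centeredChoose b *
            (X + 1 + C (b : ℝ))) * (centeredChoose c * (X + 1 + C (c : ℝ))) *
              U.comp (X + 1)) := by ring
      _ = _ := by rw [← hA, ← hB, ← hC]; ring
  · simp [chooseKernel, hzero ha, hzero hb]

lemma jetSum_mul_add (hx : |x| < 1) (K p q : ℝ[X]) :
    jetSum x β (K * (p + q)) = jetSum x β (K * p) + jetSum x β (K * q) := by
  rw [mul_add, jetSum_add hx]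

lemma jetSum_mul_C_mul (K : ℝ[X]) (r : ℝ) (p : ℝ[X]) :
    jetSum x β (K * (C r * p)) = r * jetSum x β (K * p) := by
  rw [mul_left_comm, jetSum_C_mul]

/-- In terms of `y = 2 X + 1`, which is odd under `X ↦ -1 - X`, the coefficients of
`kernelRelation` are symmetric functions of the half-integers `a + 1 / 2`,
`b + 1 / 2` and `c + 1 / 2`. -/
lemma kernelRelation_one_eq {y : ℝ[X]} {e₁ e₂ e₃ : ℝ} (hy : y = 2 * X + 1)
    (he₁ : e₁ = (a + 1 / 2) + (b + 1 / 2) + (c + 1 / 2))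
    (he₂ : e₂ = (a + 1 / 2) * (b + 1 / 2) + (a + 1 / 2) * (c + 1 / 2) + (b + 1 / 2) * (c + 1 / 2))
    (he₃ : e₃ = (a + 1 / 2) * (b + 1 / 2) * (c + 1 / 2)) :
    kernelRelation x a b c 1 =
      C ((1 - x) / 8) * y ^ 3 + (C (-(1 + x) * e₁ / 4) * y ^ 2 +
        (C ((1 - x) * e₂ / 2) * y + C (-(1 + x) * e₃) * 1)) := by
  subst hy he₁ he₂ he₃
  refine Polynomial.funext fun z ↦ ?_
  simp [kernelRelation]
  ring

lemma kernelRelation_two_X_eq {y : ℝ[X]} {e₁ e₂ e₃ : ℝ} (hy : y = 2 * X + 1)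
    (he₁ : e₁ = (a + 1 / 2) + (b + 1 / 2) + (c + 1 / 2))
    (he₂ : e₂ = (a + 1 / 2) * (b + 1 / 2) + (a + 1 / 2) * (c + 1 / 2) + (b + 1 / 2) * (c + 1 / 2))
    (he₃ : e₃ = (a + 1 / 2) * (b + 1 / 2) * (c + 1 / 2)) :
    kernelRelation x a b c (2 * X) =
      C ((1 - x) / 8) * y ^ 4 + (C (-(1 + x) * (2 * e₁ + 1) / 8) * y ^ 3 +
        (C ((1 - x) * (2 * e₂ + e₁) / 4) * y ^ 2 +
          (C (-(1 + x) * (2 * e₃ + e₂) / 2) * y + C ((1 - x) * e₃) * 1))) := by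
  subst hy he₁ he₂ he₃
  refine Polynomial.funext fun z ↦ ?_
  simp [kernelRelation]
  ring

lemma jetSum_chooseKernel_mul_two_X_add_one_eq_zero (hx : |x| < 1) (ha : 0 < a) (hb : 0 < b)
    (h0 : jetSum x β (chooseKernel a b c * 1) = 0)
    (h2 : jetSum x β (chooseKernel a b c * (2 * X + 1) ^ 2) = 0)
    (h4 : jetSum x β (chooseKernel a b c * (2 * X + 1) ^ 4) = 0) :
    jetSum x β (chooseKernel a b c * (2 * X + 1)) = 0 := by
  obtain ⟨hx0, hx1⟩ := abs_lt.1 hx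
  have hone := jetSum_chooseKernel_mul_kernelRelation (c := c) hx β ha hb 1
  have htwo := jetSum_chooseKernel_mul_kernelRelation (c := c) hx β ha hb (2 * X)
  obtain ⟨y, hy⟩ : ∃ y : ℝ[X], y = 2 * X + 1 := ⟨_, rfl⟩
  rw [← hy] at h2 h4 ⊢
  rw [kernelRelation_one_eq hy rfl rfl rfl] at hone
  rw [kernelRelation_two_X_eq hy rfl rfl rfl] at htwo
  simp only [jetSum_mul_add hx, jetSum_mul_C_mul, h0, h2, h4] at hone htwo
  set y₁ := jetSum x β (chooseKernel a b c * y)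
  set y₃ := jetSum x β (chooseKernel a b c * y ^ 3)
  set e₂ : ℝ := (a + 1 / 2) * (b + 1 / 2) + (a + 1 / 2) * (c + 1 / 2) + (b + 1 / 2) * (c + 1 / 2)
    with he₂
  have hy₃ : y₃ = -4 * e₂ * y₁ :=
    mul_left_cancel₀ (sub_ne_zero.2 hx1.ne') (by linear_combination 8 * hone)
  rw [hy₃] at htwo
  have hprod : (1 + x) * ((((a + 1 / 2) + (b + 1 / 2) + (c + 1 / 2)) * e₂ -
      (a + 1 / 2) * (b + 1 / 2) * (c + 1 / 2)) * y₁) = 0 := by linear_combination htwo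
  have hpos : 0 < ((a + 1 / 2 : ℝ) + (b + 1 / 2) + (c + 1 / 2)) * e₂ -
      (a + 1 / 2) * (b + 1 / 2) * (c + 1 / 2) := by
    rw [he₂]
    ring_nf
    positivity
  exact (mul_eq_zero.1 ((mul_eq_zero.1 hprod).resolve_left (by linarith))).resolve_left hpos.ne'


lemma monic_cubic_mul_pow (r s t u : ℝ) (k : ℕ) :
    ((X + C r) * (X + C s) * (X + C t) * (X + C u) ^ k).Monic := by
  monicity!

lemma natDegree_cubic_mul_pow (r s t u : ℝ) (k : ℕ) :
    ((X + C r) * (X + C s) * (X + C t) * (X + C u) ^ k).natDegree = k + 3 := by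
  have hquadratic := (monic_X_add_C r).mul (monic_X_add_C s)
  have hcubic := hquadratic.mul (monic_X_add_C t)
  rw [hcubic.natDegree_mul ((monic_X_add_C u).pow k), hquadratic.natDegree_mul (monic_X_add_C t),
    (monic_X_add_C r).natDegree_mul (monic_X_add_C s), (monic_X_add_C u).natDegree_pow]
  simp only [natDegree_X_add_C]
  lia

lemma kernelRelation_X_pow_eq (k : ℕ) : kernelRelation x a b c (X ^ k) =
    (X + C (-a : ℝ)) * (X + C (-b : ℝ)) * (X + C (-c : ℝ)) * (X + C 0) ^ k -
      C x * ((X + C (1 + a : ℝ)) * (X + C (1 + b : ℝ)) * (X + C (1 + c : ℝ)) * (X + C 1) ^ k) := by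
  simp [kernelRelation, add_assoc, sub_eq_add_neg]

lemma natDegree_kernelRelation_X_pow_le (k : ℕ) :
    (kernelRelation x a b c (X ^ k)).natDegree ≤ k + 3 := by
  rw [kernelRelation_X_pow_eq]
  exact (natDegree_sub_le _ _).trans (max_le (natDegree_cubic_mul_pow ..).le
    ((natDegree_C_mul_le _ _).trans (natDegree_cubic_mul_pow ..).le))

lemma coeff_kernelRelation_X_pow (k : ℕ) :
    (kernelRelation x a b c (X ^ k)).coeff (k + 3) = 1 - x := by
  have hcoeff (r s t u : ℝ) :
      ((X + C r) * (X + C s) * (X + C t) * (X + C u) ^ k).coeff (k + 3) = 1 := by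
    rw [← natDegree_cubic_mul_pow r s t u k]
    exact monic_cubic_mul_pow r s t u k
  rw [kernelRelation_X_pow_eq, coeff_sub, coeff_C_mul, hcoeff, hcoeff, mul_one]

lemma jetSum_chooseKernel_mul_eq_zero (hx : |x| < 1) (ha : 0 < a) (hb : 0 < b)
    (h0 : jetSum x β (chooseKernel a b c * 1) = 0)
    (h2 : jetSum x β (chooseKernel a b c * (2 * X + 1) ^ 2) = 0)
    (h4 : jetSum x β (chooseKernel a b c * (2 * X + 1) ^ 4) = 0) (P : ℝ[X]) :
    jetSum x β (chooseKernel a b c * P) = 0 := by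
  obtain ⟨k, hdeg⟩ : ∃ k, P.natDegree ≤ k + 2 := ⟨P.natDegree, by lia⟩
  induction k generalizing P with
  | zero =>
    have h1 := jetSum_chooseKernel_mul_two_X_add_one_eq_zero hx ha hb h0 h2 h4
    have hP : P = C (P.coeff 2 / 4) * (2 * X + 1) ^ 2 +
        (C (P.coeff 1 / 2 - P.coeff 2 / 2) * (2 * X + 1) +
          C (P.coeff 0 - P.coeff 1 / 2 + P.coeff 2 / 4) * 1) := by
      refine Polynomial.funext fun z ↦ ?_
      conv_lhs => rw [P.as_sum_range_C_mul_X_pow' (n := 3) (by lia)]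
      simp only [Finset.sum_range_succ, Finset.sum_range_zero, eval_add, eval_mul, eval_C, eval_pow,
        eval_X, eval_ofNat, eval_one, eval_zero]
      ring
    rw [hP, jetSum_mul_add hx, jetSum_mul_add hx]
    simp only [jetSum_mul_C_mul, h0, h1, h2, mul_zero, add_zero]
  | succ k ih =>
    set R := kernelRelation x a b c (X ^ k)
    set r := P.coeff (k + 3) / (1 - x)
    have hrest : jetSum x β (chooseKernel a b c * (P - C r * R)) = 0 := by
      refine ih _ (natDegree_le_iff_coeff_eq_zero.2 fun m hm ↦ ?_)
      rcases (show k + 3 ≤ m by lia).eq_or_lt with rfl | hlt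
      · rw [coeff_sub, coeff_C_mul, coeff_kernelRelation_X_pow,
          div_mul_cancel₀ _ (sub_ne_zero.2 (abs_lt.1 hx).2.ne'), sub_self]
      · refine coeff_eq_zero_of_natDegree_lt (lt_of_le_of_lt ?_ hlt)
        exact (natDegree_sub_le _ _).trans (max_le hdeg
          ((natDegree_C_mul_le _ _).trans (natDegree_kernelRelation_X_pow_le k)))
    rw [show P = (P - C r * R) + C r * R by ring, jetSum_mul_add hx, jetSum_mul_C_mul, hrest,
      jetSum_chooseKernel_mul_kernelRelation hx β ha hb, mul_zero, add_zero]

lemma dvd_sub_shift {s r : ℝ} (hr : r = x * s) {j : ℤ} {m : ℕ} {T : ℝ[X]}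
    (hleft : (X - C (j : ℝ)) ^ m ∣ T - C r * (X - C (j : ℝ)))
    (hright : (X - C ((j + 1 : ℤ) : ℝ)) ^ m ∣ T - C s * (X - C ((j + 1 : ℤ) : ℝ))) :
    (X - C (j : ℝ)) ^ m ∣ T - C x * T.comp (X + 1) := by
  have hcomp : (X - C ((j + 1 : ℤ) : ℝ)).comp (X + 1) = X - C (j : ℝ) := by
    rw [sub_comp, X_comp, C_comp, Int.cast_add, Int.cast_one, C_add, C_1]
    ring
  have hshift := map_dvd (compRingHom (X + 1)) hright
  simp only [map_pow, coe_compRingHom_apply, sub_comp (p := T), mul_comp, C_comp, hcomp] at hshift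
  have hsplit : T - C x * T.comp (X + 1) = (T - C r * (X - C (j : ℝ))) -
      C x * (T.comp (X + 1) - C s * (X - C (j : ℝ))) := by
    rw [hr, C_mul]
    ring
  exact hsplit ▸ dvd_sub hleft (hshift.mul_left _)

/-- Interpolation by a jet that `T(X) ↦ x T(X + 1)` respects at every node:
`T ≡ x ^ (-j) (X - j)` to order `m` at the integer `j`. -/
lemma exists_pow_dvd_sub_shift (hx : x ≠ 0) (M : ℕ) {m : ℕ} (hm : 2 ≤ m) :
    ∃ T : ℝ[X], T.eval 0 = 0 ∧ (derivative T).eval 0 = 1 ∧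
      (∏ i ∈ Finset.Ico (-(M : ℤ)) M, (X - C (i : ℝ))) ^ m ∣ T - C x * T.comp (X + 1) := by
  have hcoprime := pairwise_coprime_X_sub_C (Int.cast_injective (α := ℝ))
  obtain ⟨T, hT⟩ := Ideal.exists_forall_sub_mem_ideal (R := ℝ[X])
    (ι := Finset.Icc (-(M : ℤ)) M) (I := fun j ↦ Ideal.span {(X - C ((j : ℤ) : ℝ)) ^ m})
    (fun i j hij ↦ (Ideal.isCoprime_span_singleton_iff _ _).2
      (hcoprime fun h ↦ hij (Subtype.ext h)).pow)
    (fun j ↦ C (x ^ (-(j : ℤ))) * (X - C ((j : ℤ) : ℝ)))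
  have hjet (j : ℤ) (hj : j ∈ Finset.Icc (-(M : ℤ)) M) :
      (X - C (j : ℝ)) ^ m ∣ T - C (x ^ (-j)) * (X - C (j : ℝ)) :=
    Ideal.mem_span_singleton.1 (hT ⟨j, hj⟩)
  obtain ⟨q, hq⟩ := (pow_dvd_pow _ hm).trans (hjet 0 (by simp))
  have hq0 : T = X + X ^ 2 * q := by
    simp at hq
    linear_combination hq
  refine ⟨T, by simp [hq0], by simp [hq0], ?_⟩
  rw [← Finset.prod_pow]
  refine Finset.prod_dvd_of_coprime (fun i _ j _ hij ↦ (hcoprime hij).pow) fun j hj ↦ ?_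
  rw [Finset.mem_Ico] at hj
  refine dvd_sub_shift ?_ (hjet j ?_) (hjet (j + 1) ?_)
  · rw [neg_add, ← sub_eq_add_neg, zpow_sub_one₀ hx, mul_left_comm, mul_inv_cancel₀ hx, mul_one]
  · rw [Finset.mem_Icc]; lia
  · rw [Finset.mem_Icc]; lia

lemma centeredChoose_dvd_prod_X_sub_C {a M : ℕ} (h : a ≤ M) :
    centeredChoose a ∣ ∏ i ∈ Finset.Ico (-(M : ℤ)) M, (X - C (i : ℝ)) := by
  have hunit : IsUnit (C (((2 * a).factorial : ℝ)⁻¹)) :=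
    isUnit_C.2 (inv_ne_zero (by positivity)).isUnit
  have hinj : Set.InjOn (fun j : ℕ ↦ (j : ℤ) - a) (Finset.range (2 * a)) :=
    fun i _ j _ hij ↦ by simpa using hij
  have hprod : ∏ j ∈ Finset.range (2 * a), (X + C ((a : ℝ) - j)) =
      ∏ i ∈ (Finset.range (2 * a)).image (fun j : ℕ ↦ (j : ℤ) - a), (X - C (i : ℝ)) := by
    rw [Finset.prod_image hinj]
    refine Finset.prod_congr rfl fun j _ ↦ ?_
    push_cast
    simp only [C_sub]
    ring
  rw [centeredChoose, hunit.mul_left_dvd, hprod]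
  refine Finset.prod_dvd_prod_of_subset _ _ _ fun i hi ↦ ?_
  simp only [Finset.mem_image, Finset.mem_range, Finset.mem_Ico] at hi ⊢
  lia

theorem exists_jetSum_chooseKernel_mul_ne_zero (hx : |x| < 1) (hx0 : x ≠ 0) (β : ℝ) (ha : 0 < a)
    (hb : 0 < b) : ∃ P ∈ ({1, (2 * X + 1) ^ 2, (2 * X + 1) ^ 4} : Set ℝ[X]),
      jetSum x β (chooseKernel a b c * P) ≠ 0 := by
  by_contra! hzero
  obtain ⟨T, hT0, hT1, hdvd⟩ := exists_pow_dvd_sub_shift hx0 (max (max a b) c) (m := 3) (by lia)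
  obtain ⟨Q, hQ⟩ : chooseKernel a b c ∣ T - C x * T.comp (X + 1) := by
    refine dvd_trans ?_ hdvd
    rw [pow_succ, pow_two]
    exact mul_dvd_mul (mul_dvd_mul (centeredChoose_dvd_prod_X_sub_C (by lia))
      (centeredChoose_dvd_prod_X_sub_C (by lia))) (centeredChoose_dvd_prod_X_sub_C (by lia))
  have hjet := jetSum_sub_shift hx β T
  rw [hQ, hT0, hT1, jetSum_chooseKernel_mul_eq_zero hx ha hb (hzero 1 (by simp))
    (hzero _ (by simp)) (hzero _ (by simp))] at hjet
  norm_num at hjet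

end Nonvanishing

/-! ### Denominators of the derivative -/

section DerivativeDenominator

lemma dvd_lcmUpto {k n : ℕ} (hk : 0 < k) (hkn : k ≤ n) : k ∣ Nat.lcmUpto n :=
  Finset.dvd_lcm (f := id) (Finset.mem_Icc.2 ⟨hk, hkn⟩)

-- Writing `f(v + X) = f(v) + X g`, the vanishing of the `n`-th difference of `g` expresses
-- `f'(v) = g(0)` through the quotients `g(k) = (f(v + k) - f(v)) / k` with `1 ≤ k ≤ n`.
lemma lcmUpto_mul_eval_derivative_mem {f : ℝ[X]} {n : ℕ} (hdeg : f.natDegree ≤ n)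
    (hint : ∀ k : ℕ, f.eval (k : ℝ) ∈ integerSubring) (v : ℕ) :
    (Nat.lcmUpto n : ℝ) * (derivative f).eval (v : ℝ) ∈ integerSubring := by
  rcases Nat.eq_zero_or_pos f.natDegree with h0 | hpos
  · simp [derivative_of_natDegree_zero h0]
  set g := divX (taylor (v : ℝ) f)
  have hg (t : ℝ) : g.eval t * t = f.eval (t + v) - f.eval (v : ℝ) := by
    have := congrArg (eval t) (X_mul_divX_add (taylor (v : ℝ) f))
    rw [eval_add, eval_mul, eval_X, eval_C, taylor_coeff_zero, taylor_eval] at this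
    linarith
  have hg0 : g.eval 0 = (derivative f).eval (v : ℝ) := by
    rw [← coeff_zero_eq_eval_zero, coeff_divX, zero_add, taylor_coeff_one]
  have hgint (k : ℕ) (hk : 0 < k) (hkn : k ≤ n) :
      (Nat.lcmUpto n : ℝ) * g.eval (k : ℝ) ∈ integerSubring := by
    obtain ⟨m, hm⟩ := dvd_lcmUpto hk hkn
    rw [hm, Nat.cast_mul, mul_right_comm, mul_comm (k : ℝ), hg, mul_comm]
    refine mul_mem (natCast_mem _ m) (sub_mem ?_ (hint v))
    exact_mod_cast hint (k + v)
  have hgdeg : g.natDegree < n := by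
    rw [natDegree_divX_eq_natDegree_tsub_one, natDegree_taylor]
    lia
  have hvanish := congrFun (fwdDiff_iter_eq_zero_of_degree_lt hgdeg) 0
  rw [fwdDiff_iter_eq_sum_shift, Finset.sum_range_succ'] at hvanish
  simp only [zero_add, nsmul_eq_mul, mul_one, zsmul_eq_mul, Pi.zero_apply, Nat.cast_zero,
    tsub_zero, Nat.choose_zero_right, hg0] at hvanish
  have hsolve : (Nat.lcmUpto n : ℝ) * (derivative f).eval (v : ℝ) = -((-1) ^ n *
      ∑ k ∈ Finset.range n, (((-1) ^ (n - (k + 1)) * n.choose (k + 1) : ℤ) : ℝ) *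
        ((Nat.lcmUpto n : ℝ) * g.eval ((k + 1 : ℕ) : ℝ))) := by
    have hsq : ((-1 : ℝ) ^ n) ^ 2 = 1 := by rw [← pow_mul, mul_comm, pow_mul]; simp
    simp_rw [mul_left_comm _ (Nat.lcmUpto n : ℝ), ← Finset.mul_sum]
    push_cast at hvanish ⊢
    linear_combination (-1) ^ n * (Nat.lcmUpto n : ℝ) * hvanish -
      (Nat.lcmUpto n : ℝ) * (derivative f).eval (v : ℝ) * hsq
  rw [hsolve]
  refine neg_mem (mul_mem (pow_mem (neg_mem (one_mem _)) n) (sum_mem fun k hk ↦ ?_))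
  exact mul_mem (intCast_mem _ _) (hgint _ k.succ_pos (Finset.mem_range.1 hk))

lemma centeredChoose_eval_mem (a v : ℕ) : (centeredChoose a).eval (v : ℝ) ∈ integerSubring := by
  rw [centeredChoose_eval_natCast]
  exact natCast_mem _ _

lemma chooseKernel_eval_mem (a b c v : ℕ) :
    (chooseKernel a b c).eval (v : ℝ) ∈ integerSubring := by
  simp only [chooseKernel, eval_mul]
  exact mul_mem (mul_mem (centeredChoose_eval_mem a v) (centeredChoose_eval_mem b v))
    (centeredChoose_eval_mem c v)

lemma lcmUpto_mul_eval_derivative_chooseKernel_mem {a b c n : ℕ} (ha : 2 * a ≤ n)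
    (hb : 2 * b ≤ n) (hc : 2 * c ≤ n) (v : ℕ) :
    (Nat.lcmUpto n : ℝ) * (derivative (chooseKernel a b c)).eval (v : ℝ) ∈ integerSubring := by
  have hderiv {e : ℕ} (he : 2 * e ≤ n) := lcmUpto_mul_eval_derivative_mem
    ((natDegree_centeredChoose_le e).trans he) (centeredChoose_eval_mem e) v
  have hval (e : ℕ) := centeredChoose_eval_mem e v
  have hmem := add_mem (add_mem (mul_mem (mul_mem (hderiv ha) (hval b)) (hval c))
    (mul_mem (mul_mem (hderiv hb) (hval a)) (hval c)))
    (mul_mem (mul_mem (hderiv hc) (hval a)) (hval b))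
  convert hmem using 1
  simp only [chooseKernel, derivative_mul, eval_mul, eval_add]
  ring

end DerivativeDenominator

/-! ### Extra prime factors of the derivative -/

section PrimeFactors

/-- `F` and its derivative are divisible at `v` by the powers of `p` that a product of `k` linear
factors divisible by `p` would give. -/
def HasJetOrder (p : ℤ) (k : ℕ) (F : ℤ[X]) (v : ℤ) : Prop :=
  p ^ k ∣ F.eval v ∧ p ^ (k - 1) ∣ (derivative F).eval v

variable {p v : ℤ}

lemma HasJetOrder.mul {k l : ℕ} {F G : ℤ[X]} (hF : HasJetOrder p k F v)
    (hG : HasJetOrder p l G v) : HasJetOrder p (k + l) (F * G) v := by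
  refine ⟨by rw [eval_mul, pow_add]; exact mul_dvd_mul hF.1 hG.1, ?_⟩
  rw [derivative_mul, eval_add, eval_mul, eval_mul]
  refine dvd_add ?_ ?_
  · exact (pow_dvd_pow p (by lia)).trans (pow_add p (k - 1) l ▸ mul_dvd_mul hF.2 hG.1)
  · exact (pow_dvd_pow p (by lia)).trans (pow_add p k (l - 1) ▸ mul_dvd_mul hF.1 hG.2)

open scoped Classical in
lemma hasJetOrder_prod {ι : Type*} (s : Finset ι) (c : ι → ℤ) :
    HasJetOrder p (s.filter fun i ↦ p ∣ v + c i).card (∏ i ∈ s, (X + C (c i))) v := by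
  induction s using Finset.induction_on with
  | empty => simp [HasJetOrder]
  | insert i s hi ih =>
    rw [Finset.prod_insert hi, Finset.filter_insert]
    split_ifs with hdvd
    · rw [Finset.card_insert_of_notMem (by simp [hi]), add_comm]
      exact HasJetOrder.mul (by simpa [HasJetOrder] using hdvd) ih
    · rw [← zero_add (Finset.card _)]
      exact HasJetOrder.mul (by simp [HasJetOrder]) ih

lemma card_filter_dvd_sub (hp : 0 < p) (c : ℤ) (m : ℕ) :
    (((Finset.range m).filter fun j : ℕ ↦ p ∣ c - j).card : ℤ) = c / p - (c - m) / p := by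
  have hinj (s : Set ℕ) : Set.InjOn (fun j : ℕ ↦ c - (j : ℤ)) s := fun i _ j _ h ↦ by
    simpa using h
  have himage : (Finset.range m).image (fun j : ℕ ↦ c - (j : ℤ)) = Finset.Ioc (c - m) c := by
    ext y
    simp only [Finset.mem_image, Finset.mem_range, Finset.mem_Ioc]
    exact ⟨fun ⟨j, hj, h⟩ ↦ by lia, fun h ↦ ⟨(c - y).toNat, by lia, by lia⟩⟩
  have hcard := Int.Ioc_filter_dvd_card (c - m) c hp
  rw [← himage, Finset.filter_image, Finset.card_image_of_injOn (hinj _)] at hcard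
  lift p to ℕ using hp.le
  simp only [Int.cast_natCast, Rat.floor_intCast_div_natCast] at hcard
  rw [hcard, max_eq_left]
  exact sub_nonneg.2 (Int.ediv_le_ediv hp (by lia))

lemma ediv_eq_of_mul_le_of_lt_mul (hp : 0 < p) {a q : ℤ} (hle : q * p ≤ a)
    (hlt : a < (q + 1) * p) : a / p = q :=
  le_antisymm (Int.lt_add_one_iff.1 ((Int.ediv_lt_iff_lt_mul hp).2 hlt))
    ((Int.le_ediv_iff_mul_le hp).2 hle)

/-- The number of factors divisible by `p` in the numerator `(v + c) ⋯ (v - c + 1)` of the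
binomial coefficient `(v + c).choose (2 * c)`, minus the number of factors divisible by `p` in its
denominator `(2 * c)!`. -/
def floorExcess (p v c : ℤ) : ℤ := (v + c) / p - (v - c) / p - 2 * c / p

lemma floorExcess_nonneg (hp : 0 < p) (v c : ℤ) : 0 ≤ floorExcess p v c := by
  have h : (v - c) / p + 2 * c / p ≤ (v + c) / p := by
    rw [Int.le_ediv_iff_mul_le hp, add_mul]
    linarith [Int.ediv_mul_le (v - c) hp.ne', Int.ediv_mul_le (2 * c) hp.ne']
  rw [floorExcess]
  lia

lemma floorExcess_add_mul (hp : 0 < p) (v c m : ℤ) :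
    floorExcess p v (c + m * p) = floorExcess p v c := by
  have h₁ : v + (c + m * p) = v + c + m * p := by ring
  have h₂ : v - (c + m * p) = v - c + -m * p := by ring
  have h₃ : 2 * (c + m * p) = 2 * c + 2 * m * p := by ring
  simp only [floorExcess, h₁, h₂, h₃, Int.add_mul_ediv_right _ _ hp.ne']
  ring

-- If both excesses vanish, the residue of `v` mod `p` is confined to two disjoint intervals.
lemma one_le_floorExcess_add_floorExcess (hp : 0 < p) (v : ℤ) {c c' : ℤ} (i j : ℤ)
    (hc : 2 * c / p = 2 * i) (hc' : 2 * c' / p = 2 * j + 1) (hadd : (i + j + 1) * p ≤ c + c') :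
    1 ≤ floorExcess p v c + floorExcess p v c' := by
  have hnonneg := floorExcess_nonneg hp v c
  have hnonneg' := floorExcess_nonneg hp v c'
  by_contra! hlt
  simp only [floorExcess, hc, hc'] at hlt hnonneg hnonneg'
  set s := (v - c) / p
  set s' := (v - c') / p
  have hle : s * p ≤ v - c := Int.ediv_mul_le _ hp.ne'
  have hle' : s' * p ≤ v - c' := Int.ediv_mul_le _ hp.ne'
  have hlt₁ : v + c < (s + 2 * i + 1) * p := by
    rw [← Int.ediv_lt_iff_lt_mul hp]
    lia
  have hlt₂ : v + c' < (s' + 2 * j + 2) * p := by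
    rw [← Int.ediv_lt_iff_lt_mul hp]
    lia
  have h₁ : s - s' < j + 1 - i := lt_of_mul_lt_mul_right (by linarith) hp.le
  have h₂ : s' - s < i - j := lt_of_mul_lt_mul_right (by linarith) hp.le
  lia

/-- The windows `(α, β)`, in units of `1 / 168`, such that the excesses of `3n`, `5n` and `7n` add
up to at least one for every `v` as soon as `α / 168 ≤ n / p < β / 168` modulo `1`. -/
def excessWindows : Finset (ℕ × ℕ) :=
  {(14, 36), (42, 60), (63, 72), (98, 120), (126, 144), (147, 156)}

lemma one_le_floorExcess_sum_of_mem (hp : 0 < p) (v : ℤ) {r : ℤ} {w : ℕ × ℕ}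
    (hw : w ∈ excessWindows) (hle : w.1 * p ≤ 168 * r) (hlt : 168 * r < w.2 * p) :
    1 ≤ floorExcess p v (3 * r) + floorExcess p v (5 * r) + floorExcess p v (7 * r) := by
  have h₃ := floorExcess_nonneg hp v (3 * r)
  have h₅ := floorExcess_nonneg hp v (5 * r)
  have h₇ := floorExcess_nonneg hp v (7 * r)
  have pair (a b i j : ℤ) (hi : 2 * i * p ≤ 2 * (a * r)) (hi' : 2 * (a * r) < (2 * i + 1) * p)
      (hj : (2 * j + 1) * p ≤ 2 * (b * r)) (hj' : 2 * (b * r) < (2 * j + 2) * p)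
      (hadd : (i + j + 1) * p ≤ a * r + b * r) :
      1 ≤ floorExcess p v (a * r) + floorExcess p v (b * r) :=
    one_le_floorExcess_add_floorExcess hp v i j (ediv_eq_of_mul_le_of_lt_mul hp hi hi')
      (ediv_eq_of_mul_le_of_lt_mul hp hj (by rwa [add_assoc])) hadd
  simp only [excessWindows, Finset.mem_insert, Finset.mem_singleton] at hw
  rcases hw with rfl | rfl | rfl | rfl | rfl | rfl
  · have := pair 5 7 0 0
    have := pair 3 7 0 0
    have := pair 3 5 0 0
    have := pair 7 5 1 0
    have := pair 7 3 1 0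
    omega
  · have := pair 5 3 1 0
    have := pair 7 3 2 0
    have := pair 7 5 2 1
    omega
  · have := pair 3 5 1 1
    have := pair 3 7 1 2
    omega
  · have := pair 7 5 4 2
    have := pair 7 3 4 1
    have := pair 5 3 3 1
    have := pair 5 7 3 4
    have := pair 3 7 2 4
    omega
  · have := pair 3 5 2 3
    have := pair 3 7 2 5
    have := pair 5 7 4 5
    omega
  · have := pair 5 3 4 2
    have := pair 7 3 6 2
    omega

/-- The numerator `(X + a) (X + a - 1) ⋯ (X - a + 1)` of `centeredChoose a`. -/
noncomputable def centeredNumerator (a : ℕ) : ℤ[X] :=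
  ∏ j ∈ Finset.range (2 * a), (X + C ((a : ℤ) - j))

lemma centeredChoose_eq_C_mul_map (a : ℕ) : centeredChoose a =
    C ((((2 * a).factorial : ℝ))⁻¹) * (centeredNumerator a).map (Int.castRingHom ℝ) := by
  simp [centeredChoose, centeredNumerator, Polynomial.map_prod]

lemma hasJetOrder_centeredNumerator (hp : 0 < p) (a : ℕ) (v : ℤ) :
    ∃ k : ℕ, (k : ℤ) = floorExcess p v a + 2 * a / p ∧
      HasJetOrder p k (centeredNumerator a) v := by
  classical
  refine ⟨_, ?_, hasJetOrder_prod (Finset.range (2 * a)) fun j : ℕ ↦ (a : ℤ) - j⟩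
  simp_rw [← add_sub_assoc]
  rw [card_filter_dvd_sub hp, floorExcess, sub_add_cancel]
  push_cast
  ring_nf

lemma padicValNat_factorial_of_lt_sq {p m : ℕ} [Fact p.Prime] (h : m < p ^ 2) :
    padicValNat p m.factorial = m / p := by
  simp [padicValNat_factorial (b := 2) (Nat.log_lt_of_lt_pow' two_ne_zero h)]

lemma dvd_of_pow_padicValNat_succ_dvd_mul {p H : ℕ} [hp : Fact p.Prime] (hH : H ≠ 0) {z : ℤ}
    (h : (p : ℤ) ^ (padicValNat p H + 1) ∣ z * H) : (p : ℤ) ∣ z := by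
  rcases eq_or_ne z 0 with rfl | hz
  · exact dvd_zero _
  have hH' : (H : ℤ) ≠ 0 := mod_cast hH
  rw [padicValInt_dvd_iff, padicValInt.mul hz hH', padicValInt.of_nat] at h
  have hval := h.resolve_left (mul_ne_zero hz hH')
  simpa using (padicValInt_dvd_iff 1 z).2 (Or.inr (by lia))

lemma prime_dvd_of_one_le_floorExcess {p a b c d : ℕ} (hp : p.Prime) (ha : 2 * a < p ^ 2)
    (hb : 2 * b < p ^ 2) (hc : 2 * c < p ^ 2) {v : ℕ}
    (hexcess : 1 ≤ floorExcess p v a + floorExcess p v b + floorExcess p v c) (hpd : p ∣ d) {z : ℤ}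
    (hz : z = (d : ℝ) * (derivative (chooseKernel a b c)).eval (v : ℝ)) : (p : ℤ) ∣ z := by
  have : Fact p.Prime := ⟨hp⟩
  set H := (2 * a).factorial * (2 * b).factorial * (2 * c).factorial with hH
  set F := centeredNumerator a * centeredNumerator b * centeredNumerator c with hF
  have hfac (m : ℕ) : m.factorial ≠ 0 := m.factorial_ne_zero
  have hH0 : H ≠ 0 := mul_ne_zero (mul_ne_zero (hfac _) (hfac _)) (hfac _)
  have hpos : (0 : ℤ) < p := mod_cast hp.pos
  obtain ⟨k₁, hk₁, h₁⟩ := hasJetOrder_centeredNumerator hpos a v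
  obtain ⟨k₂, hk₂, h₂⟩ := hasJetOrder_centeredNumerator hpos b v
  obtain ⟨k₃, hk₃, h₃⟩ := hasJetOrder_centeredNumerator hpos c v
  have hval : padicValNat p H + 1 ≤ k₁ + k₂ + k₃ := by
    rw [hH, padicValNat.mul (mul_ne_zero (hfac _) (hfac _)) (hfac _),
      padicValNat.mul (hfac _) (hfac _), padicValNat_factorial_of_lt_sq ha,
      padicValNat_factorial_of_lt_sq hb, padicValNat_factorial_of_lt_sq hc]
    zify
    lia
  have hker : chooseKernel a b c = C ((H : ℝ)⁻¹) * F.map (Int.castRingHom ℝ) := by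
    simp only [chooseKernel, centeredChoose_eq_C_mul_map, hF, hH, Polynomial.map_mul, Nat.cast_mul,
      mul_inv, C_mul]
    ring
  have hzH : z * (H : ℤ) = d * (derivative F).eval (v : ℤ) := by
    have hH0' : (H : ℝ) ≠ 0 := mod_cast hH0
    have heval := eval_intCast_map (Int.castRingHom ℝ) (derivative F) (v : ℤ)
    rw [hker, derivative_C_mul, derivative_map, eval_mul, eval_C] at hz
    simp only [eq_intCast, Int.cast_natCast] at heval
    rw [heval] at hz
    have : (z : ℝ) * H = d * ((derivative F).eval (v : ℤ) : ℤ) := by rw [hz]; field_simp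
    exact_mod_cast this
  refine dvd_of_pow_padicValNat_succ_dvd_mul hH0 ?_
  rw [hzH, pow_succ']
  exact mul_dvd_mul (mod_cast hpd)
    ((pow_dvd_pow _ (by lia)).trans ((h₁.mul h₂).mul h₃).2)

end PrimeFactors

/-! ### The common denominator -/

section CommonDenominator

/-- The primes `p` for which `n / p` lies in the window `w` shifted by the integer `k`. -/
def windowPrimes (n : ℕ) (i : ℕ × ℕ × ℕ) : Finset ℕ :=
  (Finset.Ioc (168 * n / (168 * i.1 + i.2.2)) (168 * n / (168 * i.1 + i.2.1))).filter Nat.Prime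

/-- The primes contributing an extra factor: those of the windows shifted by `k < M`. -/
def excessPrimes (n M : ℕ) : Finset ℕ :=
  (Finset.range M ×ˢ excessWindows).biUnion (windowPrimes n)

/-- A common denominator of the values of the derivative of `chooseKernel (3n) (5n) (7n)` at
natural numbers, valid when `M` is small compared to `√n`. -/
noncomputable def kernelDenominator (n M : ℕ) : ℝ :=
  (Nat.lcmUpto (14 * n) : ℝ) / ∏ p ∈ excessPrimes n M, (p : ℝ)

variable {n M p : ℕ}

lemma lt_of_mem_excessWindows {w : ℕ × ℕ} (hw : w ∈ excessWindows) :
    14 ≤ w.1 ∧ w.1 < w.2 ∧ w.2 < 168 := by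
  revert w
  decide

lemma mem_windowPrimes {i : ℕ × ℕ × ℕ} (hi : i.2 ∈ excessWindows) :
    p ∈ windowPrimes n i ↔
      ((168 * i.1 + i.2.1) * p ≤ 168 * n ∧ 168 * n < (168 * i.1 + i.2.2) * p) ∧ p.Prime := by
  have hw := lt_of_mem_excessWindows hi
  rw [windowPrimes, Finset.mem_filter, Finset.mem_Ioc, Nat.le_div_iff_mul_le (by lia),
    Nat.div_lt_iff_lt_mul (by lia), mul_comm p, mul_comm p, and_comm (a := 168 * n < _)]

lemma pairwiseDisjoint_windowPrimes (n M : ℕ) :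
    (↑(Finset.range M ×ˢ excessWindows) : Set (ℕ × ℕ × ℕ)).PairwiseDisjoint (windowPrimes n) := by
  rintro ⟨k, w⟩ hi ⟨l, w'⟩ hj hne
  have hw := (Finset.mem_product.1 hi).2
  have hw' := (Finset.mem_product.1 hj).2
  refine Finset.disjoint_left.2 fun p hp hp' ↦ hne ?_
  obtain ⟨⟨h₁, h₂⟩, -⟩ := (mem_windowPrimes hw).1 hp
  obtain ⟨⟨h₃, h₄⟩, -⟩ := (mem_windowPrimes hw').1 hp'
  have hlt : 168 * k + w.1 < 168 * l + w'.2 := lt_of_mul_lt_mul_right (h₁.trans_lt h₄) p.zero_le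
  have hlt' : 168 * l + w'.1 < 168 * k + w.2 := lt_of_mul_lt_mul_right (h₃.trans_lt h₂) p.zero_le
  have hb := lt_of_mem_excessWindows hw
  have hb' := lt_of_mem_excessWindows hw'
  obtain rfl : k = l := by lia
  have hcross : ∀ w ∈ excessWindows, ∀ w' ∈ excessWindows, w.1 < w'.2 → w'.1 < w.2 → w = w' := by
    decide
  rw [hcross w hw w' hw' (by lia) (by lia)]

lemma exists_of_mem_excessPrimes (hp : p ∈ excessPrimes n M) : ∃ k < M, ∃ w ∈ excessWindows,
    ((168 * k + w.1) * p ≤ 168 * n ∧ 168 * n < (168 * k + w.2) * p) ∧ p.Prime := by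
  obtain ⟨⟨k, w⟩, hi, hpi⟩ := Finset.mem_biUnion.1 hp
  obtain ⟨hk, hw⟩ := Finset.mem_product.1 hi
  exact ⟨k, Finset.mem_range.1 hk, w, hw, (mem_windowPrimes hw).1 hpi⟩

lemma prime_of_mem_excessPrimes (hp : p ∈ excessPrimes n M) : p.Prime :=
  let ⟨_, _, _, _, _, hprime⟩ := exists_of_mem_excessPrimes hp
  hprime

lemma dvd_lcmUpto_of_mem_excessPrimes (hp : p ∈ excessPrimes n M) :
    p ∣ Nat.lcmUpto (14 * n) := by
  obtain ⟨k, -, w, hw, ⟨hle, -⟩, hprime⟩ := exists_of_mem_excessPrimes hp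
  have h14 : 14 * p ≤ (168 * k + w.1) * p :=
    Nat.mul_le_mul_right _ (by have := lt_of_mem_excessWindows hw; lia)
  exact dvd_lcmUpto hprime.pos (by lia)

lemma fourteen_mul_lt_sq_of_mem_excessPrimes (hM : 14 * M ^ 2 ≤ n) (hp : p ∈ excessPrimes n M) :
    14 * n < p ^ 2 := by
  obtain ⟨k, hk, w, hw, ⟨-, hlt⟩, -⟩ := exists_of_mem_excessPrimes hp
  have hMp : n < M * p := by
    have := lt_of_mem_excessWindows hw
    have : (168 * k + w.2) * p ≤ 168 * M * p := Nat.mul_le_mul_right _ (by lia)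
    lia
  by_contra! hle
  have : M ^ 2 * p ^ 2 ≤ n * n :=
    calc M ^ 2 * p ^ 2 ≤ M ^ 2 * (14 * n) := Nat.mul_le_mul_left _ hle
      _ = 14 * M ^ 2 * n := by ring
      _ ≤ n * n := Nat.mul_le_mul_right _ hM
  nlinarith

lemma one_le_floorExcess_sum_of_mem_excessPrimes (hp : p ∈ excessPrimes n M) (v : ℤ) :
    1 ≤ floorExcess p v (3 * n : ℕ) + floorExcess p v (5 * n : ℕ) +
      floorExcess p v (7 * n : ℕ) := by
  obtain ⟨k, -, w, hw, ⟨hle, hlt⟩, hprime⟩ := exists_of_mem_excessPrimes hp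
  have hpos : (0 : ℤ) < p := mod_cast hprime.pos
  zify at hle hlt
  have hsum := one_le_floorExcess_sum_of_mem hpos v hw (r := n - k * p) (by linarith)
    (by linarith)
  have hshift (c : ℤ) : c * n = c * (n - k * p) + c * k * p := by ring
  push_cast
  rw [hshift 3, hshift 5, hshift 7]
  simpa only [floorExcess_add_mul hpos] using hsum

lemma prod_excessPrimes_ne_zero : (∏ p ∈ excessPrimes n M, (p : ℝ)) ≠ 0 :=
  Finset.prod_ne_zero_iff.2 fun _ hp ↦ mod_cast (prime_of_mem_excessPrimes hp).ne_zero

lemma kernelDenominator_pos (n M : ℕ) : 0 < kernelDenominator n M :=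
  div_pos (mod_cast Nat.lcmUpto_pos _)
    (Finset.prod_pos fun _ hp ↦ mod_cast (prime_of_mem_excessPrimes hp).pos)

lemma div_prod_excessPrimes_mem {z : ℤ} (hz : ∀ p ∈ excessPrimes n M, (p : ℤ) ∣ z) :
    (z : ℝ) / ∏ p ∈ excessPrimes n M, (p : ℝ) ∈ integerSubring := by
  obtain ⟨w, rfl⟩ : (∏ p ∈ excessPrimes n M, (p : ℤ)) ∣ z :=
    Finset.prod_dvd_of_coprime (fun p hp q hq hpq ↦ Nat.isCoprime_iff_coprime.2
      ((Nat.coprime_primes (prime_of_mem_excessPrimes hp) (prime_of_mem_excessPrimes hq)).2 hpq)) hz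
  push_cast
  rw [mul_div_cancel_left₀ _ prod_excessPrimes_ne_zero]
  exact intCast_mem _ w

lemma kernelDenominator_mem (n M : ℕ) : kernelDenominator n M ∈ integerSubring :=
  div_prod_excessPrimes_mem (z := Nat.lcmUpto (14 * n)) fun _ hp ↦
    mod_cast dvd_lcmUpto_of_mem_excessPrimes hp

lemma kernelDenominator_mul_eval_derivative_mem (hM : 14 * M ^ 2 ≤ n) (v : ℕ) :
    kernelDenominator n M * (derivative (chooseKernel (3 * n) (5 * n) (7 * n))).eval (v : ℝ) ∈
      integerSubring := by
  obtain ⟨z, hz⟩ := mem_integerSubring.1 (lcmUpto_mul_eval_derivative_chooseKernel_mem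
    (a := 3 * n) (b := 5 * n) (c := 7 * n) (n := 14 * n) (by lia) (by lia) (by lia) v)
  rw [kernelDenominator, div_mul_eq_mul_div, ← hz]
  refine div_prod_excessPrimes_mem fun p hp ↦ ?_
  have hsq := fourteen_mul_lt_sq_of_mem_excessPrimes hM hp
  exact prime_dvd_of_one_le_floorExcess (prime_of_mem_excessPrimes hp) (by lia) (by lia) (by lia)
    (one_le_floorExcess_sum_of_mem_excessPrimes hp v) (dvd_lcmUpto_of_mem_excessPrimes hp) hz

lemma sum_log_windowPrimes {i : ℕ × ℕ × ℕ} (hi : i.2 ∈ excessWindows) :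
    ∑ p ∈ windowPrimes n i, Real.log p =
      Chebyshev.theta (168 * n / (168 * i.1 + i.2.1)) -
        Chebyshev.theta (168 * n / (168 * i.1 + i.2.2)) := by
  have hw := lt_of_mem_excessWindows hi
  have hfloor (a : ℕ) : ⌊(168 * n / (168 * i.1 + a) : ℝ)⌋₊ = 168 * n / (168 * i.1 + a) := by
    rw [← Nat.floor_div_eq_div (K := ℝ)]
    push_cast
    rfl
  have hle : 168 * n / (168 * i.1 + i.2.2) ≤ 168 * n / (168 * i.1 + i.2.1) :=
    Nat.div_le_div_left (by lia) (by lia)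
  rw [windowPrimes, Chebyshev.theta, Chebyshev.theta, hfloor, hfloor, eq_sub_iff_add_eq, add_comm,
    ← Finset.sum_union, ← Finset.filter_union, Finset.Ioc_union_Ioc_eq_Ioc (Nat.zero_le _) hle]
  exact Finset.disjoint_filter_filter (Finset.Ioc_disjoint_Ioc_of_le le_rfl)

lemma log_kernelDenominator (n M : ℕ) : Real.log (kernelDenominator n M) =
    Chebyshev.psi (14 * n : ℕ) - ∑ i ∈ Finset.range M ×ˢ excessWindows,
      (Chebyshev.theta (168 * n / (168 * i.1 + i.2.1)) -
        Chebyshev.theta (168 * n / (168 * i.1 + i.2.2))) := by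
  rw [kernelDenominator, Real.log_div (mod_cast Nat.lcmUpto_ne_zero _) prod_excessPrimes_ne_zero,
    Chebyshev.psi_eq_log_lcmUpto,
    Real.log_prod fun _ hp ↦ mod_cast (prime_of_mem_excessPrimes hp).ne_zero, excessPrimes,
    Finset.sum_biUnion (pairwiseDisjoint_windowPrimes n M)]
  exact congrArg _ (Finset.sum_congr rfl fun i hi ↦
    sum_log_windowPrimes (Finset.mem_product.1 hi).2)

end CommonDenominator

/-! ### A contour integral for the jet sum -/

section LineWeight

/-- The weight `1 / cosh (π y) ^ 2` on vertical lines, written through the sigmoid so that its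
Fourier transform becomes an Euler beta integral. -/
noncomputable def lineWeight (y : ℝ) : ℝ :=
  4 * (Real.sigmoid (2 * Real.pi * y) * Real.sigmoid (-(2 * Real.pi * y)))

lemma lineWeight_pos (y : ℝ) : 0 < lineWeight y :=
  mul_pos four_pos (mul_pos (Real.sigmoid_pos _) (Real.sigmoid_pos _))

lemma lineWeight_le (y : ℝ) : lineWeight y ≤ 4 * Real.exp (-(2 * Real.pi * |y|)) := by
  have sigmoid_le_exp (u : ℝ) : Real.sigmoid u ≤ Real.exp u := by
    rw [← neg_neg u, ← Real.sigmoid_mul_rexp_neg (-u)]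
    exact mul_le_of_le_one_left (Real.exp_pos _).le (Real.sigmoid_le_one _)
  unfold lineWeight
  gcongr
  rcases abs_cases y with ⟨h, -⟩ | ⟨h, -⟩ <;> rw [h]
  · exact (mul_le_of_le_one_left (Real.sigmoid_nonneg _) (Real.sigmoid_le_one _)).trans
      (sigmoid_le_exp _)
  · rw [mul_neg, neg_neg]
    exact (mul_le_of_le_one_right (Real.sigmoid_nonneg _) (Real.sigmoid_le_one _)).trans
      (sigmoid_le_exp _)

@[fun_prop]
lemma continuous_lineWeight : Continuous lineWeight := by
  have := continuous_sigmoid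
  unfold lineWeight
  fun_prop

lemma integrable_one_add_abs_pow_mul_exp_neg {c : ℝ} (hc : 0 < c) (n : ℕ) :
    Integrable fun y : ℝ ↦ (1 + |y|) ^ n * Real.exp (-(c * |y|)) := by
  have hdom : Integrable fun y : ℝ ↦
      (n + 2).factorial / c ^ (n + 2) * Real.exp c * (1 + ‖y‖) ^ (-2 : ℝ) :=
    (integrable_one_add_norm (by norm_num)).const_mul _
  refine hdom.mono' (by fun_prop) (ae_of_all _ fun y ↦ ?_)
  have hbase : 0 < 1 + |y| := by positivity
  have hpow := Real.pow_div_factorial_le_exp (c * (1 + |y|)) (by positivity) (n + 2)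
  rw [div_le_iff₀' (by positivity), mul_pow, ← le_div_iff₀' (by positivity)] at hpow
  rw [Real.norm_of_nonneg (by positivity), Real.norm_eq_abs, Real.rpow_neg hbase.le,
    Real.rpow_two, ← div_eq_mul_inv, le_div_iff₀ (by positivity)]
  calc (1 + |y|) ^ n * Real.exp (-(c * |y|)) * (1 + |y|) ^ 2
      = (1 + |y|) ^ (n + 2) * Real.exp (-(c * |y|)) := by ring
    _ ≤ (n + 2).factorial * Real.exp (c * (1 + |y|)) / c ^ (n + 2) *
        Real.exp (-(c * |y|)) := by gcongr
    _ = (n + 2).factorial / c ^ (n + 2) *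
        (Real.exp (c * (1 + |y|)) * Real.exp (-(c * |y|))) := by ring
    _ = (n + 2).factorial / c ^ (n + 2) * Real.exp c := by
      rw [← Real.exp_add]
      ring_nf

lemma integrable_one_add_abs_pow_mul_lineWeight (n : ℕ) :
    Integrable fun y : ℝ ↦ (1 + |y|) ^ n * lineWeight y := by
  have hdom := (integrable_one_add_abs_pow_mul_exp_neg Real.two_pi_pos n).const_mul 4
  refine hdom.mono' (by fun_prop) (ae_of_all _ fun y ↦ ?_)
  have hw := lineWeight_pos y
  rw [Real.norm_of_nonneg (by positivity), mul_left_comm]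
  gcongr
  exact lineWeight_le y

lemma log_sigmoid_sub_log_sigmoid_neg (u : ℝ) :
    Real.log (Real.sigmoid u) - Real.log (Real.sigmoid (-u)) = u := by
  rw [← Real.sigmoid_mul_rexp_neg, Real.log_mul (Real.sigmoid_pos u).ne' (Real.exp_pos _).ne',
    Real.log_exp]
  ring

lemma betaIntegral_one_add_mul_I (s : ℝ) :
    Complex.betaIntegral (1 + s * Complex.I) (1 - s * Complex.I) = (Real.pi / 2) *
      ∫ y : ℝ, (lineWeight y : ℂ) * Complex.exp (2 * Real.pi * s * y * Complex.I) := by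
  have hderiv (y : ℝ) : HasDerivAt (fun y : ℝ ↦ Real.sigmoid (2 * Real.pi * y))
      (Real.pi / 2 * lineWeight y) y := by
    have hlin := (hasDerivAt_id y).const_mul (2 * Real.pi)
    refine ((Real.hasDerivAt_sigmoid _).comp y hlin).congr_deriv ?_
    rw [lineWeight, Real.sigmoid_neg, id]
    ring
  have hinj : Function.Injective fun y : ℝ ↦ Real.sigmoid (2 * Real.pi * y) :=
    Real.sigmoid_injective.comp (mul_right_injective₀ (by positivity))
  have himage : (fun y : ℝ ↦ Real.sigmoid (2 * Real.pi * y)) '' univ = Ioo 0 1 := by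
    rw [image_univ, ← Real.range_sigmoid]
    exact (mul_left_surjective₀ (by positivity)).range_comp Real.sigmoid
  rw [Complex.betaIntegral, intervalIntegral.integral_of_le zero_le_one,
    integral_Ioc_eq_integral_Ioo, ← himage, integral_image_eq_integral_abs_deriv_smul .univ
      (fun y _ ↦ (hderiv y).hasDerivWithinAt) hinj.injOn, setIntegral_univ, ← integral_const_mul]
  congr 1 with y
  have hσ := Real.sigmoid_pos (2 * Real.pi * y)
  have hσ' := Real.sigmoid_pos (-(2 * Real.pi * y))
  have hlog : (Real.log (Real.sigmoid (2 * Real.pi * y)) : ℂ) -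
      Real.log (Real.sigmoid (-(2 * Real.pi * y))) = 2 * Real.pi * y := by
    exact_mod_cast log_sigmoid_sub_log_sigmoid_neg (2 * Real.pi * y)
  have hneg : (1 : ℂ) - (Real.sigmoid (2 * Real.pi * y) : ℂ) =
      (Real.sigmoid (-(2 * Real.pi * y)) : ℝ) := by
    rw [Real.sigmoid_neg]
    push_cast
    ring
  rw [hneg, Complex.cpow_def_of_ne_zero (by exact_mod_cast hσ.ne'),
    Complex.cpow_def_of_ne_zero (by exact_mod_cast hσ'.ne'), ← Complex.ofReal_log hσ.le,
    ← Complex.ofReal_log hσ'.le, ← Complex.exp_add, Complex.real_smul,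
    abs_of_pos (mul_pos (by positivity) (lineWeight_pos y))]
  push_cast
  rw [mul_assoc]
  congr 3
  linear_combination (s * Complex.I) * hlog

lemma integral_lineWeight_mul_exp {s : ℝ} (hs : s ≠ 0) :
    ∫ y : ℝ, (lineWeight y : ℂ) * Complex.exp (2 * Real.pi * s * y * Complex.I) =
      2 * s / Real.sinh (Real.pi * s) := by
  have hgamma := Complex.Gamma_mul_Gamma_eq_betaIntegral (s := 1 + s * Complex.I)
    (t := 1 - s * Complex.I) (by simp) (by simp)
  have hsum : (1 + s * Complex.I) + (1 - s * Complex.I) = 2 := by ring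
  have hsin : Complex.sin (Real.pi * (s * Complex.I)) =
      Real.sinh (Real.pi * s) * Complex.I := by
    rw [← mul_assoc, Complex.sin_mul_I]
    push_cast
    rfl
  rw [hsum, betaIntegral_one_add_mul_I, Complex.Gamma_ofNat_eq_factorial, add_comm (1 : ℂ),
    Complex.Gamma_add_one _ (by simpa using hs), mul_assoc, Complex.Gamma_mul_Gamma_one_sub,
    hsin] at hgamma
  have hsinh : (Real.sinh (Real.pi * s) : ℂ) ≠ 0 := by
    exact_mod_cast Real.sinh_ne_zero.mpr (mul_ne_zero Real.pi_ne_zero hs)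
  have hpi : (Real.pi : ℂ) ≠ 0 := by exact_mod_cast Real.pi_ne_zero
  have hI := Complex.I_ne_zero
  simp only [Nat.factorial, Nat.succ_eq_add_one, zero_add, mul_one, Nat.cast_one, one_mul]
    at hgamma
  field_simp at hgamma ⊢
  linear_combination -hgamma

end LineWeight

section LineTransform

variable (σ t : ℝ) (T U : ℝ[X])

/-- The weighted Laplace-type integral of a polynomial along the vertical line `re z = σ`. -/
noncomputable def lineTransform : ℂ :=
  ∫ y : ℝ, aeval (σ + y * Complex.I) T * Complex.exp (t * (σ + y * Complex.I)) * lineWeight y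

variable {T} in
lemma exists_norm_aeval_line_le : ∃ B : ℝ, 0 ≤ B ∧ ∀ σ y : ℝ,
    ‖aeval (σ + y * Complex.I) T‖ ≤ B * (1 + |σ|) ^ T.natDegree * (1 + |y|) ^ T.natDegree := by
  refine ⟨∑ j ∈ Finset.range (T.natDegree + 1), |T.coeff j|, by positivity, fun σ y ↦ ?_⟩
  have hnorm : ‖(σ + y * Complex.I : ℂ)‖ ≤ (1 + |σ|) * (1 + |y|) := by
    refine (norm_add_le _ _).trans ?_
    simp only [norm_mul, Complex.norm_I, mul_one, Complex.norm_real, Real.norm_eq_abs]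
    nlinarith [mul_nonneg (abs_nonneg σ) (abs_nonneg y)]
  have hone : 1 ≤ (1 + |σ|) * (1 + |y|) := by
    nlinarith [abs_nonneg σ, abs_nonneg y, mul_nonneg (abs_nonneg σ) (abs_nonneg y)]
  rw [aeval_eq_sum_range, mul_assoc, ← mul_pow, Finset.sum_mul]
  refine (norm_sum_le _ _).trans (Finset.sum_le_sum fun j hj ↦ ?_)
  rw [norm_smul, norm_pow, Real.norm_eq_abs]
  gcongr
  exact (pow_le_pow_left₀ (norm_nonneg _) hnorm j).trans
    (pow_le_pow_right₀ hone (Finset.mem_range_succ_iff.mp hj))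

lemma aestronglyMeasurable_lineTransform : AEStronglyMeasurable fun y : ℝ ↦
    aeval (σ + y * Complex.I) T * Complex.exp (t * (σ + y * Complex.I)) * lineWeight y := by
  apply Continuous.aestronglyMeasurable
  have := T.continuous_aeval (A := ℂ)
  fun_prop

lemma norm_lineTransform_integrand (y : ℝ) :
    ‖aeval (σ + y * Complex.I) T * Complex.exp (t * (σ + y * Complex.I)) * lineWeight y‖ =
      ‖aeval (σ + y * Complex.I) T‖ * Real.exp (t * σ) * lineWeight y := by
  rw [norm_mul, norm_mul, Complex.norm_exp, Complex.norm_real,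
    Real.norm_of_nonneg (lineWeight_pos y).le]
  simp

variable {T} in
lemma exists_norm_lineTransform_integrand_le : ∃ B : ℝ, 0 ≤ B ∧ ∀ σ t y : ℝ,
    ‖aeval (σ + y * Complex.I) T * Complex.exp (t * (σ + y * Complex.I)) * lineWeight y‖ ≤
      B * (1 + |σ|) ^ T.natDegree * Real.exp (t * σ) *
        ((1 + |y|) ^ T.natDegree * lineWeight y) := by
  obtain ⟨B, hB, hbound⟩ := exists_norm_aeval_line_le (T := T)
  refine ⟨B, hB, fun σ t y ↦ ?_⟩
  have hw := lineWeight_pos y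
  rw [norm_lineTransform_integrand]
  calc ‖aeval (σ + y * Complex.I) T‖ * Real.exp (t * σ) * lineWeight y
      ≤ B * (1 + |σ|) ^ T.natDegree * (1 + |y|) ^ T.natDegree * Real.exp (t * σ) *
        lineWeight y := by
        gcongr
        exact hbound σ y
    _ = _ := by ring

lemma integrable_lineTransform : Integrable fun y : ℝ ↦
    aeval (σ + y * Complex.I) T * Complex.exp (t * (σ + y * Complex.I)) * lineWeight y := by
  obtain ⟨B, -, hbound⟩ := exists_norm_lineTransform_integrand_le (T := T)
  exact ((integrable_one_add_abs_pow_mul_lineWeight _).const_mul _).mono'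
    (aestronglyMeasurable_lineTransform σ t T) (ae_of_all _ (hbound σ t))

lemma lineTransform_add :
    lineTransform σ t (T + U) = lineTransform σ t T + lineTransform σ t U := by
  rw [lineTransform, lineTransform, lineTransform,
    ← integral_add (integrable_lineTransform σ t T) (integrable_lineTransform σ t U)]
  congr 1 with y
  rw [map_add]
  ring

lemma hasDerivAt_lineTransform :
    HasDerivAt (fun t ↦ lineTransform σ t T) (lineTransform σ t (X * T)) t := by
  obtain ⟨B, hB, hbound⟩ := exists_norm_lineTransform_integrand_le (T := X * T)
  refine (hasDerivAt_integral_of_dominated_loc_of_deriv_le (Metric.ball_mem_nhds t one_pos)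
    (bound := fun y ↦ B * (1 + |σ|) ^ (X * T).natDegree * Real.exp ((|t| + 1) * |σ|) *
      ((1 + |y|) ^ (X * T).natDegree * lineWeight y))
    (Eventually.of_forall fun s ↦ aestronglyMeasurable_lineTransform σ s T)
    (integrable_lineTransform σ t T) (aestronglyMeasurable_lineTransform σ t (X * T))
    (ae_of_all _ fun y s hs ↦ (hbound σ s y).trans ?_)
    ((integrable_one_add_abs_pow_mul_lineWeight _).const_mul _)
    (ae_of_all _ fun y s _ ↦ ?_)).2
  · have hs : |s| ≤ |t| + 1 := by
      rw [Metric.mem_ball, Real.dist_eq] at hs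
      linarith [abs_sub_abs_le_abs_sub s t]
    have hsσ : s * σ ≤ (|t| + 1) * |σ| := by
      calc s * σ ≤ |s| * |σ| := (le_abs_self _).trans (abs_mul s σ).le
        _ ≤ (|t| + 1) * |σ| := by gcongr
    have hw := lineWeight_pos y
    gcongr
  · have hlin : HasDerivAt (fun s : ℝ ↦ (s : ℂ) * (σ + y * Complex.I)) (σ + y * Complex.I) s := by
      simpa using (Complex.ofRealCLM.hasDerivAt (x := s)).mul_const (σ + y * Complex.I : ℂ)
    refine (((hlin.cexp).const_mul (aeval (σ + y * Complex.I : ℂ) T)).mul_const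
      (lineWeight y : ℂ)).congr_deriv ?_
    rw [map_mul, aeval_X]
    ring

variable {t}

lemma lineTransform_C_sub (ht : t ≠ 0) (a : ℝ) :
    lineTransform (-(1 / 2)) t (C a) - lineTransform (1 / 2) t (C a) =
      -(2 / Real.pi) * (t * a : ℝ) := by
  have hpi : (Real.pi : ℂ) ≠ 0 := by exact_mod_cast Real.pi_ne_zero
  have hft := integral_lineWeight_mul_exp (s := t / (2 * Real.pi)) (by positivity)
  rw [show Real.pi * (t / (2 * Real.pi)) = t / 2 by field_simp] at hft
  have hline (σ : ℝ) :
      lineTransform σ t (C a) = a * Real.exp (t * σ) * (t / Real.pi / Real.sinh (t / 2)) := by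
    have hratio : (t : ℂ) / Real.pi / Real.sinh (t / 2) =
        2 * (t / (2 * Real.pi) : ℝ) / Real.sinh (t / 2) := by
      push_cast
      field_simp
    rw [hratio, ← hft, ← integral_const_mul]
    unfold lineTransform
    congr 1 with y
    have harg : (t : ℂ) * (σ + y * Complex.I) =
        (t * σ : ℝ) + 2 * Real.pi * (t / (2 * Real.pi) : ℝ) * y * Complex.I := by
      push_cast
      field_simp
    rw [aeval_C, harg, Complex.exp_add, Complex.ofReal_exp, Complex.coe_algebraMap]
    ring
  have hexp : Real.exp (t * -(1 / 2)) - Real.exp (t * (1 / 2)) = -2 * Real.sinh (t / 2) := by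
    rw [Real.sinh_eq]
    ring_nf
  have hsinh : (Real.sinh (t / 2) : ℂ) ≠ 0 := by
    exact_mod_cast Real.sinh_ne_zero.mpr (div_ne_zero ht two_ne_zero)
  rw [hline, hline, ← sub_mul, ← mul_sub, ← Complex.ofReal_sub, hexp]
  push_cast at hsinh ⊢
  field_simp

-- Multiplication of `T` by `X` differentiates both sides in `t`, so the case of constants
-- suffices.
lemma lineTransform_sub_lineTransform (ht : t < 0) :
    lineTransform (-(1 / 2)) t T - lineTransform (1 / 2) t T =
      -(2 / Real.pi) * ((derivative T).eval 0 + t * T.eval 0 : ℝ) := by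
  induction T using Polynomial.induction_on generalizing t with
  | C a => simpa using lineTransform_C_sub ht.ne a
  | add p q hp hq =>
    rw [lineTransform_add, lineTransform_add, add_sub_add_comm, hp ht, hq ht, derivative_add,
      eval_add, eval_add]
    push_cast
    ring
  | monomial n a ih =>
    set T := C a * X ^ n with hT
    have hX : C a * X ^ (n + 1) = X * T := by rw [hT]; ring
    have hleft := (hasDerivAt_lineTransform (-(1 / 2)) t T).sub
      (hasDerivAt_lineTransform (1 / 2) t T)
    have hright : HasDerivAt
        (fun s : ℝ ↦ -(2 / (Real.pi : ℂ)) * ((derivative T).eval 0 + s * T.eval 0 : ℝ))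
        (-(2 / (Real.pi : ℂ)) * (T.eval 0 : ℝ)) t := by
      simpa using ((((hasDerivAt_id t).mul_const (T.eval 0)).const_add
        ((derivative T).eval 0)).ofReal_comp).const_mul (-(2 / (Real.pi : ℂ)))
    have hlocal : (fun s ↦ lineTransform (-(1 / 2)) s T - lineTransform (1 / 2) s T) =ᶠ[𝓝 t]
        fun s ↦ -(2 / (Real.pi : ℂ)) * ((derivative T).eval 0 + s * T.eval 0 : ℝ) := by
      filter_upwards [Iio_mem_nhds ht] with s hs using ih hs
    rw [hX, hleft.unique (hright.congr_of_eventuallyEq hlocal), derivative_mul]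
    simp

end LineTransform

section ShiftedTransform

variable (t : ℝ) (S : ℝ[X]) (k : ℕ)

/-- The integral along `re z = k - 1 / 2` of `S z * exp (t * z)`, up to the periodic weight. -/
noncomputable def shiftedTransform : ℂ :=
  Real.exp (t * k) * lineTransform (-(1 / 2)) t (taylor (k : ℝ) S)

lemma aeval_taylor (r : ℝ) (S : ℝ[X]) (z : ℂ) : aeval z (taylor r S) = aeval (z + r) S := by
  simp [taylor_apply, aeval_comp]

variable {t} in
lemma shiftedTransform_sub_succ (ht : t < 0) :
    shiftedTransform t S k - shiftedTransform t S (k + 1) = -(2 / Real.pi) *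
      (((derivative S).eval (k : ℝ) + t * S.eval (k : ℝ)) * Real.exp t ^ k : ℝ) := by
  have hsub := lineTransform_sub_lineTransform (taylor (k : ℝ) S) ht
  have hshift : lineTransform (1 / 2) t (taylor (k : ℝ) S) =
      Real.exp t * lineTransform (-(1 / 2)) t (taylor ((k + 1 : ℕ) : ℝ) S) := by
    unfold lineTransform
    rw [← integral_const_mul]
    congr 1 with y
    have hpoint : ((1 / 2 : ℝ) : ℂ) + y * Complex.I + (k : ℝ) =
        (-(1 / 2) : ℝ) + y * Complex.I + ((k + 1 : ℕ) : ℝ) := by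
      push_cast
      ring
    have harg : (t : ℂ) * ((1 / 2 : ℝ) + y * Complex.I) =
        t + t * ((-(1 / 2) : ℝ) + y * Complex.I) := by
      push_cast
      ring
    rw [aeval_taylor, aeval_taylor, hpoint, harg, Complex.exp_add, Complex.ofReal_exp]
    ring
  have hderiv : (derivative (taylor (k : ℝ) S)).eval 0 = (derivative S).eval (k : ℝ) := by
    simp [taylor_apply, derivative_comp]
  have hexp : Real.exp (t * (k + 1 : ℕ)) = Real.exp (t * k) * Real.exp t := by
    rw [← Real.exp_add]
    push_cast
    ring_nf
  rw [hshift, hderiv, taylor_eval, zero_add] at hsub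
  rw [shiftedTransform, shiftedTransform, hexp, ← Real.exp_nat_mul, mul_comm (k : ℝ) t]
  push_cast at hsub ⊢
  linear_combination Complex.exp (t * k) * hsub

lemma norm_shiftedTransform_le :
    ‖shiftedTransform t S k‖ ≤ Real.exp t ^ k *
      ∫ y : ℝ, ‖aeval ((k - 1 / 2 : ℝ) + y * Complex.I) S‖ * Real.exp (-t / 2) *
        lineWeight y := by
  rw [shiftedTransform, lineTransform, norm_mul, Complex.norm_real,
    Real.norm_of_nonneg (Real.exp_pos _).le, ← Real.exp_nat_mul, mul_comm (k : ℝ) t]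
  gcongr
  refine (norm_integral_le_integral_norm _).trans_eq ?_
  congr 1 with y
  have hpoint : ((-(1 / 2) : ℝ) : ℂ) + y * Complex.I + (k : ℝ) =
      (k - 1 / 2 : ℝ) + y * Complex.I := by
    push_cast
    ring
  rw [norm_lineTransform_integrand, aeval_taylor, hpoint]
  ring_nf

variable {t}

lemma tendsto_shiftedTransform (ht : t < 0) :
    Tendsto (shiftedTransform t S) atTop (𝓝 0) := by
  obtain ⟨B, hB, hbound⟩ := exists_norm_aeval_line_le (T := S)
  set n := S.natDegree
  set W := ∫ y : ℝ, (1 + |y|) ^ n * lineWeight y with hW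
  set Q : ℝ[X] := C (B * Real.exp (-t / 2) * W) * (X + 2) ^ n with hQ
  have hexp : |Real.exp t| < 1 := by rwa [abs_of_pos (Real.exp_pos t), Real.exp_lt_one_iff]
  refine squeeze_zero_norm (fun k ↦ ?_) (summable_eval_mul_pow hexp Q).tendsto_atTop_zero
  refine (norm_shiftedTransform_le t S k).trans ?_
  have hQk : Q.eval (k : ℝ) =
      ∫ y : ℝ, B * (k + 2) ^ n * Real.exp (-t / 2) * ((1 + |y|) ^ n * lineWeight y) := by
    rw [integral_const_mul, ← hW, hQ]
    simp only [eval_mul, eval_C, eval_pow, eval_add, eval_X, eval_ofNat]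
    ring
  rw [mul_comm, hQk]
  refine mul_le_mul_of_nonneg_right ?_ (by positivity)
  refine integral_mono_of_nonneg (ae_of_all _ fun y ↦ ?_)
    ((integrable_one_add_abs_pow_mul_lineWeight n).const_mul _) (ae_of_all _ fun y ↦ ?_)
  · have := lineWeight_pos y
    positivity
  · have hw := lineWeight_pos y
    have hk : 1 + |(k - 1 / 2 : ℝ)| ≤ k + 2 := by
      have := abs_sub (k : ℝ) (1 / 2)
      norm_num at this
      linarith
    calc ‖aeval ((k - 1 / 2 : ℝ) + y * Complex.I) S‖ * Real.exp (-t / 2) * lineWeight y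
        ≤ B * (k + 2) ^ n * (1 + |y|) ^ n * Real.exp (-t / 2) * lineWeight y := by
          gcongr
          refine (hbound _ _).trans ?_
          gcongr
      _ = _ := by ring

end ShiftedTransform

section ContourBound

variable {x : ℝ} {S : ℝ[X]} {m : ℕ}

lemma hasSum_jetSum (hx : |x| < 1) (β : ℝ) (S : ℝ[X]) : HasSum
    (fun v : ℕ ↦ ((derivative S).eval (v : ℝ) + β * S.eval (v : ℝ)) * x ^ v) (jetSum x β S) := by
  have h := (summable_eval_mul_pow hx (derivative S)).hasSum.add
    ((summable_eval_mul_pow hx S).hasSum.mul_left β)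
  exact h.congr_fun fun v ↦ by ring

lemma jetSum_log_eq_shiftedTransform (hx0 : 0 < x) (hx1 : x < 1)
    (hzero : ∀ k < m, S.eval (k : ℝ) = 0)
    (hzero' : ∀ k < m, (derivative S).eval (k : ℝ) = 0) :
    (jetSum x (Real.log x) S : ℂ) = -(Real.pi / 2) * shiftedTransform (Real.log x) S m := by
  set t := Real.log x
  have htneg : t < 0 := Real.log_neg hx0 hx1
  have hpi : (Real.pi : ℂ) ≠ 0 := by exact_mod_cast Real.pi_ne_zero
  set term : ℕ → ℝ := fun v ↦ ((derivative S).eval (v : ℝ) + t * S.eval (v : ℝ)) * x ^ v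
  have hterm (k : ℕ) : (term k : ℂ) =
      -(Real.pi / 2) * (shiftedTransform t S k - shiftedTransform t S (k + 1)) := by
    rw [shiftedTransform_sub_succ S k htneg, Real.exp_log hx0]
    field_simp
    rfl
  have hpartial (M : ℕ) : ((∑ k ∈ Finset.range (M + m), term k : ℝ) : ℂ) =
      -(Real.pi / 2) * (shiftedTransform t S m - shiftedTransform t S (M + m)) := by
    have hhead : ∑ k ∈ Finset.range m, term k = 0 := Finset.sum_eq_zero fun k hk ↦ by
      simp [term, hzero k (Finset.mem_range.mp hk), hzero' k (Finset.mem_range.mp hk)]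
    rw [add_comm M m, Finset.sum_range_add, hhead, zero_add]
    push_cast
    simp only [hterm, ← Finset.mul_sum]
    congr 1
    exact Finset.sum_range_sub' (fun k ↦ shiftedTransform t S (m + k)) M
  have hsum : Tendsto (fun M ↦ ((∑ k ∈ Finset.range (M + m), term k : ℝ) : ℂ)) atTop
      (𝓝 (jetSum x t S : ℝ)) :=
    (Complex.continuous_ofReal.tendsto _).comp ((hasSum_jetSum
      (abs_lt.mpr ⟨by linarith, hx1⟩) t S).tendsto_sum_nat.comp (tendsto_add_atTop_nat m))
  simp only [hpartial] at hsum
  have hlim := (((tendsto_shiftedTransform S htneg).comp (tendsto_add_atTop_nat m)).const_sub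
    (shiftedTransform t S m)).const_mul (-(Real.pi / 2 : ℂ))
  rw [sub_zero] at hlim
  exact tendsto_nhds_unique hsum hlim

theorem abs_jetSum_log_le (hx0 : 0 < x) (hx1 : x < 1)
    (hzero : ∀ k < m, S.eval (k : ℝ) = 0)
    (hzero' : ∀ k < m, (derivative S).eval (k : ℝ) = 0) :
    |jetSum x (Real.log x) S| ≤ Real.pi / 2 * x ^ m *
      ∫ y : ℝ, ‖aeval ((m - 1 / 2 : ℝ) + y * Complex.I) S‖ * Real.exp (-Real.log x / 2) *
        lineWeight y := by
  rw [← Real.norm_eq_abs, ← Complex.norm_real,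
    jetSum_log_eq_shiftedTransform hx0 hx1 hzero hzero', norm_mul, norm_neg, norm_div,
    Complex.norm_real, Complex.norm_two, Real.norm_of_nonneg Real.pi_pos.le, mul_assoc]
  gcongr
  simpa only [Real.exp_log hx0] using norm_shiftedTransform_le (Real.log x) S m

end ContourBound

/-! ### Size of the kernel on a vertical line -/

section LogNormPrimitive

/-- The primitive in `b` of `log √(b ^ 2 + Y ^ 2)` that vanishes at `b = 0`. -/
noncomputable def logNormPrimitive (b Y : ℝ) : ℝ :=
  1 / 2 * b * Real.log (b ^ 2 + Y ^ 2) - b + Y * Real.arctan (b / Y)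

variable {b Y : ℝ}

lemma hasDerivAt_logNormPrimitive_left (b : ℝ) (hY : 0 < Y) :
    HasDerivAt (logNormPrimitive · Y) (1 / 2 * Real.log (b ^ 2 + Y ^ 2)) b := by
  have hlog := ((hasDerivAt_pow 2 b).add_const (Y ^ 2)).log (by positivity)
  have harctan := ((hasDerivAt_id b).div_const Y).arctan
  refine (((((hasDerivAt_id b).const_mul (1 / 2)).mul hlog).sub (hasDerivAt_id b)).add
    (harctan.const_mul Y)).congr_deriv ?_
  simp only [id]
  field_simp
  ring

lemma hasDerivAt_logNormPrimitive_right (b : ℝ) (hY : 0 < Y) :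
    HasDerivAt (logNormPrimitive b) (Real.arctan (b / Y)) Y := by
  have hlog := ((hasDerivAt_pow 2 Y).const_add (b ^ 2)).log (by positivity)
  have harctan := ((hasDerivAt_inv hY.ne').const_mul b).arctan
  refine (((hlog.const_mul (1 / 2 * b)).sub_const b).add
    ((hasDerivAt_id Y).mul harctan)).congr_deriv ?_
  simp only [id, ← div_eq_mul_inv]
  field_simp
  ring

lemma sqrt_le_exp_logNormPrimitive_sub (hb : 0 ≤ b) (hY : 0 < Y) :
    √(b ^ 2 + Y ^ 2) ≤ Real.exp (logNormPrimitive (b + 1) Y - logNormPrimitive b Y) := by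
  obtain ⟨c, ⟨hbc, -⟩, hc⟩ := exists_hasDerivAt_eq_slope (logNormPrimitive · Y) _
    (lt_add_one b) (HasDerivAt.continuousOn fun t _ ↦ hasDerivAt_logNormPrimitive_left t hY)
    fun t _ ↦ hasDerivAt_logNormPrimitive_left t hY
  rw [add_sub_cancel_left, div_one] at hc
  rw [← hc, ← Real.log_le_iff_le_exp (by positivity), Real.log_sqrt (by positivity),
    one_div_mul_eq_div]
  gcongr

-- `logNormPrimitive b` is concave, since its derivative `arctan (b / Y)` decreases in `Y`.
lemma logNormPrimitive_le_tangent {w : ℝ} (hb : 0 ≤ b) (hY : 0 < Y) (hw : 0 < w) :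
    logNormPrimitive b Y ≤
      1 / 2 * b * Real.log (b ^ 2 + w ^ 2) - b + Y * Real.arctan (b / w) := by
  have hconcave : ConcaveOn ℝ (Ioi 0) (logNormPrimitive b) := by
    refine AntitoneOn.concaveOn_of_deriv (convex_Ioi 0)
      (HasDerivAt.continuousOn fun t ht ↦ hasDerivAt_logNormPrimitive_right b ht) ?_ ?_ <;>
      rw [interior_Ioi]
    · exact fun t ht ↦
        (hasDerivAt_logNormPrimitive_right b ht).differentiableAt.differentiableWithinAt
    · intro s (hs : 0 < s) t (ht : 0 < t) hst
      rw [(hasDerivAt_logNormPrimitive_right b hs).deriv,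
        (hasDerivAt_logNormPrimitive_right b ht).deriv]
      gcongr
  have htangent : logNormPrimitive b Y ≤
      logNormPrimitive b w + Real.arctan (b / w) * (Y - w) := by
    have hderiv := hasDerivAt_logNormPrimitive_right b hw
    rcases lt_trichotomy w Y with h | rfl | h
    · have := hconcave.slope_le_of_hasDerivAt hw hY h hderiv
      rw [slope_def_field, div_le_iff₀ (sub_pos.2 h)] at this
      linarith
    · simp
    · have := hconcave.le_slope_of_hasDerivAt hY hw h hderiv
      rw [slope_def_field, le_div_iff₀ (sub_pos.2 h)] at this
      linarith
  refine htangent.trans_eq ?_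
  rw [logNormPrimitive]
  ring

lemma prod_norm_half_add_le (n : ℕ) (y : ℝ) {w : ℝ} (hw : 0 < w) :
    ∏ j ∈ Finset.range n, ‖((j + 1 / 2 : ℝ) : ℂ) + y * Complex.I‖ ≤
      Real.exp (1 / 2 * n * Real.log (n ^ 2 + w ^ 2) - n + (|y| + 1) * Real.arctan (n / w)) *
        (n + (|y| + 1)) := by
  have hprod : ∏ j ∈ Finset.range n, ‖((j + 1 / 2 : ℝ) : ℂ) + y * Complex.I‖ ≤
      Real.exp (logNormPrimitive n (|y| + 1)) * √(n ^ 2 + (|y| + 1) ^ 2) := by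
    induction n with
    | zero => simp [logNormPrimitive, Real.sqrt_sq (by positivity : 0 ≤ |y| + 1)]
    | succ n ih =>
      have hstep := sqrt_le_exp_logNormPrimitive_sub n.cast_nonneg
        (by positivity : 0 < |y| + 1)
      have hnorm : ‖((n + 1 / 2 : ℝ) : ℂ) + y * Complex.I‖ ≤
          √((n + 1 : ℕ) ^ 2 + (|y| + 1) ^ 2) := by
        rw [Complex.norm_add_mul_I, ← sq_abs y]
        push_cast
        gcongr <;> linarith
      rw [Finset.prod_range_succ]
      calc _ ≤ Real.exp (logNormPrimitive n (|y| + 1)) *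
              Real.exp (logNormPrimitive (n + 1) (|y| + 1) - logNormPrimitive n (|y| + 1)) *
              √((n + 1 : ℕ) ^ 2 + (|y| + 1) ^ 2) := by
            gcongr
            exact ih.trans (by gcongr)
        _ = _ := by
            rw [← Real.exp_add, add_sub_cancel, Nat.cast_succ]
  refine hprod.trans ?_
  gcongr
  · exact logNormPrimitive_le_tangent n.cast_nonneg (by positivity) hw
  · have hcross : 0 ≤ (n : ℝ) * (|y| + 1) := by positivity
    exact (Real.sqrt_le_left (by positivity)).2 (by linarith)

end LogNormPrimitive

section LineBound

variable {a b c m : ℕ} {w : ℝ}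

lemma norm_aeval_centeredChoose_line (hm : m ≤ a) (y : ℝ) :
    ‖aeval ((m - 1 / 2 : ℝ) + y * Complex.I) (centeredChoose a)‖ =
      ((2 * a).factorial : ℝ)⁻¹ *
        ((∏ j ∈ Finset.range (a + m), ‖((j + 1 / 2 : ℝ) : ℂ) + y * Complex.I‖) *
          ∏ j ∈ Finset.range (a - m), ‖((j + 1 / 2 : ℝ) : ℂ) + y * Complex.I‖) := by
  have hprod : ∏ j ∈ Finset.range (2 * a),
      ‖(((m - 1 / 2 : ℝ) : ℂ) + y * Complex.I) + algebraMap ℝ ℂ (a - j)‖ =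
      (∏ j ∈ Finset.range (a + m), ‖((j + 1 / 2 : ℝ) : ℂ) + y * Complex.I‖) *
        ∏ j ∈ Finset.range (a - m), ‖((j + 1 / 2 : ℝ) : ℂ) + y * Complex.I‖ := by
    rw [show 2 * a = a + m + (a - m) by lia, Finset.prod_range_add, ← Finset.prod_range_reflect]
    congr 1 <;> refine Finset.prod_congr rfl fun j hj ↦ ?_
    · have hcast : ((a + m - 1 - j : ℕ) : ℝ) = a + m - 1 - j := by
        rw [Nat.sub_sub, Nat.cast_sub (by have := Finset.mem_range.1 hj; lia)]
        push_cast
        ring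
      congr 1
      simp only [hcast, Complex.coe_algebraMap]
      push_cast
      ring
    · rw [← norm_neg, ← Complex.norm_conj]
      congr 1
      simp only [Complex.coe_algebraMap, map_neg, map_add, map_mul, Complex.conj_ofReal,
        Complex.conj_I]
      push_cast
      ring
  simp only [centeredChoose, map_mul, map_prod, map_add, aeval_C, aeval_X, norm_mul, norm_prod,
    hprod, norm_algebraMap', norm_inv, Real.norm_natCast]

lemma exp_mul_log_sub_le_factorial (n : ℕ) :
    Real.exp (n * Real.log n - n) ≤ (n.factorial : ℝ) := by
  rcases n.eq_zero_or_pos with rfl | hn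
  · simp
  · have hpow := Real.pow_div_factorial_le_exp (n : ℝ) n.cast_nonneg n
    rw [div_le_iff₀' (by positivity)] at hpow
    rwa [Real.exp_sub, div_le_iff₀ (Real.exp_pos _), Real.exp_nat_mul,
      Real.exp_log (by positivity)]

/-- The logarithm, up to lower order terms, of the bound for `centeredChoose a` at
`m - 1 / 2 + y * I` obtained from the tangent at height `w`, for bounded `y`. -/
noncomputable def lineExponent (w a m : ℝ) : ℝ :=
  1 / 2 * (a + m) * Real.log ((a + m) ^ 2 + w ^ 2) +
    1 / 2 * (a - m) * Real.log ((a - m) ^ 2 + w ^ 2) - 2 * a * Real.log (2 * a)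

/-- The exponential rate in `|y|` of the same bound. -/
noncomputable def lineAngle (w a m : ℝ) : ℝ :=
  Real.arctan ((a + m) / w) + Real.arctan ((a - m) / w)

lemma lineExponent_mul {N : ℝ} (hN : N ≠ 0) (hw : w ≠ 0) (a m : ℝ) :
    lineExponent (w * N) (a * N) (m * N) = N * lineExponent w a m := by
  have hlog (s : ℝ) : Real.log ((s * N) ^ 2 + (w * N) ^ 2) =
      Real.log (s ^ 2 + w ^ 2) + 2 * Real.log N := by
    rw [show (s * N) ^ 2 + (w * N) ^ 2 = (s ^ 2 + w ^ 2) * N ^ 2 by ring,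
      Real.log_mul (by positivity) (by positivity), Real.log_pow]
    norm_cast
  have hlog' : 2 * a * Real.log (2 * (a * N)) = 2 * a * (Real.log (2 * a) + Real.log N) := by
    rcases eq_or_ne a 0 with rfl | ha
    · simp
    · rw [← mul_assoc, Real.log_mul (by positivity) hN]
  rw [lineExponent, lineExponent, ← add_mul, ← sub_mul, hlog, hlog]
  linear_combination -N * hlog'

lemma lineAngle_mul {N : ℝ} (hN : N ≠ 0) (w a m : ℝ) :
    lineAngle (w * N) (a * N) (m * N) = lineAngle w a m := by
  rw [lineAngle, lineAngle, ← add_mul, ← sub_mul, mul_div_mul_right _ _ hN,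
    mul_div_mul_right _ _ hN]

lemma norm_aeval_centeredChoose_line_le (hm : m ≤ a) (hw : 0 < w) (y : ℝ) :
    ‖aeval ((m - 1 / 2 : ℝ) + y * Complex.I) (centeredChoose a)‖ ≤
      Real.exp (lineExponent w a m + (1 + |y|) * lineAngle w a m) *
        ((2 * a + 1) * (1 + |y|)) ^ 2 := by
  have hfactor {n : ℕ} (hn : n ≤ 2 * a) : n + (|y| + 1) ≤ (2 * a + 1) * (1 + |y|) := by
    have hn' : (n : ℝ) ≤ 2 * a := by exact_mod_cast hn
    nlinarith [mul_nonneg (a.cast_nonneg (α := ℝ)) (abs_nonneg y)]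
  have hfactorial : ((2 * a).factorial : ℝ)⁻¹ ≤
      Real.exp (-((2 * a) * Real.log (2 * a) - 2 * a)) := by
    rw [Real.exp_neg]
    exact inv_anti₀ (Real.exp_pos _) (mod_cast exp_mul_log_sub_le_factorial (2 * a))
  rw [norm_aeval_centeredChoose_line hm]
  calc _ ≤ Real.exp (-((2 * a) * Real.log (2 * a) - 2 * a)) *
        ((Real.exp (1 / 2 * (a + m : ℕ) * Real.log ((a + m : ℕ) ^ 2 + w ^ 2) - (a + m : ℕ) +
            (|y| + 1) * Real.arctan ((a + m : ℕ) / w)) * ((2 * a + 1) * (1 + |y|))) *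
          (Real.exp (1 / 2 * (a - m : ℕ) * Real.log ((a - m : ℕ) ^ 2 + w ^ 2) - (a - m : ℕ) +
            (|y| + 1) * Real.arctan ((a - m : ℕ) / w)) * ((2 * a + 1) * (1 + |y|)))) := by
        gcongr
        · exact (prod_norm_half_add_le _ y hw).trans (by gcongr; exact hfactor (by lia))
        · exact (prod_norm_half_add_le _ y hw).trans (by gcongr; exact hfactor (by lia))
    _ = _ := by
        rw [mul_mul_mul_comm, ← Real.exp_add, ← mul_assoc, ← Real.exp_add, ← sq, lineExponent,
          lineAngle, Nat.cast_sub hm, Nat.cast_add]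
        ring_nf

lemma norm_aeval_chooseKernel_line_le (ha : m ≤ a) (hb : m ≤ b) (hc : m ≤ c) (hw : 0 < w)
    (y : ℝ) : ‖aeval ((m - 1 / 2 : ℝ) + y * Complex.I) (chooseKernel a b c)‖ ≤
      Real.exp (lineExponent w a m + lineExponent w b m + lineExponent w c m) *
        Real.exp ((1 + |y|) * (lineAngle w a m + lineAngle w b m + lineAngle w c m)) *
        ((2 * a + 1) * (2 * b + 1) * (2 * c + 1)) ^ 2 * (1 + |y|) ^ 6 := by
  rw [chooseKernel, map_mul, map_mul, norm_mul, norm_mul]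
  calc _ ≤ Real.exp (lineExponent w a m + (1 + |y|) * lineAngle w a m) *
          ((2 * a + 1) * (1 + |y|)) ^ 2 *
        (Real.exp (lineExponent w b m + (1 + |y|) * lineAngle w b m) *
          ((2 * b + 1) * (1 + |y|)) ^ 2) *
        (Real.exp (lineExponent w c m + (1 + |y|) * lineAngle w c m) *
          ((2 * c + 1) * (1 + |y|)) ^ 2) := by
        gcongr
        · exact norm_aeval_centeredChoose_line_le ha hw y
        · exact norm_aeval_centeredChoose_line_le hb hw y
        · exact norm_aeval_centeredChoose_line_le hc hw y
    _ = _ := by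
        rw [mul_add (1 + |y|), mul_add (1 + |y|)]
        simp only [Real.exp_add]
        ring

end LineBound

section JetSumBound

variable {a b c m : ℕ} {x : ℝ}

lemma chooseKernel_mul_eval_natCast_eq_zero (ha : m ≤ a) (P : ℝ[X]) {k : ℕ} (hk : k < m) :
    (chooseKernel a b c * P).eval (k : ℝ) = 0 := by
  simp [chooseKernel, centeredChoose_eval_natCast_of_lt (hk.trans_le ha)]

-- Two of the three binomial factors vanish at `k`.
lemma derivative_chooseKernel_mul_eval_natCast_eq_zero (ha : m ≤ a) (hb : m ≤ b) (P : ℝ[X])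
    {k : ℕ} (hk : k < m) : (derivative (chooseKernel a b c * P)).eval (k : ℝ) = 0 := by
  simp [chooseKernel, derivative_mul, centeredChoose_eval_natCast_of_lt (hk.trans_le ha),
    centeredChoose_eval_natCast_of_lt (hk.trans_le hb)]

lemma exists_norm_aeval_chooseKernel_mul_line_mul_lineWeight_le (P : ℝ[X]) (θ : ℝ) :
    ∃ C : ℝ, 0 ≤ C ∧ ∀ (a b c m : ℕ) (w : ℝ), m ≤ a → m ≤ b →
      m ≤ c → 0 < w → lineAngle w a m + lineAngle w b m + lineAngle w c m ≤ θ → ∀ y : ℝ,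
      ‖aeval ((m - 1 / 2 : ℝ) + y * Complex.I) (chooseKernel a b c * P)‖ * lineWeight y ≤
        C * (((2 * a + 1) * (2 * b + 1) * (2 * c + 1)) ^ 2 * (m + 2) ^ P.natDegree *
          Real.exp (lineExponent w a m + lineExponent w b m + lineExponent w c m)) *
        ((1 + |y|) ^ (6 + P.natDegree) * Real.exp (-((2 * Real.pi - θ) * |y|))) := by
  obtain ⟨B, hB, hP⟩ := exists_norm_aeval_line_le (T := P)
  set d := P.natDegree
  refine ⟨B * Real.exp θ * 4, by positivity, fun a b c m w ha hb hc hw hangle y ↦ ?_⟩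
  set E := lineExponent w a m + lineExponent w b m + lineExponent w c m
  set L : ℝ := ((2 * a + 1) * (2 * b + 1) * (2 * c + 1)) ^ 2
  have hmid : 1 + |(m - 1 / 2 : ℝ)| ≤ m + 2 := by
    have := (abs_sub (m : ℝ) (1 / 2)).trans_eq (by rw [Nat.abs_cast])
    norm_num at this
    linarith
  have hweight := lineWeight_pos y
  rw [map_mul, norm_mul]
  calc _ ≤ (Real.exp E * Real.exp ((1 + |y|) * θ) * L * (1 + |y|) ^ 6) *
        (B * (m + 2) ^ d * (1 + |y|) ^ d) * (4 * Real.exp (-(2 * Real.pi * |y|))) := by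
        gcongr
        · exact (norm_aeval_chooseKernel_line_le ha hb hc hw y).trans (by gcongr)
        · exact (hP _ y).trans (by gcongr)
        · exact lineWeight_le y
    _ = B * 4 * (L * (m + 2) ^ d * Real.exp E) * (1 + |y|) ^ (6 + d) *
        (Real.exp ((1 + |y|) * θ) * Real.exp (-(2 * Real.pi * |y|))) := by ring
    _ = B * 4 * (L * (m + 2) ^ d * Real.exp E) * (1 + |y|) ^ (6 + d) *
        (Real.exp θ * Real.exp (-((2 * Real.pi - θ) * |y|))) := by
        rw [← Real.exp_add, ← Real.exp_add]
        ring_nf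
    _ = _ := by ring

lemma exists_abs_jetSum_chooseKernel_mul_le (hx0 : 0 < x) (hx1 : x < 1) {θ : ℝ}
    (hθ : θ < 2 * Real.pi) (P : ℝ[X]) :
    ∃ C : ℝ, 0 ≤ C ∧ ∀ (a b c m : ℕ) (w : ℝ), m ≤ a → m ≤ b →
      m ≤ c → 0 < w → lineAngle w a m + lineAngle w b m + lineAngle w c m ≤ θ →
      |jetSum x (Real.log x) (chooseKernel a b c * P)| ≤
        C * (((2 * a + 1) * (2 * b + 1) * (2 * c + 1)) ^ 2 * (m + 2) ^ P.natDegree) * (x ^ m *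
          Real.exp (lineExponent w a m + lineExponent w b m + lineExponent w c m)) := by
  obtain ⟨C, hC, hpoint⟩ := exists_norm_aeval_chooseKernel_mul_line_mul_lineWeight_le P θ
  set d := P.natDegree
  set I := ∫ y : ℝ, (1 + |y|) ^ (6 + d) * Real.exp (-((2 * Real.pi - θ) * |y|))
  refine ⟨Real.pi / 2 * (Real.exp (-Real.log x / 2) * C * I), by positivity,
    fun a b c m w ha hb hc hw hangle ↦ ?_⟩
  specialize hpoint a b c m w ha hb hc hw hangle
  set E := lineExponent w a m + lineExponent w b m + lineExponent w c m
  set L : ℝ := ((2 * a + 1) * (2 * b + 1) * (2 * c + 1)) ^ 2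
  calc _ ≤ _ := abs_jetSum_log_le hx0 hx1
        (fun k hk ↦ chooseKernel_mul_eval_natCast_eq_zero ha P hk)
        (fun k hk ↦ derivative_chooseKernel_mul_eval_natCast_eq_zero ha hb P hk)
    _ ≤ Real.pi / 2 * x ^ m * ∫ y : ℝ, Real.exp (-Real.log x / 2) *
          (C * (L * (m + 2) ^ d * Real.exp E)) *
          ((1 + |y|) ^ (6 + d) * Real.exp (-((2 * Real.pi - θ) * |y|))) := by
        refine mul_le_mul_of_nonneg_left ?_ (by positivity)
        refine integral_mono_of_nonneg (ae_of_all _ fun y ↦ ?_)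
          ((integrable_one_add_abs_pow_mul_exp_neg (sub_pos.2 hθ) _).const_mul _)
          (ae_of_all _ fun y ↦ ?_)
        · have := lineWeight_pos y
          simp only [Pi.zero_apply]
          positivity
        · have := mul_le_mul_of_nonneg_left (hpoint y) (Real.exp_nonneg (-Real.log x / 2))
          linarith only [this]
    _ = _ := by
        rw [integral_const_mul]
        ring

end JetSumBound

section JetSumRate

lemma eventually_mul_pow_le_exp {ε K : ℝ} (hε : 0 < ε) (hK : 0 ≤ K) (k : ℕ) :
    ∀ᶠ N : ℕ in atTop, K * (N : ℝ) ^ k ≤ Real.exp (ε * N) := by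
  have hlittle := ((isLittleO_pow_exp_pos_mul_atTop (k := k) hε).const_mul_left
    K).comp_tendsto tendsto_natCast_atTop_atTop
  filter_upwards [hlittle.bound one_pos] with N hN
  simpa [abs_of_nonneg hK] using hN

-- The exponents are homogeneous, so scaling every parameter by `N` scales the exponent by `N`.
theorem eventually_abs_jetSum_chooseKernel_mul_le {x : ℝ} (hx0 : 0 < x) (hx1 : x < 1)
    {a b c m : ℕ} (ha : m ≤ a) (hb : m ≤ b) (hc : m ≤ c) {w : ℝ} (hw : 0 < w)
    (hangle : lineAngle w a m + lineAngle w b m + lineAngle w c m < 2 * Real.pi) {r : ℝ}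
    (hr : lineExponent w a m + lineExponent w b m + lineExponent w c m + m * Real.log x < r)
    (P : ℝ[X]) : ∀ᶠ N : ℕ in atTop,
      |jetSum x (Real.log x) (chooseKernel (a * N) (b * N) (c * N) * P)| ≤ Real.exp (r * N) := by
  obtain ⟨C, hC, hbound⟩ := exists_abs_jetSum_chooseKernel_mul_le hx0 hx1 hangle P
  set d := P.natDegree
  set E := lineExponent w a m + lineExponent w b m + lineExponent w c m
  set K : ℝ := C * (((2 * a + 1) * (2 * b + 1) * (2 * c + 1)) ^ 2 * (m + 2) ^ d)
  have hK : 0 ≤ K := by positivity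
  have hpoly := eventually_mul_pow_le_exp (sub_pos.2 hr) hK (6 + d)
  filter_upwards [hpoly, eventually_ge_atTop 1] with N hpolyN hN
  have hN1 : (1 : ℝ) ≤ N := by exact_mod_cast hN
  have hN0 : (N : ℝ) ≠ 0 := by positivity
  have hscaled := hbound (a * N) (b * N) (c * N) (m * N) (w * N) (by gcongr) (by gcongr)
    (by gcongr) (by positivity)
  simp only [Nat.cast_mul, lineAngle_mul hN0, lineExponent_mul hN0 hw.ne', ← mul_add] at hscaled
  have hlin (s : ℕ) : 2 * (s * N : ℝ) + 1 ≤ (2 * s + 1) * N := by linarith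
  have hpow : x ^ (m * N) = Real.exp (m * Real.log x * N) := by
    rw [mul_right_comm, ← Nat.cast_mul, Real.exp_nat_mul, Real.exp_log hx0]
  calc _ ≤ C * (((2 * (a * N) + 1) * (2 * (b * N) + 1) * (2 * (c * N) + 1)) ^ 2 *
          (m * N + 2) ^ d) * (x ^ (m * N) * Real.exp (N * E)) := hscaled le_rfl
    _ ≤ C * ((((2 * a + 1) * N) * ((2 * b + 1) * N) * ((2 * c + 1) * N)) ^ 2 *
          ((m + 2) * N) ^ d) * (x ^ (m * N) * Real.exp (N * E)) := by
        gcongr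
        · exact hlin a
        · exact hlin b
        · exact hlin c
        · linarith
    _ = K * N ^ (6 + d) * Real.exp ((E + m * Real.log x) * N) := by
        rw [hpow, ← Real.exp_add, mul_pow _ (N : ℝ) d, mul_comm (N : ℝ) E, ← add_mul,
          add_comm (m * Real.log x)]
        ring
    _ ≤ Real.exp ((r - (E + m * Real.log x)) * N) * Real.exp ((E + m * Real.log x) * N) := by
        gcongr
    _ = Real.exp (r * N) := by
        rw [← Real.exp_add]
        ring_nf

end JetSumRate

section PolySeriesBound

variable {x y : ℝ}

lemma centeredChoose_eval_natCast_le (hy0 : 0 < y) (hy1 : y < 1) (a v : ℕ) :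
    (centeredChoose a).eval (v : ℝ) ≤ y ^ a / (1 - y) ^ (2 * a + 1) * y⁻¹ ^ v := by
  have hy : 0 < 1 - y := sub_pos.2 hy1
  rcases lt_or_ge v a with hv | hv
  · rw [centeredChoose_eval_natCast_of_lt hv]
    positivity
  · obtain ⟨u, rfl⟩ := Nat.exists_eq_add_of_le' hv
    have hterm := le_hasSum (hasSum_choose_mul_geometric_of_norm_lt_one (2 * a)
      ((Real.norm_of_nonneg hy0.le).trans_lt hy1)) u fun i _ ↦ by positivity
    rw [← le_div_iff₀ (by positivity)] at hterm
    rw [centeredChoose_eval_natCast, add_assoc, ← two_mul]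
    refine hterm.trans_eq ?_
    rw [inv_pow, pow_add]
    field_simp
    rw [pow_add]

/-- The exponent of the saddle point bound for the power series of `centeredChoose a`, at the
auxiliary point `y`. -/
noncomputable def seriesExponent (a y : ℝ) : ℝ :=
  a * Real.log y - 2 * a * Real.log (1 - y)

lemma seriesExponent_mul (a y N : ℝ) : seriesExponent (a * N) y = seriesExponent a y * N := by
  rw [seriesExponent, seriesExponent]
  ring

lemma norm_eval_centeredChoose_natCast_le (hy0 : 0 < y) (hy1 : y < 1) (a v : ℕ) :
    ‖(centeredChoose a).eval (v : ℝ)‖ ≤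
      Real.exp (seriesExponent a y) / (1 - y) * y⁻¹ ^ v := by
  have hy : 0 < 1 - y := sub_pos.2 hy1
  have hexp : y ^ a / (1 - y) ^ (2 * a + 1) = Real.exp (seriesExponent a y) / (1 - y) := by
    have htwo : (2 * a : ℝ) = (2 * a : ℕ) := by push_cast; rfl
    rw [seriesExponent, Real.exp_sub, htwo, Real.exp_nat_mul, Real.exp_nat_mul,
      Real.exp_log hy0, Real.exp_log hy, pow_succ, div_div]
  rw [← hexp, Real.norm_of_nonneg (by rw [centeredChoose_eval_natCast]; positivity)]
  exact centeredChoose_eval_natCast_le hy0 hy1 a v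

lemma exists_abs_polySeries_chooseKernel_mul_le {y₁ y₂ y₃ : ℝ} (hx : 0 ≤ x) (h₁ : y₁ ∈ Ioo 0 1)
    (h₂ : y₂ ∈ Ioo 0 1) (h₃ : y₃ ∈ Ioo 0 1) (hxy : x < y₁ * y₂ * y₃) (P : ℝ[X]) :
    ∃ C : ℝ, 0 ≤ C ∧ ∀ a b c : ℕ, |polySeries x (chooseKernel a b c * P)| ≤
      C * Real.exp (seriesExponent a y₁ + seriesExponent b y₂ + seriesExponent c y₃) := by
  have hpos₁ := h₁.1
  have hpos₂ := h₂.1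
  have hpos₃ := h₃.1
  set r := x / (y₁ * y₂ * y₃)
  have hr0 : 0 ≤ r := by positivity
  have hr1 : r < 1 := (div_lt_one (by positivity)).2 hxy
  set Y := (1 - y₁) * (1 - y₂) * (1 - y₃)
  have hY : 0 < Y := mul_pos (mul_pos (sub_pos.2 h₁.2) (sub_pos.2 h₂.2)) (sub_pos.2 h₃.2)
  have hsum := (summable_eval_mul_pow (by rwa [abs_of_nonneg hr0]) P).norm
  refine ⟨(∑' v : ℕ, ‖P.eval (v : ℝ) * r ^ v‖) / Y, by positivity, fun a b c ↦ ?_⟩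
  set E := seriesExponent a y₁ + seriesExponent b y₂ + seriesExponent c y₃
  have hterm (v : ℕ) : ‖(chooseKernel a b c * P).eval (v : ℝ) * x ^ v‖ ≤
      Real.exp E / Y * ‖P.eval (v : ℝ) * r ^ v‖ := by
    simp only [chooseKernel, eval_mul, norm_mul, norm_pow, Real.norm_of_nonneg hx,
      Real.norm_of_nonneg hr0]
    calc _ ≤ Real.exp (seriesExponent a y₁) / (1 - y₁) * y₁⁻¹ ^ v *
          (Real.exp (seriesExponent b y₂) / (1 - y₂) * y₂⁻¹ ^ v) *
          (Real.exp (seriesExponent c y₃) / (1 - y₃) * y₃⁻¹ ^ v) * ‖P.eval (v : ℝ)‖ * x ^ v := by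
          have hsub₁ := sub_pos.2 h₁.2
          have hsub₂ := sub_pos.2 h₂.2
          gcongr
          exacts [norm_eval_centeredChoose_natCast_le h₁.1 h₁.2 a v,
            norm_eval_centeredChoose_natCast_le h₂.1 h₂.2 b v,
            norm_eval_centeredChoose_natCast_le h₃.1 h₃.2 c v]
      _ = _ := by
          simp only [E, r, Y, Real.exp_add, div_pow, mul_pow, inv_pow]
          field_simp
  calc _ ≤ ∑' v : ℕ, Real.exp E / Y * ‖P.eval (v : ℝ) * r ^ v‖ :=
        tsum_of_norm_bounded (hsum.mul_left _).hasSum hterm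
    _ = _ := by
        rw [tsum_mul_left]
        ring

theorem eventually_abs_polySeries_chooseKernel_mul_le {y₁ y₂ y₃ : ℝ} (hx : 0 ≤ x)
    (h₁ : y₁ ∈ Ioo 0 1) (h₂ : y₂ ∈ Ioo 0 1) (h₃ : y₃ ∈ Ioo 0 1) (hxy : x < y₁ * y₂ * y₃)
    {a b c : ℕ} {r : ℝ}
    (hr : seriesExponent a y₁ + seriesExponent b y₂ + seriesExponent c y₃ < r) (P : ℝ[X]) :
    ∀ᶠ N : ℕ in atTop,
      |polySeries x (chooseKernel (a * N) (b * N) (c * N) * P)| ≤ Real.exp (r * N) := by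
  obtain ⟨C, hC, hbound⟩ := exists_abs_polySeries_chooseKernel_mul_le hx h₁ h₂ h₃ hxy P
  set E := seriesExponent a y₁ + seriesExponent b y₂ + seriesExponent c y₃
  filter_upwards [eventually_mul_pow_le_exp (sub_pos.2 hr) hC 0] with N hN
  refine (hbound (a * N) (b * N) (c * N)).trans ?_
  simp only [Nat.cast_mul, seriesExponent_mul, ← add_mul]
  calc C * Real.exp (E * N) ≤ Real.exp ((r - E) * N) * Real.exp (E * N) := by
        gcongr
        simpa using hN
    _ = Real.exp (r * N) := by
        rw [← Real.exp_add]
        ring_nf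

end PolySeriesBound

/-! ### Irrationality measures from integer linear forms -/

section IrrationalityMeasure

variable {α : ℝ}

lemma finite_abs_sub_div_lt_one (α : ℝ) {q : ℕ} (hq : 0 < q) :
    {p : ℤ | |α - p / q| < 1}.Finite := by
  refine (finite_Icc ⌊(α - 1) * q⌋ ⌈(α + 1) * q⌉).subset fun p hp ↦ ?_
  have hq0 : (0 : ℝ) < q := mod_cast hq
  obtain ⟨hlow, hupp⟩ := abs_sub_lt_iff.1 (mem_ofPred.1 hp)
  have hp1 : (p : ℝ) ≤ (α + 1) * q := by
    rw [← div_le_iff₀ hq0]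
    linarith
  have hp2 : (α - 1) * q ≤ p := by
    rw [← le_div_iff₀ hq0]
    linarith
  exact ⟨by exact_mod_cast (Int.floor_le _).trans hp2, by exact_mod_cast hp1.trans (Int.le_ceil _)⟩

lemma finite_abs_sub_div_lt_rpow_neg {μ κ c : ℝ} (hc : 0 < c) (hμ : 0 ≤ μ) (hκ : μ < κ)
    (hlow : ∀ (p : ℤ) (q : ℕ), 0 < q → c * (q : ℝ) ^ (-μ) ≤ |α - p / q|) :
    {pq : ℤ × ℕ+ | |α - (pq.1 : ℝ) / ((pq.2 : ℕ) : ℝ)| < ((pq.2 : ℕ) : ℝ) ^ (-κ)}.Finite := by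
  obtain ⟨Q, hQ⟩ := eventually_atTop.1 (((tendsto_rpow_atTop (sub_pos.2 hκ)).comp
    tendsto_natCast_atTop_atTop).eventually_ge_atTop c⁻¹)
  have hden : {q : ℕ+ | (q : ℕ) < Q}.Finite :=
    (finite_Iio Q).preimage PNat.coe_injective.injOn
  refine (hden.biUnion fun q _ ↦ ((finite_abs_sub_div_lt_one α q.pos).prod
    (finite_singleton q))).subset ?_
  rintro ⟨p, q⟩ hpq
  simp only [mem_ofPred_eq] at hpq
  have hq1 : (1 : ℝ) ≤ (q : ℕ) := mod_cast q.pos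
  have hq0 : (0 : ℝ) < (q : ℕ) := one_pos.trans_le hq1
  refine mem_biUnion (x := q) ?_ ⟨?_, rfl⟩
  · by_contra! hlarge
    have hbig : c⁻¹ ≤ ((q : ℕ) : ℝ) ^ (κ - μ) := hQ q (not_lt.1 hlarge)
    refine (hlow p q q.pos).not_gt (hpq.trans_le ?_)
    rw [show -μ = -κ + (κ - μ) by ring, Real.rpow_add hq0, mul_left_comm]
    exact le_mul_of_one_le_right (by positivity) ((inv_le_iff_one_le_mul₀' hc).1 hbig)
  · exact hpq.trans_le (Real.rpow_le_one_of_one_le_of_nonpos hq1 (by linarith))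

lemma one_half_le_mul_abs_sub_div {p A B : ℤ} {q : ℕ} (hq : 0 < q) (hne : p * A + q * B ≠ 0)
    (hsmall : q * |α * A + B| ≤ 1 / 2) : 1 / 2 ≤ q * |(A : ℝ)| * |α - p / q| := by
  have : (0 : ℝ) < q := mod_cast hq
  have hint : (1 : ℝ) ≤ |(p : ℝ) * A + q * B| := mod_cast Int.one_le_abs hne
  have hsplit : (p : ℝ) * A + q * B = q * (α * A + B) - q * A * (α - p / q) := by
    field_simp
    ring
  have htri := abs_sub (q * (α * A + B)) (q * A * (α - p / q))
  rw [← hsplit, abs_mul, abs_mul, abs_mul, Nat.abs_cast] at htri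
  linarith

-- With `N` about `log (2 * q) / v`, the integer `p * A + q * B` is nonzero while the
-- contribution of the small linear form to it is at most `1 / 2`.
lemma exists_mul_rpow_neg_le_abs_sub_div {u v : ℝ} (hu : 0 ≤ u) (hv : 0 < v)
    (hforms : ∀ᶠ N : ℕ in atTop, ∀ (p : ℤ) (q : ℕ), 0 < q → ∃ A B : ℤ,
      |(A : ℝ)| ≤ Real.exp (u * N) ∧ |α * A + B| ≤ Real.exp (-v * N) ∧ p * A + q * B ≠ 0) :
    ∃ c : ℝ, 0 < c ∧ ∀ (p : ℤ) (q : ℕ), 0 < q →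
      c * (q : ℝ) ^ (-(1 + u / v)) ≤ |α - p / q| := by
  obtain ⟨N₀, hN₀⟩ := eventually_atTop.1 hforms
  set K := Real.exp (u * (N₀ + 1)) * 2 ^ (u / v)
  refine ⟨(2 * K)⁻¹, by positivity, fun p q hq ↦ ?_⟩
  have hq1 : (1 : ℝ) ≤ q := mod_cast hq
  set N := N₀ + ⌈Real.log (2 * q) / v⌉₊
  have hlog : 0 ≤ Real.log (2 * q) := Real.log_nonneg (by linarith)
  have hN_ge : Real.log (2 * q) / v ≤ N := by
    push_cast [N]
    exact (Nat.le_ceil _).trans (le_add_of_nonneg_left N₀.cast_nonneg)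
  have hN_le : (N : ℝ) ≤ N₀ + 1 + Real.log (2 * q) / v := by
    have := Nat.ceil_lt_add_one (a := Real.log (2 * q) / v) (by positivity)
    push_cast [N]
    linarith
  obtain ⟨A, B, hA, hB, hne⟩ := hN₀ N (Nat.le_add_right _ _) p q hq
  have hsmall : q * |α * A + B| ≤ 1 / 2 := by
    have hexp : Real.exp (-v * N) ≤ (2 * (q : ℝ))⁻¹ := by
      rw [← Real.exp_log (by positivity : (0 : ℝ) < 2 * q), ← Real.exp_neg, neg_mul]
      gcongr
      rwa [← div_le_iff₀' hv]
    calc q * |α * A + B| ≤ q * (2 * (q : ℝ))⁻¹ := by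
          gcongr
          exact hB.trans hexp
      _ = 1 / 2 := by field_simp
  have hAle : |(A : ℝ)| ≤ K * (q : ℝ) ^ (u / v) := by
    calc |(A : ℝ)| ≤ Real.exp (u * (N₀ + 1 + Real.log (2 * q) / v)) := hA.trans (by gcongr)
      _ = Real.exp (u * (N₀ + 1)) * (2 * q) ^ (u / v) := by
          rw [Real.rpow_def_of_pos (by positivity), ← Real.exp_add]
          ring_nf
      _ = K * (q : ℝ) ^ (u / v) := by
          rw [Real.mul_rpow two_pos.le (by positivity), mul_assoc]
  have hhalf := one_half_le_mul_abs_sub_div hq hne hsmall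
  have hmul : q * |(A : ℝ)| * |α - p / q| ≤ q * (K * (q : ℝ) ^ (u / v)) * |α - p / q| := by
    gcongr
  rw [Real.rpow_neg (by positivity), Real.rpow_add (by positivity), Real.rpow_one, ← mul_inv,
    inv_le_iff_one_le_mul₀ (by positivity)]
  linarith

theorem finite_abs_sub_div_lt_rpow_neg_of_linear_forms {u v κ : ℝ} (hu : 0 ≤ u) (hv : 0 < v)
    (hforms : ∀ᶠ N : ℕ in atTop, ∀ (p : ℤ) (q : ℕ), 0 < q → ∃ A B : ℤ,
      |(A : ℝ)| ≤ Real.exp (u * N) ∧ |α * A + B| ≤ Real.exp (-v * N) ∧ p * A + q * B ≠ 0)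
    (hκ : 1 + u / v < κ) :
    {pq : ℤ × ℕ+ | |α - (pq.1 : ℝ) / ((pq.2 : ℕ) : ℝ)| < ((pq.2 : ℕ) : ℝ) ^ (-κ)}.Finite := by
  obtain ⟨c, hc, hlow⟩ := exists_mul_rpow_neg_le_abs_sub_div hu hv hforms
  exact finite_abs_sub_div_lt_rpow_neg hc (by positivity) hκ hlow

end IrrationalityMeasure

/-! ### The integer linear forms -/

section LinearForms

variable {x : ℝ} {d : ℤ} {n M : ℕ}

lemma eval_natCast_map_mem (T : ℤ[X]) (k : ℕ) :
    (T.map (Int.castRingHom ℝ)).eval (k : ℝ) ∈ integerSubring :=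
  mem_integerSubring.2 ⟨T.eval (k : ℤ), by simp⟩

lemma exists_kernelDenominator_mul_jetSum_eq (hx : |x| < 1) (hxd : x = d * (1 - x) ^ 2)
    (hM : 14 * M ^ 2 ≤ n) {P : ℝ[X]}
    (hP : P ∈ ({1, (2 * X + 1) ^ 2, (2 * X + 1) ^ 4} : Set ℝ[X])) : ∃ A B : ℤ,
      kernelDenominator n M * polySeries x (chooseKernel (3 * n) (5 * n) (7 * n) * P) =
        d ^ (5 * n) / (1 - x) * A ∧
      ∀ β, kernelDenominator n M * jetSum x β (chooseKernel (3 * n) (5 * n) (7 * n) * P) =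
        d ^ (5 * n) / (1 - x) * (β * A + (1 + x) / (1 - x) * B) := by
  obtain ⟨T, rfl, hsymm⟩ : ∃ T : ℤ[X], T.map (Int.castRingHom ℝ) = P ∧
      (T.map (Int.castRingHom ℝ)).comp (-1 - X) = T.map (Int.castRingHom ℝ) := by
    rcases hP with rfl | rfl | rfl
    · exact ⟨1, by simp, by simp⟩
    · exact ⟨(2 * X + 1) ^ 2, by simp, by simp; ring⟩
    · exact ⟨(2 * X + 1) ^ 4, by simp, by simp; ring⟩
  apply exists_mul_jetSum_eq hx hxd
  · simp only [chooseKernel, mul_comp, centeredChoose_comp_reflect, hsymm]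
  · intro k
    rw [eval_mul]
    exact mul_mem (kernelDenominator_mem n M)
      (mul_mem (chooseKernel_eval_mem _ _ _ k) (eval_natCast_map_mem T k))
  · intro k
    rw [derivative_mul, eval_add, eval_mul, eval_mul, mul_add, ← mul_assoc, derivative_map]
    exact add_mem (mul_mem (kernelDenominator_mul_eval_derivative_mem hM k)
      (eval_natCast_map_mem T k)) (mul_mem (kernelDenominator_mem n M)
      (mul_mem (chooseKernel_eval_mem _ _ _ k) (eval_natCast_map_mem _ k)))
  · exact fun k hk ↦ by
      simp [chooseKernel, centeredChoose_eval_natCast_of_lt hk]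
  · exact fun k hk ↦ by
      simp [chooseKernel, derivative_mul, centeredChoose_eval_natCast_of_lt hk,
        centeredChoose_eval_natCast_of_lt (hk.trans_le (by lia : 5 * n ≤ 7 * n))]

lemma intCast_pos_of_eq_mul_one_sub_sq (hx0 : 0 < x) (hxd : x = d * (1 - x) ^ 2) :
    0 < (d : ℝ) :=
  pos_of_mul_pos_left (hxd ▸ hx0) (sq_nonneg _)

-- As `((1 + x) / (1 - x)) ^ 2 = 4 * d + 1`, multiplying by `(1 + x) / (1 - x)` makes the second
-- coefficient an integer.
lemma exists_linearForm_ne_zero (hx0 : 0 < x) (hx1 : x < 1) (hxd : x = d * (1 - x) ^ 2)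
    (hn : 0 < n) (hM : 14 * M ^ 2 ≤ n) (p : ℤ) {q : ℕ} (hq : 0 < q) :
    ∃ P ∈ ({1, (2 * X + 1) ^ 2, (2 * X + 1) ^ 4} : Set ℝ[X]), ∃ A B : ℤ,
      A = (1 - x) * (kernelDenominator n M / d ^ (5 * n)) *
        polySeries x (chooseKernel (3 * n) (5 * n) (7 * n) * P) ∧
      (1 + x) / (1 - x) * Real.log x * A + B = (1 + x) * (kernelDenominator n M / d ^ (5 * n)) *
        jetSum x (Real.log x) (chooseKernel (3 * n) (5 * n) (7 * n) * P) ∧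
      p * A + q * B ≠ 0 := by
  have hsub : 0 < 1 - x := sub_pos.2 hx1
  have hd := intCast_pos_of_eq_mul_one_sub_sq hx0 hxd
  have hq0 : (q : ℝ) ≠ 0 := by positivity
  have hD := kernelDenominator_pos n M
  set s := (1 + x) / (1 - x)
  have hs : s ≠ 0 := by positivity
  have hs2 : s ^ 2 = 4 * d + 1 := by
    simp only [s]
    field_simp
    linear_combination 4 * hxd
  obtain ⟨P, hP, hne⟩ := exists_jetSum_chooseKernel_mul_ne_zero (c := 7 * n)
    (by rwa [abs_of_pos hx0]) hx0.ne' (p / (q * s)) (by lia : 0 < 3 * n) (by lia : 0 < 5 * n)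
  obtain ⟨A, B, hA, hB⟩ := exists_kernelDenominator_mul_jetSum_eq
    (by rwa [abs_of_pos hx0]) hxd hM hP
  refine ⟨P, hP, A, (4 * d + 1) * B, ?_, ?_, fun hzero ↦ ?_⟩
  · rw [mul_assoc, div_mul_eq_mul_div, hA]
    field_simp
  · rw [mul_assoc (1 + x), div_mul_eq_mul_div (kernelDenominator n M), hB]
    push_cast
    rw [← hs2]
    simp only [s]
    field_simp
  · have hzero' : (p : ℝ) * A + q * (s ^ 2 * B) = 0 := by
      rw [hs2]
      exact_mod_cast hzero
    have hform : p / (q * s) * A + s * B = 0 := by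
      field_simp
      linear_combination hzero'
    have := hB (p / (q * s))
    rw [hform, mul_zero] at this
    exact mul_ne_zero hD.ne' hne this

lemma exists_pos_lt_one_add_div_lt {u w κ : ℝ} (hu : 0 < u) (hκ : 1 + w / u < κ) :
    ∃ v, 0 < v ∧ v < u ∧ 1 + w / v < κ := by
  have hcont : Tendsto (fun v ↦ 1 + w / v) (𝓝[<] u) (𝓝 (1 + w / u)) :=
    ((continuousAt_const.div continuousAt_id hu.ne').const_add 1).mono_left nhdsWithin_le_nhds
  obtain ⟨v, hvκ, hv0, hvu⟩ :=
    ((hcont.eventually_lt_const hκ).and (Ioo_mem_nhdsLT hu)).exists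
  exact ⟨v, hv0, hvu, hvκ⟩

theorem finite_abs_sub_div_lt_rpow_neg_of_rates (hx0 : 0 < x) (hx1 : x < 1)
    (hxd : x = d * (1 - x) ^ 2) {δ Q F κ : ℝ}
    (hD : ∀ᶠ N : ℕ in atTop,
      kernelDenominator (5 * N) M / d ^ (25 * N) ≤ Real.exp (δ * N))
    (hQ : ∀ P, ∀ᶠ N : ℕ in atTop,
      |polySeries x (chooseKernel (15 * N) (25 * N) (35 * N) * P)| ≤ Real.exp (Q * N))
    (hF : ∀ P, ∀ᶠ N : ℕ in atTop,
      |jetSum x (Real.log x) (chooseKernel (15 * N) (25 * N) (35 * N) * P)| ≤ Real.exp (F * N))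
    (hδQ : 0 ≤ δ + Q) (hδF : δ + F < 0) (hκ : 1 - (δ + Q) / (δ + F) < κ) :
    {pq : ℤ × ℕ+ | |(1 + x) / (1 - x) * Real.log x - (pq.1 : ℝ) / ((pq.2 : ℕ) : ℝ)| <
      ((pq.2 : ℕ) : ℝ) ^ (-κ)}.Finite := by
  rw [sub_eq_add_neg, ← div_neg] at hκ
  obtain ⟨v, hv0, hv, hvκ⟩ := exists_pos_lt_one_add_div_lt (neg_pos.2 hδF) hκ
  refine finite_abs_sub_div_lt_rpow_neg_of_linear_forms hδQ hv0 ?_ hvκ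
  have hfin : ({1, (2 * X + 1) ^ 2, (2 * X + 1) ^ 4} : Set ℝ[X]).Finite := toFinite _
  filter_upwards [hD, (eventually_all_finite hfin).2 fun P _ ↦ hQ P,
    (eventually_all_finite hfin).2 fun P _ ↦ hF P, eventually_gt_atTop 0,
    eventually_ge_atTop (14 * M ^ 2),
    eventually_mul_pow_le_exp (sub_pos.2 hv) zero_le_two 0] with N hD hQ hF hN hMN htwo p q hq
  obtain ⟨P, hP, A, B, hA, hform, hne⟩ := exists_linearForm_ne_zero hx0 hx1 hxd
    (by lia : 0 < 5 * N) (by lia : 14 * M ^ 2 ≤ 5 * N) p hq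
  rw [show 3 * (5 * N) = 15 * N by ring, show 5 * (5 * N) = 25 * N by ring,
    show 7 * (5 * N) = 35 * N by ring] at hA hform
  have hd := intCast_pos_of_eq_mul_one_sub_sq hx0 hxd
  have hDpos : 0 < kernelDenominator (5 * N) M / d ^ (25 * N) :=
    div_pos (kernelDenominator_pos _ _) (by positivity)
  refine ⟨A, B, ?_, ?_, hne⟩
  · rw [hA, abs_mul, abs_mul, abs_of_pos (sub_pos.2 hx1), abs_of_pos hDpos]
    calc _ ≤ 1 * Real.exp (δ * N) * Real.exp (Q * N) := by
          gcongr
          · linarith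
          · exact hQ P hP
      _ = Real.exp ((δ + Q) * N) := by rw [one_mul, ← Real.exp_add, add_mul]
  · rw [hform, abs_mul, abs_mul, abs_of_pos (by positivity : 0 < 1 + x), abs_of_pos hDpos]
    calc _ ≤ Real.exp ((-(δ + F) - v) * N) * Real.exp (δ * N) * Real.exp (F * N) := by
          gcongr
          · linarith
          · exact hF P hP
      _ = Real.exp (-v * N) := by
          rw [← Real.exp_add, ← Real.exp_add]
          ring_nf

end LinearForms

/-! ### Growth of the common denominator -/

section DenominatorGrowth

/-- The limit of `1 / n` times the logarithm of the product of the primes in the windows shifted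
by `k`. -/
noncomputable def windowDensity (k : ℕ) : ℝ :=
  ∑ w ∈ excessWindows, (168 / (168 * k + w.1) - 168 / (168 * k + w.2) : ℝ)

lemma tendsto_comp_const_mul_natCast_div {f : ℝ → ℝ} {c : ℝ}
    (hf : Tendsto (fun x ↦ f x / x) atTop (𝓝 1)) (hc : 0 < c) :
    Tendsto (fun n : ℕ ↦ f (c * n) / n) atTop (𝓝 c) := by
  have htop : Tendsto (fun n : ℕ ↦ c * (n : ℝ)) atTop atTop :=
    tendsto_natCast_atTop_atTop.const_mul_atTop hc
  have hlim := (hf.comp htop).const_mul c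
  rw [mul_one] at hlim
  refine hlim.congr fun n ↦ ?_
  rw [Function.comp_apply, mul_div_assoc', mul_div_mul_left _ _ hc.ne']

theorem tendsto_log_kernelDenominator_div (M : ℕ) :
    Tendsto (fun n : ℕ ↦ Real.log (kernelDenominator n M) / n) atTop
      (𝓝 (14 - ∑ k ∈ Finset.range M, windowDensity k)) := by
  have htheta {a : ℝ} (ha : 0 < a) :
      Tendsto (fun n : ℕ ↦ Chebyshev.theta (168 * n / a) / n) atTop (𝓝 (168 / a)) := by
    simpa only [div_mul_eq_mul_div] using
      tendsto_comp_const_mul_natCast_div tendsto_theta_div_self (by positivity : 0 < 168 / a)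
  have hpsi : Tendsto (fun n : ℕ ↦ Chebyshev.psi (14 * n : ℕ) / n) atTop (𝓝 14) := by
    simpa only [Nat.cast_mul, Nat.cast_ofNat] using
      tendsto_comp_const_mul_natCast_div tendsto_psi_div_self (by norm_num : (0 : ℝ) < 14)
  have hsum := Finset.sum_product (Finset.range M) excessWindows
    fun i : ℕ × ℕ × ℕ ↦ (168 / (168 * i.1 + i.2.1) - 168 / (168 * i.1 + i.2.2) : ℝ)
  simp only [windowDensity, ← hsum, log_kernelDenominator, sub_div, Finset.sum_div]
  refine hpsi.sub (tendsto_finsetSum _ fun i hi ↦ ?_)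
  have hw := lt_of_mem_excessWindows (Finset.mem_product.1 hi).2
  have : 0 < i.2.1 := by lia
  have : 0 < i.2.2 := by lia
  exact (htheta (by positivity)).sub (htheta (by positivity))

lemma eventually_kernelDenominator_div_pow_le {d δ : ℝ} {M : ℕ} (hd : 0 < d)
    (hδ : 5 * (14 - ∑ k ∈ Finset.range M, windowDensity k) - 25 * Real.log d < δ) :
    ∀ᶠ N : ℕ in atTop, kernelDenominator (5 * N) M / d ^ (25 * N) ≤ Real.exp (δ * N) := by
  have hlim := ((tendsto_log_kernelDenominator_div M).comp
    (tendsto_id.const_mul_atTop' (by norm_num : 0 < 5))).eventually_lt_const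
    (by linarith : _ < (δ + 25 * Real.log d) / 5)
  filter_upwards [hlim, eventually_gt_atTop 0] with N hlog hN
  have : (0 : ℝ) < N := by exact_mod_cast hN
  have hD := kernelDenominator_pos (5 * N) M
  simp only [Function.comp_apply, id_eq, Nat.cast_mul, Nat.cast_ofNat] at hlog
  rw [div_lt_iff₀ (by positivity)] at hlog
  rw [← Real.log_le_iff_le_exp (by positivity), Real.log_div hD.ne' (by positivity), Real.log_pow]
  push_cast
  linarith

lemma mul_one_div_sub_le_div_sub_div {c k a b : ℝ} (hk : 0 ≤ k) (ha : 0 < a) (hab : a ≤ b)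
    (hb : b ≤ c) :
    (b - a) / c * (1 / (k + 1) - 1 / (k + 2)) ≤ c / (c * k + a) - c / (c * k + b) := by
  have hb0 : 0 < b := ha.trans_le hab
  have hc : 0 < c := hb0.trans_le hb
  calc (b - a) / c * (1 / (k + 1) - 1 / (k + 2))
      = c * (b - a) / ((c * k + c) * (c * k + 2 * c)) := by field_simp; ring
    _ ≤ c * (b - a) / ((c * k + a) * (c * k + b)) := by
        have := sub_nonneg.2 hab
        gcongr <;> linarith
    _ = c / (c * k + a) - c / (c * k + b) := by field_simp; ring

lemma mul_one_div_sub_le_windowDensity (k : ℕ) :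
    7 / 12 * (1 / ((k : ℝ) + 1) - 1 / (k + 2)) ≤ windowDensity k := by
  have hlength : ∑ w ∈ excessWindows, ((w.2 : ℝ) - w.1) / 168 = 7 / 12 := by
    norm_num [excessWindows]
  rw [← hlength, Finset.sum_mul]
  refine Finset.sum_le_sum fun w hw ↦ ?_
  have hw := lt_of_mem_excessWindows hw
  exact mul_one_div_sub_le_div_sub_div k.cast_nonneg (by exact_mod_cast (by lia : 0 < w.1))
    (by exact_mod_cast hw.2.1.le) (by exact_mod_cast hw.2.2.le)

lemma sum_windowDensity_add_le (K j : ℕ) :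
    ∑ k ∈ Finset.range K, windowDensity k + 7 / 12 * (1 / ((K : ℝ) + 1) - 1 / (K + j + 1)) ≤
      ∑ k ∈ Finset.range (K + j), windowDensity k := by
  have htelescope := Finset.sum_range_sub' (fun i : ℕ ↦ 1 / ((K : ℝ) + i + 1)) j
  rw [Nat.cast_zero, add_zero] at htelescope
  rw [Finset.sum_range_add, ← htelescope, Finset.mul_sum]
  gcongr with i
  have := mul_one_div_sub_le_windowDensity (K + i)
  push_cast at this ⊢
  rwa [show (K : ℝ) + (i + 1) + 1 = K + i + 2 by ring]

lemma sum_natDiv_le_mul_windowDensity (s k : ℕ) :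
    ((∑ w ∈ excessWindows, s * 168 * (w.2 - w.1) / ((168 * k + w.1) * (168 * k + w.2)) : ℕ) : ℝ) ≤
      s * windowDensity k := by
  rw [Nat.cast_sum, windowDensity, Finset.mul_sum]
  refine Finset.sum_le_sum fun w hw ↦ Nat.cast_div_le.trans_eq ?_
  have hw := lt_of_mem_excessWindows hw
  have : 0 < w.1 := by lia
  have : 0 < w.2 := by lia
  push_cast [Nat.cast_sub hw.2.1.le]
  field_simp
  ring

lemma lt_sum_windowDensity : 9.9902 < ∑ k ∈ Finset.range (10 ^ 6), windowDensity k := by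
  have hnat : 99890378000 ≤ ∑ k ∈ Finset.range 500, ∑ w ∈ excessWindows,
      10 ^ 10 * 168 * (w.2 - w.1) / ((168 * k + w.1) * (168 * k + w.2)) := by
    decide +kernel
  have hhead : (99890378000 : ℝ) ≤ 10 ^ 10 * ∑ k ∈ Finset.range 500, windowDensity k := by
    rw [Finset.mul_sum]
    refine (Nat.cast_le.2 hnat).trans ?_
    rw [Nat.cast_sum]
    gcongr with k
    exact_mod_cast sum_natDiv_le_mul_windowDensity (10 ^ 10) k
  have htail := sum_windowDensity_add_le 500 (10 ^ 6 - 500)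
  norm_num at htail hhead ⊢
  linarith

end DenominatorGrowth

/-! ### Numerical estimates -/

section NumericalEstimates

lemma log_le_of_smooth {x : ℝ} (hx : 0 < x) (a b c : ℤ) :
    Real.log x ≤ a * Real.log 2 + b * Real.log 3 + c * Real.log 5 +
      (x / (2 ^ a * 3 ^ b * 5 ^ c) - 1) := by
  have hlog := Real.log_le_sub_one_of_pos (by positivity : 0 < x / (2 ^ a * 3 ^ b * 5 ^ c))
  rw [Real.log_div hx.ne' (by positivity), Real.log_mul (by positivity) (by positivity),
    Real.log_mul (by positivity) (by positivity), Real.log_zpow, Real.log_zpow,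
    Real.log_zpow] at hlog
  linarith

-- The neighbours `2401 = 7 ^ 4` and `2400 = 2 ^ 5 * 3 * 5 ^ 2` tie `log 7` to smaller primes.
lemma lt_log_seven : 1.94591 < Real.log 7 := by
  have hlog := Real.one_sub_inv_le_log_of_pos (by norm_num : (0 : ℝ) < 7 ^ 4 / (2 ^ 5 * 3 * 5 ^ 2))
  rw [Real.log_div (by norm_num) (by norm_num), Real.log_mul (by norm_num) (by norm_num),
    Real.log_mul (by norm_num) (by norm_num), Real.log_pow, Real.log_pow, Real.log_pow] at hlog
  norm_num at hlog
  linarith [Real.log_two_gt_d9, Real.log_three_gt_d9, Real.log_five_gt_d9]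

lemma log_two_mul_prime_eq :
    Real.log 6 = Real.log 2 + Real.log 3 ∧ Real.log 10 = Real.log 2 + Real.log 5 ∧
      Real.log 14 = Real.log 2 + Real.log 7 := by
  refine ⟨?_, ?_, ?_⟩ <;> rw [← Real.log_mul (by norm_num) (by norm_num)] <;> norm_num

lemma log_ten_mul_prime_eq :
    Real.log 30 = Real.log 2 + Real.log 5 + Real.log 3 ∧
      Real.log 50 = Real.log 2 + Real.log 5 + Real.log 5 ∧
      Real.log 70 = Real.log 2 + Real.log 5 + Real.log 7 := by
  refine ⟨?_, ?_, ?_⟩ <;>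
    rw [← Real.log_mul (by norm_num) (by norm_num), ← Real.log_mul (by norm_num) (by norm_num)] <;>
    norm_num

/-- The radius in the estimate of the factor `centeredChoose (5 * b * N)`. The constant is a
Lagrange multiplier: minimising `∑ seriesExponent aᵢ yᵢ` for a given product of the radii makes
`aᵢ * (1 + yᵢ) / (1 - yᵢ)` independent of `i`. -/
noncomputable def seriesRadius (b : ℝ) : ℝ :=
  (52.87592 - b) / (52.87592 + b)

lemma seriesRadius_mem_Ioo {b : ℝ} (hb : 0 < b) (hb' : b < 52.87592) :
    seriesRadius b ∈ Ioo 0 1 := by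
  refine ⟨div_pos (sub_pos.2 hb') (by positivity), ?_⟩
  rw [seriesRadius, div_lt_one (by positivity)]
  linarith

lemma seriesExponent_seriesRadius (a : ℝ) {b : ℝ} (hb : 0 < b) (hb' : b < 52.87592) :
    seriesExponent a (seriesRadius b) =
      a * (Real.log (52.87592 ^ 2 - b ^ 2) - 2 * Real.log (2 * b)) := by
  have hsub : 0 < 52.87592 - b := sub_pos.2 hb'
  have hadd : 0 < 52.87592 + b := by positivity
  have hone : 1 - seriesRadius b = 2 * b / (52.87592 + b) := by
    rw [seriesRadius]
    field_simp
    ring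
  rw [seriesExponent, hone, seriesRadius, Real.log_div hsub.ne' hadd.ne',
    Real.log_div (by positivity) hadd.ne', sq_sub_sq, mul_comm (52.87592 + b),
    Real.log_mul hsub.ne' hadd.ne']
  ring

lemma sum_seriesExponent_lt :
    seriesExponent 15 (seriesRadius 3) + seriesExponent 25 (seriesRadius 5) +
      seriesExponent 35 (seriesRadius 7) < 240.684431 := by
  rw [seriesExponent_seriesRadius _ (by norm_num) (by norm_num),
    seriesExponent_seriesRadius _ (by norm_num) (by norm_num),
    seriesExponent_seriesRadius _ (by norm_num) (by norm_num)]
  have h₃ := log_le_of_smooth (by norm_num : (0 : ℝ) < 52.87592 ^ 2 - 3 ^ 2) 11 12 (-8)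
  have h₅ := log_le_of_smooth (by norm_num : (0 : ℝ) < 52.87592 ^ 2 - 5 ^ 2) (-21) 19 1
  have h₇ := log_le_of_smooth (by norm_num : (0 : ℝ) < 52.87592 ^ 2 - 7 ^ 2) (-8) 2 7
  obtain ⟨hlog6, hlog10, hlog14⟩ := log_two_mul_prime_eq
  norm_num at h₃ h₅ h₇ hlog6 hlog10 hlog14 ⊢
  linarith [lt_log_seven, Real.log_two_gt_d9, Real.log_two_lt_d9, Real.log_three_gt_d9,
    Real.log_three_lt_d9, Real.log_five_gt_d9, Real.log_five_lt_d9]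

lemma sqrt_thirteen_mem_Ioo : √13 ∈ Ioo 3.605551 3.60555128 := by
  constructor
  · rw [Real.lt_sqrt (by norm_num)]
    norm_num
  · rw [Real.sqrt_lt' (by norm_num)]
    norm_num

lemma lt_mul_seriesRadius :
    (√13 - 1) / (√13 + 1) < seriesRadius 3 * seriesRadius 5 * seriesRadius 7 := by
  have := sqrt_thirteen_mem_Ioo.2
  rw [div_lt_iff₀ (by positivity)]
  norm_num [seriesRadius] at this ⊢
  linarith

lemma log_sqrt_thirteen_sub_one_div_add_one_le :
    Real.log ((√13 - 1) / (√13 + 1)) ≤ Real.log 0.5657416 := by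
  obtain ⟨hlt, hgt⟩ := sqrt_thirteen_mem_Ioo
  norm_num at hlt hgt
  refine Real.log_le_log (div_pos (by linarith) (by linarith)) ?_
  rw [div_le_iff₀ (by linarith)]
  norm_num
  linarith

-- `13.036383` approximates the imaginary part of the saddle points on the line.
lemma sum_lineExponent_lt :
    lineExponent 13.036383 15 3 + lineExponent 13.036383 25 3 + lineExponent 13.036383 35 3 +
      3 * Real.log ((√13 - 1) / (√13 + 1)) < -85.358879 := by
  have h₁₂ := log_le_of_smooth (by norm_num : (0 : ℝ) < (15 - 3) ^ 2 + 13.036383 ^ 2) (-7) (-5) 10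
  have h₁₈ := log_le_of_smooth (by norm_num : (0 : ℝ) < (15 + 3) ^ 2 + 13.036383 ^ 2) 6 (-4) 4
  have h₂₂ := log_le_of_smooth (by norm_num : (0 : ℝ) < (25 - 3) ^ 2 + 13.036383 ^ 2) (-9) (-6) 12
  have h₂₈ := log_le_of_smooth (by norm_num : (0 : ℝ) < (25 + 3) ^ 2 + 13.036383 ^ 2) (-11) 0 9
  have h₃₂ := log_le_of_smooth (by norm_num : (0 : ℝ) < (35 - 3) ^ 2 + 13.036383 ^ 2) 10 6 (-4)
  have h₃₈ := log_le_of_smooth (by norm_num : (0 : ℝ) < (35 + 3) ^ 2 + 13.036383 ^ 2) (-7) 17 (-4)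
  have hx := log_sqrt_thirteen_sub_one_div_add_one_le.trans
    (log_le_of_smooth (by norm_num) (-10) (-3) 6)
  obtain ⟨hlog30, hlog50, hlog70⟩ := log_ten_mul_prime_eq
  simp only [lineExponent]
  norm_num at h₁₂ h₁₈ h₂₂ h₂₈ h₃₂ h₃₈ hx ⊢
  rw [hlog30, hlog50, hlog70]
  linarith [lt_log_seven, Real.log_two_gt_d9, Real.log_two_lt_d9, Real.log_three_gt_d9,
    Real.log_three_lt_d9, Real.log_five_gt_d9, Real.log_five_lt_d9]

lemma lineAngle_eq_pi_sub {w a m : ℝ} (hw : 0 < w) (hadd : 0 < a + m) (hsub : 0 < a - m) :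
    lineAngle w a m = Real.pi - (Real.arctan (w / (a - m)) + Real.arctan (w / (a + m))) := by
  rw [lineAngle, ← inv_div w, ← inv_div w, Real.arctan_inv_of_pos (by positivity),
    Real.arctan_inv_of_pos (by positivity)]
  ring

lemma pi_lt_arctan_add_arctan_add_arctan {r s t : ℝ} (hr : 0 < r) (hrs : 1 < r * s)
    (ht : (r + s) / (r * s - 1) < t) : Real.pi < Real.arctan r + Real.arctan s + Real.arctan t := by
  have hadd := Real.arctan_add_eq_add_pi hrs hr
  have hlt := Real.arctan_strictMono ht
  rw [← neg_sub, div_neg, Real.arctan_neg] at hadd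
  linarith

lemma sum_lineAngle_lt :
    lineAngle 13.036383 15 3 + lineAngle 13.036383 25 3 + lineAngle 13.036383 35 3 <
      2 * Real.pi := by
  rw [lineAngle_eq_pi_sub (by norm_num) (by norm_num) (by norm_num),
    lineAngle_eq_pi_sub (by norm_num) (by norm_num) (by norm_num),
    lineAngle_eq_pi_sub (by norm_num) (by norm_num) (by norm_num),
    Real.arctan_add (by norm_num), Real.arctan_add (by norm_num), Real.arctan_add (by norm_num)]
  have hsum := pi_lt_arctan_add_arctan_add_arctan
    (r := (13.036383 / 12 + 13.036383 / 18) / (1 - 13.036383 / 12 * (13.036383 / 18)))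
    (s := (13.036383 / 22 + 13.036383 / 28) / (1 - 13.036383 / 22 * (13.036383 / 28)))
    (t := (13.036383 / 32 + 13.036383 / 38) / (1 - 13.036383 / 32 * (13.036383 / 38)))
    (by norm_num) (by norm_num) (by norm_num)
  norm_num at hsum ⊢
  linarith

end NumericalEstimates

section MainTheorem

variable {t : ℝ}

lemma sub_one_div_add_one_mem_Ioo (ht : 1 < t) : (t - 1) / (t + 1) ∈ Ioo 0 1 := by
  refine ⟨div_pos (sub_pos.2 ht) (by positivity), ?_⟩
  rw [div_lt_one (by positivity)]
  linarith

lemma one_add_div_one_sub_sub_one_div_add_one (ht : t + 1 ≠ 0) :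
    (1 + (t - 1) / (t + 1)) / (1 - (t - 1) / (t + 1)) = t := by
  rw [one_add_div ht, one_sub_div ht, div_div_div_cancel_right₀ ht]
  ring

lemma sub_one_div_add_one_eq {d : ℝ} (ht : t + 1 ≠ 0) (hd : t ^ 2 = 4 * d + 1) :
    (t - 1) / (t + 1) = d * (1 - (t - 1) / (t + 1)) ^ 2 := by
  field_simp
  linear_combination hd

end MainTheorem

theorem irrationality_measure_alpha_2 :
    ∀ κ : ℝ, κ > 3.51434 →
      {pq : ℤ × ℕ+ |
        |Real.sqrt 13 * Real.log ((Real.sqrt 13 - 1) / (Real.sqrt 13 + 1)) -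
            (pq.1 : ℝ) / ((pq.2 : ℕ) : ℝ)| <
          ((pq.2 : ℕ) : ℝ) ^ (-κ)}.Finite := by
  intro κ hκ
  have ht : 1 < √13 := Real.lt_sqrt_of_sq_lt (by norm_num)
  have ht0 : √13 + 1 ≠ 0 := by positivity
  obtain ⟨hx0, hx1⟩ := sub_one_div_add_one_mem_Ioo ht
  have hxd := sub_one_div_add_one_eq (d := (3 : ℤ)) ht0 (by norm_num)
  have hD : ∀ᶠ N : ℕ in atTop,
      kernelDenominator (5 * N) (10 ^ 6) / (3 : ℤ) ^ (25 * N) ≤ Real.exp (-7.4163 * N) :=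
    eventually_kernelDenominator_div_pow_le (by norm_num) (by
      norm_num
      linarith [lt_sum_windowDensity, Real.log_three_gt_d9])
  have hQ := eventually_abs_polySeries_chooseKernel_mul_le (a := 15) (b := 25) (c := 35) hx0.le
    (seriesRadius_mem_Ioo (by norm_num) (by norm_num))
    (seriesRadius_mem_Ioo (by norm_num) (by norm_num))
    (seriesRadius_mem_Ioo (by norm_num) (by norm_num)) lt_mul_seriesRadius sum_seriesExponent_lt
  have hF := eventually_abs_jetSum_chooseKernel_mul_le hx0 hx1 (a := 15) (b := 25) (c := 35)
    (m := 3) (by norm_num) (by norm_num) (by norm_num) (by norm_num) sum_lineAngle_lt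
    sum_lineExponent_lt
  have hfinite := finite_abs_sub_div_lt_rpow_neg_of_rates hx0 hx1 hxd hD hQ hF (by norm_num)
    (by norm_num) (lt_of_le_of_lt (by norm_num) hκ)
  rwa [one_add_div_one_sub_sub_one_div_add_one ht0] at hfinite
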